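/- arXiv:1007.1771 — 4 statements merged into one kernel-verified Lean document; each statement's English description precedes it below -/
import Mathlib

section
/- In the multi-task model with M ≥ 2, T, n ≥ 1, set λ = (2√2·σ/√(nT))·(1 + A·log M/T)^{1/2} with A > 5/2, assume M(β*) ≤ s and Assumption MC(s,α) with α > 1, and let c = 3/2 + 16/(7(α−1)) and, for 1 ≤ p ≤ ∞, c₁ = (16α/(α−1))^{1/p}·c^{1−1/p} (with x^{1/∞} = 1). Then with probability at least 1 − 2M^{1−2A/5}, every multi-task Group Lasso solution β̂ satisfies, for every 1 ≤ p ≤ ∞: (1/√T)‖β̂ − β*‖_{2,p} ≤ (2√2·c₁·σ·s^{1/p}/√n)·(1 + A·log M/T)^{1/2}. If moreover min_{j∈J(β*)} (1/√T)‖(β*)^j‖ > (4√2·c·σ/√n)·(1 + A·log M/T)^{1/2}, then with the same probability Ĵ = { j : (1/√T)‖β̂^j‖ > (2√2·c·σ/√n)·(1 + A·log M/T)^{1/2} } equals J(β*). -/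
/-!
Write `Δ = b - βstar` for a solution `b`, `J` for the support of `βstar`, and `X_tᵀ X_t` for the
unnormalized Gram matrices, whose diagonal entries equal `n` and whose off-diagonal entries are at
most `n / (14 α s)` in absolute value.

*Probability.* For a fixed group `j`, the correlations `∑ i, X_t i j * W_t i`, `t = 1, …, T`, are
i.i.d. `N(0, n σ²)`. The Chernoff bound for their sum of squares at the parameter `1 / (4 n σ²)`
uses `E exp(Z² / (4 v)) = √2` for `Z ~ N(0, v)` and `√2 ≤ exp (1/2)`; it bounds by `M ^ (-A/2)` the
probability that the group has noise level at least `√(2 n σ² (T + A log M)) = λ n T / 2`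
(`chi_tail`). A union bound over the `M` groups gives the event (`exists_event`).

*Deterministic part.* On this event three facts are combined in `deterministic`:
* comparing the objective at `b` and at `βstar` gives
  `‖XΔ‖² / (nT) + λ ‖Δ‖_{2,1} ≤ 4 λ ‖Δ_J‖_{2,1}` (`basic_ineq`), hence the cone condition
  `‖Δ_{Jᶜ}‖_{2,1} ≤ 3 ‖Δ_J‖_{2,1}`;
* expanding `‖XΔ‖²` through the Gram matrices and dropping the nonnegative `Jᶜ × Jᶜ` block
  (`energy_lower`) gives, on the cone, `‖XΔ‖² ≥ n (1 - 1/(2α)) ‖Δ_J‖_{2,1}² / s`;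
* the first-order condition `‖(Xᵀ(Xb - y))^j‖ ≤ λ n T` (`kkt`) bounds every group of `XᵀXΔ` by
  `3 λ n T / 2`, and the near-diagonality of the Gram matrices turns this into a bound on every
  group of `Δ` (`sup_bound`).

The first two bound `‖Δ‖_{2,1}`, the third then bounds `‖Δ‖_{2,∞}`. The other norms follow by
interpolation (`norm2p_le`), and the support is recovered by thresholding, as each group norm of
`b` is within the threshold of that of `βstar`.
-/

open MeasureTheory ProbabilityTheory Finset
open scoped ENNReal

noncomputable section

namespace MultiTask

/-- `‖β^j‖`: Euclidean norm, across the tasks, of the coefficients of the `j`-th variable. -/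
def gnorm {M T : ℕ} (β : Fin T → Fin M → ℝ) (j : Fin M) : ℝ :=
  Real.sqrt (∑ t, (β t j) ^ 2)

/-- The multi-task Group Lasso objective
`(1/T) Σ_t (1/n)‖X_t β_t − y_t‖² + 2λ Σ_j ‖β^j‖`. -/
def mtObj {n M T : ℕ} (Xt : Fin T → Matrix (Fin n) (Fin M) ℝ) (y : Fin T → Fin n → ℝ)
    (lam : ℝ) (β : Fin T → Fin M → ℝ) : ℝ :=
  (1 / T) * ∑ t, (∑ i, ((Xt t).mulVec (β t) i - y t i) ^ 2) / n + 2 * lam * ∑ j, gnorm β j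

/-- `b` is a multi-task Group Lasso solution. -/
def IsMTSol {n M T : ℕ} (Xt : Fin T → Matrix (Fin n) (Fin M) ℝ) (y : Fin T → Fin n → ℝ)
    (lam : ℝ) (b : Fin T → Fin M → ℝ) : Prop :=
  ∀ β : Fin T → Fin M → ℝ, mtObj Xt y lam b ≤ mtObj Xt y lam β

/-- `‖XΔ‖²` for the block-diagonal design matrix with blocks `X_1,…,X_T`. -/
def XnormSq {n M T : ℕ} (Xt : Fin T → Matrix (Fin n) (Fin M) ℝ)
    (Δ : Fin T → Fin M → ℝ) : ℝ :=
  ∑ t, ∑ i, ((Xt t).mulVec (Δ t) i) ^ 2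

/-- Mixed `(2,p)`-norm, `1 ≤ p ≤ ∞` (with `p : ℝ≥0∞`). -/
def norm2p {M T : ℕ} (p : ℝ≥0∞) (β : Fin T → Fin M → ℝ) : ℝ :=
  if p = ⊤ then ⨆ j, gnorm β j else (∑ j, gnorm β j ^ p.toReal) ^ (1 / p.toReal)

/-- `x^{1/p}` for `p : ℝ≥0∞`, with the convention `x^{1/∞} = 1`. -/
def rpowInv (x : ℝ) (p : ℝ≥0∞) : ℝ :=
  if p = ⊤ then 1 else x ^ (1 / p.toReal)

/-- The constant `c = 3/2 + 16/(7(α−1))`. -/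
def mcConst (α : ℝ) : ℝ := 3 / 2 + 16 / (7 * (α - 1))

/-- The constant `c₁ = (16α/(α−1))^{1/p} c^{1−1/p}` for `p : ℝ≥0∞`. -/
def mcConstP (α : ℝ) (p : ℝ≥0∞) : ℝ :=
  if p = ⊤ then mcConst α
  else (16 * α / (α - 1)) ^ (1 / p.toReal) * mcConst α ^ (1 - 1 / p.toReal)

/-- Entry `(t,t')` of the cross Gram matrix `Ψ[j,j'] = X_{G_j}ᵀX_{G_{j'}}/(nT)` of the
block-diagonal design matrix (columns from different blocks are orthogonal). -/
def psiMT {n M T : ℕ} (Xt : Fin T → Matrix (Fin n) (Fin M) ℝ) (j j' : Fin M)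
    (t t' : Fin T) : ℝ :=
  (if t = t' then ∑ i, Xt t i j * Xt t i j' else 0) / (n * T)

/-! ### Gaussian tail bounds -/

/-- The vector `Xᵀ w`, with the block-diagonal design `X`, arranged like a coefficient array:
entry `(t, j)` is the inner product of column `j` of `X_t` with `w_t`. -/
def corr {n M T : ℕ} (Xt : Fin T → Matrix (Fin n) (Fin M) ℝ) (w : Fin T → Fin n → ℝ)
    (t : Fin T) (j : Fin M) : ℝ := ∑ i, Xt t i j * w t i

/-- A linear functional of i.i.d. centred Gaussians is Gaussian, by comparing characteristic
functions. -/
lemma map_sum_gaussian {n : ℕ} (x : Fin n → ℝ) (v w : NNReal)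
    (hw : (w : ℝ) = v * ∑ i, x i ^ 2) :
    (Measure.pi fun _ : Fin n => gaussianReal 0 v).map (fun z => ∑ i, x i * z i) =
      gaussianReal 0 w := by
  have : IsProbabilityMeasure ((Measure.pi fun _ : Fin n => gaussianReal 0 v).map
      (fun z => ∑ i, x i * z i)) := Measure.isProbabilityMeasure_map
      (Measurable.aemeasurable (by fun_prop))
  apply Measure.ext_of_charFun
  ext t
  rw [charFun_apply_real, integral_map (Measurable.aemeasurable (by fun_prop)) (by fun_prop), charFun_gaussianReal]
  have h1 : ∀ z : Fin n → ℝ, Complex.exp (t * ((∑ i, x i * z i : ℝ) : ℂ) * Complex.I) =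
      ∏ i, Complex.exp (((t * x i : ℝ) : ℂ) * (z i : ℝ) * Complex.I) := by
    intro z
    rw [← Complex.exp_sum]
    congr 1
    push_cast
    rw [Finset.mul_sum, Finset.sum_mul]
    exact Finset.sum_congr rfl fun i _ => by ring
  simp_rw [h1]
  rw [integral_fintype_prod_eq_prod (𝕜 := ℂ)
    (f := fun i (y : ℝ) => Complex.exp (((t * x i : ℝ) : ℂ) * (y : ℝ) * Complex.I))]
  simp_rw [← charFun_apply_real, charFun_gaussianReal, ← Complex.exp_sum]
  congr 1
  have hw' : (w : ℂ) = v * ∑ i, (x i : ℂ) ^ 2 := by exact_mod_cast congrArg Complex.ofReal hw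
  rw [show ((w : ℝ) : ℂ) = (w : ℂ) from rfl, hw']
  simp only [Complex.ofReal_zero, mul_zero, zero_mul, zero_sub, Finset.sum_neg_distrib]
  rw [Finset.mul_sum, Finset.sum_mul, Finset.sum_div]
  congr 1
  exact Finset.sum_congr rfl fun i _ => by push_cast; ring

lemma integral_exp_sq_gaussian {v : NNReal} (hv : v ≠ 0) :
    ∫ y, Real.exp (y ^ 2 / (4 * v)) ∂(gaussianReal 0 v) = √2 := by
  have hv' : (0 : ℝ) < v := by positivity
  rw [integral_gaussianReal_eq_integral_smul hv]
  have h1 : ∀ y : ℝ, gaussianPDFReal 0 v y • Real.exp (y ^ 2 / (4 * v)) =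
      (√(2 * Real.pi * v))⁻¹ * Real.exp (-(1 / (4 * v)) * y ^ 2) := by
    intro y
    rw [gaussianPDFReal, smul_eq_mul, mul_assoc, ← Real.exp_add]
    congr 2
    field_simp
    ring
  simp_rw [h1]
  rw [integral_const_mul, integral_gaussian, ← Real.sqrt_inv, ← Real.sqrt_mul (by positivity)]
  congr 1
  field_simp
  ring

lemma integrable_exp_sq_gaussian {v : NNReal} (hv : v ≠ 0) :
    Integrable (fun y => Real.exp (y ^ 2 / (4 * v))) (gaussianReal 0 v) := by
  by_contra h
  have := integral_undef h
  rw [integral_exp_sq_gaussian hv] at this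
  simp at this

/-- Tail of `v` times a chi-square variable with `T` degrees of freedom: Chernoff bound with
parameter `1 / (4 v)`. -/
lemma chi_tail {T : ℕ} {v : NNReal} (hv : v ≠ 0) (L : ℝ) :
    (Measure.pi fun _ : Fin T => gaussianReal 0 v).real
      {z | 2 * v * (T + L) ≤ ∑ t, z t ^ 2} ≤ Real.exp (-(L / 2)) := by
  have hv' : (0 : ℝ) < v := by positivity
  have h1 : ∀ z : Fin T → ℝ, Real.exp (1 / (4 * v) * ∑ t, z t ^ 2) =
      ∏ t, Real.exp (z t ^ 2 / (4 * v)) := by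
    intro z
    rw [← Real.exp_sum, Finset.mul_sum]
    congr 1
    exact Finset.sum_congr rfl fun i _ => by ring
  have hint : Integrable (fun z : Fin T → ℝ => Real.exp (1 / (4 * v) * ∑ t, z t ^ 2))
      (Measure.pi fun _ : Fin T => gaussianReal 0 v) := by
    simp_rw [h1]
    exact Integrable.fintype_prod fun _ => integrable_exp_sq_gaussian hv
  refine (measure_ge_le_exp_mul_mgf _ (t := 1 / (4 * v)) (by positivity) hint).trans ?_
  rw [mgf]
  simp_rw [h1]
  rw [integral_fintype_prod_eq_prod (𝕜 := ℝ)
    (f := fun _ (y : ℝ) => Real.exp (y ^ 2 / (4 * v)))]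
  simp_rw [integral_exp_sq_gaussian hv]
  rw [Finset.prod_const, Finset.card_univ, Fintype.card_fin]
  -- The moment factor `√2 ^ T` is absorbed by the part `exp (-T / 2)` of the Chernoff exponent.
  have h2 : √2 ≤ Real.exp (1 / 2) := by
    rw [Real.sqrt_le_left (by positivity), ← Real.exp_nat_mul]
    have := Real.add_one_le_exp (1 : ℝ)
    norm_num at this ⊢
    linarith
  calc _ ≤ Real.exp (-(1 / (4 * v)) * (2 * v * (T + L))) * Real.exp (1 / 2) ^ T := by gcongr
    _ = _ := by
      rw [← Real.exp_nat_mul, ← Real.exp_add]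
      congr 1
      field_simp
      ring

/-- The event on which the noise level of every group is below `λ n T / 2`, written for squared
norms. -/
lemma exists_event {n M T : ℕ} (hM : 1 ≤ M) (hn : 1 ≤ n)
    (Xt : Fin T → Matrix (Fin n) (Fin M) ℝ)
    (hdiag : ∀ t j, (∑ i, (Xt t i j) ^ 2) / n = 1)
    {Ω : Type*} [MeasurableSpace Ω] (μ : Measure Ω) [IsProbabilityMeasure μ]
    (W : Ω → Fin T → Fin n → ℝ) (σ : ℝ) (hσ : 0 < σ)
    (hW : Measure.map W μ =
      Measure.pi fun _ : Fin T => Measure.pi fun _ : Fin n => gaussianReal 0 (σ ^ 2).toNNReal)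
    (A : ℝ) (hA : 0 ≤ A) :
    ∃ Ev : Set Ω, MeasurableSet Ev ∧ 1 - 2 * (M : ℝ) ^ ((1 : ℝ) - 2 * A / 5) ≤ (μ Ev).toReal ∧
      ∀ ω ∈ Ev, ∀ j, ∑ t, corr Xt (W ω) t j ^ 2 < 2 * (n * σ ^ 2) * (T + A * Real.log M) := by
  set Q : Measure (Fin T → Fin n → ℝ) := Measure.pi fun _ : Fin T => Measure.pi fun _ : Fin n =>
    gaussianReal 0 (σ ^ 2).toNNReal with hQ
  have hn' : (0 : ℝ) < n := by positivity
  -- A map that is not a.e.-measurable has push-forward zero, which is not a probability measure.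
  have hWm : AEMeasurable W μ := by
    by_contra h
    rw [Measure.map_of_not_aemeasurable h] at hW
    have := congrArg (fun m => m Set.univ) hW
    simp [hQ] at this
  obtain ⟨v, hv⟩ : ∃ v : NNReal, (v : ℝ) = n * σ ^ 2 := ⟨⟨n * σ ^ 2, by positivity⟩, rfl⟩
  have hv0 : v ≠ 0 := by
    rintro rfl
    have : (0 : ℝ) < n * σ ^ 2 := by positivity
    simp [← hv] at this
  have hmeas : ∀ j, Measurable fun w : Fin T → Fin n → ℝ => fun t => corr Xt w t j := by
    intro j
    unfold corr
    fun_prop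
  have hlaw : ∀ j, Q.map (fun w t => corr Xt w t j) =
      Measure.pi fun _ : Fin T => gaussianReal 0 v := by
    intro j
    have hl : ∀ t, (Measure.pi fun _ : Fin n => gaussianReal 0 (σ ^ 2).toNNReal).map
        (fun z => ∑ i, Xt t i j * z i) = gaussianReal 0 v := by
      intro t
      apply map_sum_gaussian
      have := hdiag t j
      rw [hv, Real.coe_toNNReal _ (by positivity)]
      field_simp at this
      rw [this]; ring
    have := Measure.pi_map_pi (μ := fun _ : Fin T => Measure.pi fun _ : Fin n =>
      gaussianReal 0 (σ ^ 2).toNNReal) (f := fun t z => ∑ i, Xt t i j * z i)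
      (hμ := fun t => by rw [hl t]; infer_instance) (fun t => Measurable.aemeasurable (by fun_prop))
    simp_rw [hl] at this
    exact this
  set L := A * Real.log M with hL
  let B : Fin M → Set (Fin T → Fin n → ℝ) := fun j =>
    {w | 2 * v * (T + L) ≤ ∑ t, corr Xt w t j ^ 2}
  have hBm : ∀ j, MeasurableSet (B j) := by
    intro j
    refine measurableSet_le measurable_const ?_
    unfold corr
    fun_prop
  have hB : ∀ j, Q.real (B j) ≤ Real.exp (-(L / 2)) := by
    intro j
    have h := chi_tail (T := T) hv0 L
    rw [← hlaw j, map_measureReal_apply (hmeas j)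
      (measurableSet_le measurable_const (by fun_prop))] at h
    exact h
  have hU : Q.real (⋃ j, B j) ≤ M * Real.exp (-(L / 2)) := by
    refine (measureReal_iUnion_fintype_le _).trans ?_
    refine (Finset.sum_le_sum fun j _ => hB j).trans ?_
    simp
  have hUm : MeasurableSet (⋃ j, B j) := MeasurableSet.iUnion hBm
  have hc : 1 - M * Real.exp (-(L / 2)) ≤ Q.real (⋃ j, B j)ᶜ := by
    rw [probReal_compl_eq_one_sub hUm]
    linarith
  -- `W` is only a.e.-measurable, so the event is a measurable subset of the same measure.
  have hnull : NullMeasurableSet (W ⁻¹' (⋃ j, B j)ᶜ) μ :=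
    hWm.nullMeasurableSet_preimage hUm.compl
  obtain ⟨Ev, hsub, hEvm, hEv⟩ := hnull.exists_measurable_subset_ae_eq
  refine ⟨Ev, hEvm, ?_, ?_⟩
  · rw [measure_congr hEv, ← Measure.map_apply_of_aemeasurable hWm hUm.compl, hW]
    refine le_trans ?_ hc
    have hM' : (1 : ℝ) ≤ M := by exact_mod_cast hM
    have hlog : 0 ≤ Real.log M := Real.log_nonneg hM'
    have : (M : ℝ) * Real.exp (-(L / 2)) ≤ (M : ℝ) ^ ((1 : ℝ) - 2 * A / 5) := by
      rw [Real.rpow_def_of_pos (by linarith)]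
      nth_rw 1 [← Real.exp_log (show (0 : ℝ) < M by linarith)]
      rw [← Real.exp_add, Real.exp_le_exp, hL]
      nlinarith [mul_nonneg hA hlog]
    have h0 : (0 : ℝ) ≤ (M : ℝ) ^ ((1 : ℝ) - 2 * A / 5) := by positivity
    linarith
  · intro ω hω j
    have := hsub hω
    simp only [Set.preimage_compl, Set.mem_compl_iff, Set.mem_preimage, Set.mem_iUnion,
      not_exists] at this
    have := this j
    simp only [B, Set.mem_ofPred_eq, not_le, hv] at this
    exact this

/-! ### Group norms and expansion of the objective -/

/-- The group `β^j` as a vector of the Euclidean space `ℝ^T`. -/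
def gvec {M T : ℕ} (β : Fin T → Fin M → ℝ) (j : Fin M) : EuclideanSpace ℝ (Fin T) :=
  WithLp.toLp 2 fun t => β t j

lemma gnorm_eq {M T : ℕ} (β : Fin T → Fin M → ℝ) (j : Fin M) : gnorm β j = ‖gvec β j‖ := by
  simp [gnorm, gvec, EuclideanSpace.norm_eq]

lemma gnorm_nonneg {M T : ℕ} (β : Fin T → Fin M → ℝ) (j : Fin M) : 0 ≤ gnorm β j :=
  Real.sqrt_nonneg _

lemma gnorm_sq {M T : ℕ} (β : Fin T → Fin M → ℝ) (j : Fin M) :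
    gnorm β j ^ 2 = ∑ t, β t j ^ 2 :=
  Real.sq_sqrt (Finset.sum_nonneg fun _ _ => sq_nonneg _)

lemma gnorm_add_le {M T : ℕ} (β γ : Fin T → Fin M → ℝ) (j : Fin M) :
    gnorm (β + γ) j ≤ gnorm β j + gnorm γ j := by
  simp only [gnorm_eq]
  exact norm_add_le (gvec β j) (gvec γ j)

lemma gnorm_neg {M T : ℕ} (β : Fin T → Fin M → ℝ) (j : Fin M) : gnorm (-β) j = gnorm β j := by
  simp [gnorm]

lemma sum_mul_le_gnorm {M T : ℕ} (β γ : Fin T → Fin M → ℝ) (j k : Fin M) :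
    ∑ t, β t j * γ t k ≤ gnorm β j * gnorm γ k :=
  Real.sum_mul_le_sqrt_mul_sqrt _ _ _

lemma sum_mulVec_mul {n M T : ℕ} (Xt : Fin T → Matrix (Fin n) (Fin M) ℝ)
    (h : Fin T → Fin M → ℝ) (r : Fin T → Fin n → ℝ) (t : Fin T) :
    ∑ i, (Xt t).mulVec (h t) i * r t i = ∑ j, h t j * corr Xt r t j := by
  simp only [corr, Matrix.mulVec, dotProduct, Finset.mul_sum, Finset.sum_mul]
  rw [Finset.sum_comm]
  exact Finset.sum_congr rfl fun j _ => Finset.sum_congr rfl fun i _ => by ring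

/-- Second-order expansion of the objective at `β` in the direction `h`, with residual
`r = Xβ - y`. -/
lemma mtObj_add {n M T : ℕ} (Xt : Fin T → Matrix (Fin n) (Fin M) ℝ) (y r : Fin T → Fin n → ℝ)
    (lam : ℝ) (β h : Fin T → Fin M → ℝ) (hr : ∀ t i, r t i = (Xt t).mulVec (β t) i - y t i) :
    mtObj Xt y lam (β + h) = mtObj Xt y lam β
      + (2 * ∑ j, ∑ t, h t j * corr Xt r t j + XnormSq Xt h) / (n * T)
      + 2 * lam * (∑ j, gnorm (β + h) j - ∑ j, gnorm β j) := by
  have key : ∑ t, (∑ i, ((Xt t).mulVec ((β + h) t) i - y t i) ^ 2) =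
      ∑ t, (∑ i, ((Xt t).mulVec (β t) i - y t i) ^ 2)
      + (2 * ∑ j, ∑ t, h t j * corr Xt r t j + XnormSq Xt h) := by
    rw [Finset.sum_comm (s := (univ : Finset (Fin M)))]
    simp_rw [← sum_mulVec_mul]
    rw [XnormSq, Finset.mul_sum, ← Finset.sum_add_distrib, ← Finset.sum_add_distrib]
    refine Finset.sum_congr rfl fun t _ => ?_
    rw [Finset.mul_sum, ← Finset.sum_add_distrib, ← Finset.sum_add_distrib]
    refine Finset.sum_congr rfl fun i _ => ?_
    rw [hr, Pi.add_apply, Matrix.mulVec_add, Pi.add_apply]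
    ring
  unfold mtObj
  rw [← Finset.sum_div, ← Finset.sum_div, key]
  simp only [div_eq_mul_inv, mul_inv]
  ring

/-- First-order optimality: each group of `Xᵀ(Xb - y)` has norm at most `λ n T`. -/
lemma kkt {n M T : ℕ} (hn : 1 ≤ n) (hT : 1 ≤ T) (Xt : Fin T → Matrix (Fin n) (Fin M) ℝ)
    (y r : Fin T → Fin n → ℝ)
    (lam : ℝ) (hlam : 0 ≤ lam) (b : Fin T → Fin M → ℝ)
    (hr : ∀ t i, r t i = (Xt t).mulVec (b t) i - y t i)
    (hb : IsMTSol Xt y lam b) (j : Fin M) :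
    gnorm (corr Xt r) j ≤ lam * (n * T) := by
  have hN : (0 : ℝ) < n * T := by positivity
  set G := gnorm (corr Xt r) j with hG
  have hG0 : 0 ≤ G := gnorm_nonneg _ _
  -- The solution is perturbed in group `j` only, against the gradient of the quadratic term.
  let h : ℝ → Fin T → Fin M → ℝ := fun ε t k => if k = j then -ε * corr Xt r t j else 0
  set C := XnormSq Xt (h 1) with hC
  have hC0 : 0 ≤ C := Finset.sum_nonneg fun _ _ => Finset.sum_nonneg fun _ _ => sq_nonneg _
  have hh : ∀ ε t, h ε t = ε • h 1 t := by
    intro ε t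
    ext k
    simp only [h, Pi.smul_apply, smul_eq_mul]
    split_ifs <;> ring
  have main : ∀ ε : ℝ, 0 < ε → G ^ 2 ≤ lam * (n * T) * G + ε * C := by
    intro ε hε
    have h1 := hb (b + h ε)
    rw [mtObj_add Xt y r lam b (h ε) hr] at h1
    have h2 : XnormSq Xt (h ε) = ε ^ 2 * C := by
      rw [hC, XnormSq, XnormSq, Finset.mul_sum]
      refine Finset.sum_congr rfl fun t _ => ?_
      rw [Finset.mul_sum]
      refine Finset.sum_congr rfl fun i _ => ?_
      rw [hh ε t, Matrix.mulVec_smul, Pi.smul_apply, smul_eq_mul]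
      ring
    have h3 : ∑ k, ∑ t, h ε t k * corr Xt r t k = -ε * G ^ 2 := by
      rw [Finset.sum_eq_single j]
      · rw [hG, gnorm_sq, Finset.mul_sum]
        refine Finset.sum_congr rfl fun t _ => ?_
        simp only [h, if_true]
        ring
      · intro k _ hk
        simp [h, hk]
      · simp
    have h4 : ∑ k, gnorm (h ε) k = ε * G := by
      rw [Finset.sum_eq_single j]
      · rw [hG, gnorm, gnorm]
        simp only [h, if_true, mul_pow]
        rw [← Finset.mul_sum, Real.sqrt_mul (by positivity), neg_sq, Real.sqrt_sq hε.le]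
      · intro k _ hk
        simp [gnorm, h, hk]
      · simp
    have h5 : ∑ k, gnorm (b + h ε) k - ∑ k, gnorm b k ≤ ε * G := by
      rw [← h4, sub_le_iff_le_add', ← Finset.sum_add_distrib]
      exact Finset.sum_le_sum fun k _ => gnorm_add_le _ _ _
    rw [h2, h3] at h1
    have h6 : 0 ≤ (2 * (-ε * G ^ 2) + ε ^ 2 * C) / (n * T) + 2 * lam * (ε * G) := by
      have := mul_le_mul_of_nonneg_left h5 (show 0 ≤ 2 * lam by positivity)
      linarith
    have h7 : 0 ≤ ε * (2 * (-G ^ 2) + ε * C + 2 * lam * (n * T) * G) := by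
      have := mul_nonneg h6 hN.le
      rw [add_mul, div_mul_cancel₀ _ hN.ne'] at this
      linarith
    have h8 := nonneg_of_mul_nonneg_right h7 hε
    nlinarith
  have lim : G ^ 2 ≤ lam * (n * T) * G := by
    refine le_of_forall_pos_le_add fun δ hδ => ?_
    have := main (δ / (C + 1)) (by positivity)
    refine this.trans ?_
    gcongr
    rw [div_mul_eq_mul_div, div_le_iff₀ (by positivity)]
    nlinarith
  rcases hG0.eq_or_lt with h0 | h0
  · rw [← h0]; positivity
  · nlinarith

/-- The solution does at least as well as `βstar`; when the noise level is at most `λ n T / 2`, the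
noise term costs only `λ ‖Δ‖_{2,1}`. -/
lemma basic_ineq {n M T : ℕ} (hn : 1 ≤ n) (hT : 1 ≤ T) (Xt : Fin T → Matrix (Fin n) (Fin M) ℝ)
    (βstar : Fin T → Fin M → ℝ) (w : Fin T → Fin n → ℝ)
    (lam : ℝ) (hlam : 0 ≤ lam) (b : Fin T → Fin M → ℝ)
    (hnoise : ∀ j, gnorm (corr Xt w) j ≤ lam * (n * T) / 2)
    (hb : IsMTSol Xt (fun t i => (Xt t).mulVec (βstar t) i + w t i) lam b) :
    XnormSq Xt (b - βstar) / (n * T) + lam * ∑ j, gnorm (b - βstar) j ≤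
      4 * lam * ∑ j with gnorm βstar j ≠ 0, gnorm (b - βstar) j := by
  have hN : (0 : ℝ) < n * T := by positivity
  set Δ := b - βstar with hΔ
  have hbΔ : b = βstar + Δ := by rw [hΔ]; abel
  have h1 := hb βstar
  rw [hbΔ, mtObj_add Xt _ (-w) lam βstar Δ (by intro t i; simp)] at h1
  have h2 : -(lam * (n * T) / 2 * ∑ j, gnorm Δ j) ≤ ∑ j, ∑ t, Δ t j * corr Xt (-w) t j := by
    have : ∑ j, ∑ t, Δ t j * corr Xt w t j ≤ lam * (n * T) / 2 * ∑ j, gnorm Δ j := by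
      rw [Finset.mul_sum]
      refine Finset.sum_le_sum fun j _ => (sum_mul_le_gnorm _ _ _ _).trans ?_
      rw [mul_comm]
      exact mul_le_mul_of_nonneg_right (hnoise j) (gnorm_nonneg _ _)
    have h' : ∑ j, ∑ t, Δ t j * corr Xt (-w) t j = -∑ j, ∑ t, Δ t j * corr Xt w t j := by
      simp [corr, Finset.sum_neg_distrib]
    linarith
  have h3 : (2 * ∑ j, ∑ t, Δ t j * corr Xt (-w) t j + XnormSq Xt Δ) / (n * T) ≥
      XnormSq Xt Δ / (n * T) - lam * ∑ j, gnorm Δ j := by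
    rw [ge_iff_le, le_div_iff₀ hN, sub_mul, div_mul_cancel₀ _ hN.ne']
    nlinarith
  have h4 : ∑ j, gnorm βstar j - ∑ j, gnorm (βstar + Δ) j + ∑ j, gnorm Δ j ≤
      2 * ∑ j with gnorm βstar j ≠ 0, gnorm Δ j := by
    rw [← Finset.sum_sub_distrib, ← Finset.sum_add_distrib, Finset.sum_filter, Finset.mul_sum]
    refine Finset.sum_le_sum fun j _ => ?_
    split_ifs with hj
    · have := gnorm_add_le (βstar + Δ) (-Δ) j
      rw [gnorm_neg, add_neg_cancel_right] at this
      linarith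
    · have hj : gnorm βstar j = 0 := not_not.mp hj
      have := gnorm_add_le (βstar + Δ) (-βstar) j
      rw [gnorm_neg, add_neg_cancel_comm] at this
      linarith
  have h5 := mul_le_mul_of_nonneg_left h4 (show 0 ≤ 2 * lam by positivity)
  linarith

/-! ### Coherence of the design -/

/-- Entry `(j, k)` of the unnormalized Gram matrix `X_tᵀ X_t`. -/
def gram {n M T : ℕ} (Xt : Fin T → Matrix (Fin n) (Fin M) ℝ) (t : Fin T) (j k : Fin M) : ℝ :=
  ∑ i, Xt t i j * Xt t i k

lemma corr_mulVec {n M T : ℕ} (Xt : Fin T → Matrix (Fin n) (Fin M) ℝ) (Δ : Fin T → Fin M → ℝ)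
    (t : Fin T) (j : Fin M) :
    corr Xt (fun t => (Xt t).mulVec (Δ t)) t j = ∑ k, gram Xt t j k * Δ t k := by
  simp only [corr, gram, Matrix.mulVec, dotProduct, Finset.mul_sum, Finset.sum_mul]
  rw [Finset.sum_comm]
  exact Finset.sum_congr rfl fun j _ => Finset.sum_congr rfl fun i _ => by ring

lemma gnorm_gram_le {n M T : ℕ} (Xt : Fin T → Matrix (Fin n) (Fin M) ℝ) (Δ : Fin T → Fin M → ℝ)
    (j k : Fin M) (κ : ℝ) (hκ : 0 ≤ κ) (h : ∀ t, |gram Xt t j k| ≤ κ) :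
    gnorm (fun t k => gram Xt t j k * Δ t k) k ≤ κ * gnorm Δ k := by
  rw [gnorm, gnorm, ← Real.sqrt_sq hκ, ← Real.sqrt_mul (sq_nonneg _), Finset.mul_sum]
  refine Real.sqrt_le_sqrt (Finset.sum_le_sum fun t _ => ?_)
  rw [mul_pow]
  refine mul_le_mul_of_nonneg_right ?_ (sq_nonneg _)
  exact sq_le_sq.mpr ((h t).trans (le_abs_self κ))

/-- Since the Gram matrices are nearly diagonal, a group of `Δ` is controlled by the same group of
`XᵀXΔ`, up to a multiple of `‖Δ‖_{2,1}`. -/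
lemma sup_bound {n M T : ℕ} (Xt : Fin T → Matrix (Fin n) (Fin M) ℝ) (Δ : Fin T → Fin M → ℝ)
    (κ : ℝ) (hκ : 0 ≤ κ) (hd : ∀ t j, gram Xt t j j = n)
    (ho : ∀ t j k, j ≠ k → |gram Xt t j k| ≤ κ) (j : Fin M) :
    n * gnorm Δ j ≤ gnorm (corr Xt fun t => (Xt t).mulVec (Δ t)) j + κ * ∑ k, gnorm Δ k := by
  set g := corr Xt fun t => (Xt t).mulVec (Δ t) with hg
  have h1 : (n : ℝ) • gvec Δ j =
      gvec g j - ∑ k ∈ univ.erase j, gvec (fun t k => gram Xt t j k * Δ t k) k := by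
    ext t
    have : g t j = n * Δ t j + ∑ k ∈ univ.erase j, gram Xt t j k * Δ t k := by
      rw [hg, corr_mulVec, ← Finset.add_sum_erase _ _ (Finset.mem_univ j), hd]
    simp [gvec, this]
  have h2 : n * gnorm Δ j = ‖(n : ℝ) • gvec Δ j‖ := by
    rw [norm_smul, gnorm_eq]; simp
  rw [h2, h1]
  refine (norm_sub_le _ _).trans ?_
  rw [← gnorm_eq]
  gcongr
  refine (norm_sum_le _ _).trans ?_
  rw [Finset.mul_sum]
  refine (Finset.sum_le_sum fun k hk => ?_).trans
    (Finset.sum_le_sum_of_subset_of_nonneg (Finset.erase_subset j univ)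
      fun k _ _ => mul_nonneg hκ (gnorm_nonneg Δ k))
  rw [← gnorm_eq]
  exact gnorm_gram_le Xt Δ j k κ hκ fun t => ho t j k (Finset.ne_of_mem_erase hk).symm

/-- Lower bound for `‖XΔ‖²` in which only the groups in `J` enter quadratically. The `Jᶜ × Jᶜ` block
is a sum of squares and is dropped, so that no multiple of `‖Δ_{Jᶜ}‖_{2,1}²` is lost. -/
lemma energy_lower {n M T : ℕ} (Xt : Fin T → Matrix (Fin n) (Fin M) ℝ) (Δ : Fin T → Fin M → ℝ)
    (κ : ℝ) (hκ : 0 ≤ κ) (hd : ∀ t j, gram Xt t j j = n)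
    (ho : ∀ t j k, j ≠ k → |gram Xt t j k| ≤ κ) (J : Finset (Fin M)) :
    n * ∑ j ∈ J, gnorm Δ j ^ 2 - κ * (∑ j ∈ J, gnorm Δ j) ^ 2
      - 2 * κ * ((∑ j ∈ J, gnorm Δ j) * ∑ j ∈ Jᶜ, gnorm Δ j) ≤ XnormSq Xt Δ := by
  -- `B j k` is the contribution of the pair of groups `(j, k)` to `‖XΔ‖²`.
  let B : Fin M → Fin M → ℝ := fun j k => ∑ t, Δ t j * (gram Xt t j k * Δ t k)
  have hBoff : ∀ j k, j ≠ k → -(κ * (gnorm Δ j * gnorm Δ k)) ≤ B j k := by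
    intro j k hjk
    have h1 := sum_mul_le_gnorm (-Δ) (fun t k => gram Xt t j k * Δ t k) j k
    have h2 := gnorm_gram_le Xt Δ j k κ hκ fun t => ho t j k hjk
    have h3 := mul_le_mul_of_nonneg_left h2 (gnorm_nonneg Δ j)
    rw [gnorm_neg] at h1
    simp only [Pi.neg_apply, neg_mul, Finset.sum_neg_distrib] at h1
    simp only [B]
    linarith
  have hBdiag : ∀ j, B j j = n * gnorm Δ j ^ 2 := by
    intro j
    simp only [B, hd]
    rw [gnorm_sq, Finset.mul_sum]
    exact Finset.sum_congr rfl fun t _ => by ring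
  have hBS : ∀ S S' : Finset (Fin M), ∑ j ∈ S, ∑ k ∈ S', B j k =
      ∑ t, ∑ i, (∑ j ∈ S, Xt t i j * Δ t j) * (∑ k ∈ S', Xt t i k * Δ t k) := by
    intro S S'
    simp only [B, gram, Finset.mul_sum, Finset.sum_mul]
    simp_rw [Finset.sum_comm (s := S') (t := (univ : Finset (Fin T)))]
    rw [Finset.sum_comm]
    refine Finset.sum_congr rfl fun t _ => ?_
    simp_rw [Finset.sum_comm (s := S') (t := (univ : Finset (Fin n)))]
    rw [Finset.sum_comm]
    refine Finset.sum_congr rfl fun i _ => ?_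
    rw [Finset.sum_comm]
    exact Finset.sum_congr rfl fun j _ => Finset.sum_congr rfl fun k _ => by ring
  have hX : XnormSq Xt Δ = ∑ j ∈ J, ∑ k ∈ J, B j k + 2 * ∑ j ∈ J, ∑ k ∈ Jᶜ, B j k
      + ∑ j ∈ Jᶜ, ∑ k ∈ Jᶜ, B j k := by
    rw [hBS, hBS, hBS, XnormSq, Finset.mul_sum, ← Finset.sum_add_distrib, ← Finset.sum_add_distrib]
    refine Finset.sum_congr rfl fun t _ => ?_
    rw [Finset.mul_sum, ← Finset.sum_add_distrib, ← Finset.sum_add_distrib]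
    refine Finset.sum_congr rfl fun i _ => ?_
    rw [Matrix.mulVec, dotProduct, ← Finset.sum_add_sum_compl J]
    ring
  have h1 : n * ∑ j ∈ J, gnorm Δ j ^ 2 - κ * (∑ j ∈ J, gnorm Δ j) ^ 2 ≤
      ∑ j ∈ J, ∑ k ∈ J, B j k := by
    rw [sq (∑ j ∈ J, gnorm Δ j), Finset.sum_mul_sum, Finset.mul_sum, Finset.mul_sum,
      ← Finset.sum_sub_distrib]
    refine Finset.sum_le_sum fun j hj => ?_
    rw [← Finset.add_sum_erase _ _ hj, ← Finset.add_sum_erase _ (fun k => B j k) hj, hBdiag,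
      mul_add, Finset.mul_sum]
    have := Finset.sum_le_sum fun k (hk : k ∈ J.erase j) =>
      hBoff j k (Finset.ne_of_mem_erase hk).symm
    rw [Finset.sum_neg_distrib] at this
    -- The claimed bound also subtracts the diagonal coherence term, which is nonnegative.
    have h0 := mul_nonneg hκ (mul_self_nonneg (gnorm Δ j))
    linarith
  have h2 : -(κ * ((∑ j ∈ J, gnorm Δ j) * ∑ j ∈ Jᶜ, gnorm Δ j)) ≤ ∑ j ∈ J, ∑ k ∈ Jᶜ, B j k := by
    rw [Finset.sum_mul_sum, Finset.mul_sum, ← Finset.sum_neg_distrib]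
    refine Finset.sum_le_sum fun j hj => ?_
    rw [Finset.mul_sum, ← Finset.sum_neg_distrib]
    refine Finset.sum_le_sum fun k hk => hBoff j k ?_
    rintro rfl
    exact Finset.mem_compl.mp hk hj
  have h3 : 0 ≤ ∑ j ∈ Jᶜ, ∑ k ∈ Jᶜ, B j k := by
    rw [hBS]
    exact Finset.sum_nonneg fun t _ => Finset.sum_nonneg fun i _ => mul_self_nonneg _
  linarith

/-! ### Estimation bounds and the main result -/

/-- The `(2,1)` and `(2,∞)` bounds, for a noise level of at most `λ n T / 2` in every group. -/
lemma deterministic {n M T : ℕ} (hn : 1 ≤ n) (hT : 1 ≤ T)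
    (Xt : Fin T → Matrix (Fin n) (Fin M) ℝ)
    (βstar : Fin T → Fin M → ℝ) (w : Fin T → Fin n → ℝ)
    (lam : ℝ) (hlam : 0 < lam) (b : Fin T → Fin M → ℝ)
    (s : ℕ) (hs : 1 ≤ s)
    (hβs : (Finset.univ.filter (fun j => gnorm βstar j ≠ 0)).card ≤ s)
    (α : ℝ) (hα : 1 < α)
    (hd : ∀ t j, gram Xt t j j = n)
    (ho : ∀ t j k, j ≠ k → |gram Xt t j k| ≤ n / (14 * α * s))
    (hnoise : ∀ j, gnorm (corr Xt w) j ≤ lam * (n * T) / 2)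
    (hb : IsMTSol Xt (fun t i => (Xt t).mulVec (βstar t) i + w t i) lam b) :
    (∑ j, gnorm (b - βstar) j ≤ 16 * α / (α - 1) * s * (lam * T)) ∧
      ∀ j, gnorm (b - βstar) j ≤ mcConst α * (lam * T) := by
  have hn' : (0 : ℝ) < n := by positivity
  have hT' : (0 : ℝ) < T := by positivity
  have hs' : (0 : ℝ) < s := by positivity
  have hα' : 0 < α := by linarith
  have hα1 : 0 < α - 1 := by linarith
  have hκ : 0 ≤ n / (14 * α * s) := by positivity
  have hbasic := basic_ineq hn hT Xt βstar w lam hlam.le b hnoise hb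
  set Δ := b - βstar with hΔ
  set J := Finset.univ.filter (fun j => gnorm βstar j ≠ 0) with hJ
  have henergy := energy_lower Xt Δ _ hκ hd ho J
  set u := ∑ j ∈ J, gnorm Δ j with hu
  set u' := ∑ j ∈ Jᶜ, gnorm Δ j with hu'
  have hu0 : 0 ≤ u := Finset.sum_nonneg fun _ _ => gnorm_nonneg _ _
  have hsum : ∑ j, gnorm Δ j = u + u' := (Finset.sum_add_sum_compl J _).symm
  rw [hsum] at hbasic
  have hX0 : 0 ≤ XnormSq Xt Δ / (n * T) := div_nonneg
    (Finset.sum_nonneg fun _ _ => Finset.sum_nonneg fun _ _ => sq_nonneg _) (by positivity)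
  have hcone : u' ≤ 3 * u := by nlinarith
  have hcs : u ^ 2 ≤ s * ∑ j ∈ J, gnorm Δ j ^ 2 := by
    refine (sq_sum_le_card_mul_sum_sq).trans ?_
    gcongr
  -- On the cone, `1 + 2 * 3 = 7` coherence terms are lost, and `7 / (14 α) = 1 / (2 α)`.
  have hRE : (α - 1) / α * (n * u ^ 2) ≤ s * XnormSq Xt Δ := by
    have h1 : n / (14 * α * s) * (u * u') ≤ n / (14 * α * s) * (u * (3 * u)) := by gcongr
    have h2 : n * ∑ j ∈ J, gnorm Δ j ^ 2 - 7 * (n / (14 * α * s)) * u ^ 2 ≤ XnormSq Xt Δ := by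
      linarith
    have h3 := mul_le_mul_of_nonneg_left h2 hs'.le
    have h4 := mul_le_mul_of_nonneg_left hcs hn'.le
    have h5 : (s : ℝ) * (7 * (n / (14 * α * s)) * u ^ 2) = 1 / (2 * α) * (n * u ^ 2) := by
      field_simp; ring
    have h6 : (α - 1) / α * (n * u ^ 2) = n * u ^ 2 - 2 * (1 / (2 * α) * (n * u ^ 2)) := by
      field_simp
    have h7 : 0 ≤ 1 / (2 * α) * (n * u ^ 2) := by positivity
    linarith
  have hu1 : u ≤ 4 * α / (α - 1) * s * (lam * T) := by
    have h1 : XnormSq Xt Δ ≤ 4 * lam * u * (n * T) := by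
      rw [← div_le_iff₀ (by positivity)]
      have : 0 ≤ u' := Finset.sum_nonneg fun _ _ => gnorm_nonneg _ _
      nlinarith [mul_nonneg hlam.le hu0, mul_nonneg hlam.le this]
    have h2 : (α - 1) / α * (n * u ^ 2) ≤ s * (4 * lam * u * (n * T)) := by
      refine hRE.trans ?_
      gcongr
    rcases hu0.eq_or_lt with h0 | h0
    · rw [← h0]; positivity
    · have h3 : n * u * ((α - 1) / α * u) ≤ n * u * (s * (4 * lam * T)) := by linarith
      have h4 := le_of_mul_le_mul_left h3 (by positivity)
      rw [div_mul_eq_mul_div, div_le_iff₀ hα'] at h4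
      rw [div_mul_eq_mul_div, div_mul_eq_mul_div, le_div_iff₀ hα1]
      linarith
  have hl1 : ∑ j, gnorm Δ j ≤ 16 * α / (α - 1) * s * (lam * T) := by
    rw [hsum]
    have : 16 * α / (α - 1) * s * (lam * T) = 4 * (4 * α / (α - 1) * s * (lam * T)) := by ring
    linarith
  refine ⟨hl1, fun j => ?_⟩
  have h1 := sup_bound Xt Δ _ hκ hd ho j
  have h2 : gnorm (corr Xt fun t => (Xt t).mulVec (Δ t)) j ≤ 3 / 2 * (lam * (n * T)) := by
    have hk := kkt hn hT Xt _ (fun t i => (Xt t).mulVec (b t) i -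
      ((Xt t).mulVec (βstar t) i + w t i)) lam hlam.le b (fun _ _ => rfl) hb j
    have hsplit : (corr Xt fun t => (Xt t).mulVec (Δ t)) =
        corr Xt (fun t i => (Xt t).mulVec (b t) i - ((Xt t).mulVec (βstar t) i + w t i))
          + corr Xt w := by
      ext t k
      simp only [corr, Pi.add_apply, ← Finset.sum_add_distrib]
      refine Finset.sum_congr rfl fun i _ => ?_
      rw [hΔ, Pi.sub_apply, Matrix.mulVec_sub, Pi.sub_apply]
      ring
    rw [hsplit]
    have := gnorm_add_le (corr Xt (fun t i => (Xt t).mulVec (b t) i -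
      ((Xt t).mulVec (βstar t) i + w t i))) (corr Xt w) j
    linarith [hnoise j]
  have h3 := mul_le_mul_of_nonneg_left hl1 hκ
  -- `16 / 14 = 8 / 7`, half of what the definition of `mcConst` allows.
  have h4 : n / (14 * α * s) * (16 * α / (α - 1) * s * (lam * T)) =
      n * (8 / (7 * (α - 1)) * (lam * T)) := by
    field_simp; norm_num
  have h5 : n * gnorm Δ j ≤ n * ((3 / 2 + 8 / (7 * (α - 1))) * (lam * T)) := by linarith
  refine (le_of_mul_le_mul_left h5 hn').trans ?_
  unfold mcConst
  gcongr
  norm_num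

/-- Interpolation between the `(2,1)` and the `(2,∞)` bound. -/
lemma norm2p_le {M T : ℕ} (hM : 1 ≤ M) (Δ : Fin T → Fin M → ℝ) (c K s S : ℝ) (hc : 0 ≤ c)
    (hK : 0 ≤ K) (hs : 0 ≤ s) (hS : 0 ≤ S)
    (h1 : ∑ j, gnorm Δ j ≤ K * s * S) (hinf : ∀ j, gnorm Δ j ≤ c * S) (p : ℝ≥0∞) (hp : 1 ≤ p) :
    norm2p p Δ ≤
      (if p = ⊤ then c else K ^ (1 / p.toReal) * c ^ (1 - 1 / p.toReal)) * rpowInv s p * S := by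
  unfold norm2p rpowInv
  split_ifs with hpt
  · have : Nonempty (Fin M) := ⟨⟨0, hM⟩⟩
    rw [mul_one]
    exact ciSup_le hinf
  · set q := p.toReal with hq
    have hq1 : 1 ≤ q := by
      rw [hq]
      simpa using ENNReal.toReal_mono hpt hp
    have hq0 : 0 < q := by linarith
    have hS' : S ^ (1 - 1 / q) * S ^ (1 / q) = S := by
      rw [← Real.rpow_add_of_nonneg hS (by rw [sub_nonneg, div_le_one hq0]; exact hq1)
        (by positivity)]
      simp
    have hsum : ∑ j, gnorm Δ j ^ q ≤ (c * S) ^ (q - 1) * (K * s * S) := by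
      refine le_trans ?_ (mul_le_mul_of_nonneg_left h1 (by positivity))
      rw [Finset.mul_sum]
      refine Finset.sum_le_sum fun j _ => ?_
      have hg := gnorm_nonneg Δ j
      calc gnorm Δ j ^ q = gnorm Δ j ^ (q - 1) * gnorm Δ j ^ (1 : ℝ) := by
            rw [← Real.rpow_add_of_nonneg hg (by linarith) (by norm_num)]
            congr 1; ring
        _ ≤ _ := by
          rw [Real.rpow_one]
          gcongr
          exact hinf j
    calc (∑ j, gnorm Δ j ^ q) ^ (1 / q) ≤ ((c * S) ^ (q - 1) * (K * s * S)) ^ (1 / q) := by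
          refine Real.rpow_le_rpow ?_ hsum (by positivity)
          exact Finset.sum_nonneg fun j _ => Real.rpow_nonneg (gnorm_nonneg Δ j) q
      _ = (c * S) ^ (1 - 1 / q) * (K * s * S) ^ (1 / q) := by
          rw [Real.mul_rpow (by positivity) (by positivity), ← Real.rpow_mul (by positivity)]
          congr 2
          field_simp
      _ = K ^ (1 / q) * c ^ (1 - 1 / q) * s ^ (1 / q) * (S ^ (1 - 1 / q) * S ^ (1 / q)) := by
          rw [Real.mul_rpow hc hS, Real.mul_rpow (by positivity) hS, Real.mul_rpow hK hs]
          ring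
      _ = _ := by rw [hS']

/-- mixed-norm estimation bounds and sparsity pattern selection for the
multi-task Group Lasso under the coherence assumption MC(s,α) (with `φ = 1/T`). -/
theorem multitask_mixed_norm_and_pattern_selection
    {n M T : ℕ} (hM : 2 ≤ M) (hT : 1 ≤ T) (hn : 1 ≤ n)
    (Xt : Fin T → Matrix (Fin n) (Fin M) ℝ)
    (hdiag : ∀ t j, (∑ i, (Xt t i j) ^ 2) / n = 1)
    (βstar : Fin T → Fin M → ℝ)
    {Ω : Type*} [MeasurableSpace Ω] (μ : Measure Ω) [IsProbabilityMeasure μ]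
    (W : Ω → Fin T → Fin n → ℝ) (σ : ℝ) (hσ : 0 < σ)
    (hW : Measure.map W μ =
      Measure.pi fun _ : Fin T => Measure.pi fun _ : Fin n => gaussianReal 0 (σ ^ 2).toNNReal)
    (A : ℝ) (hA : 5 / 2 < A) (lam : ℝ)
    (hlam : lam = 2 * Real.sqrt 2 * σ / Real.sqrt (n * T) *
      Real.sqrt (1 + A * Real.log M / T))
    (s : ℕ) (hs : 1 ≤ s)
    (hβs : (Finset.univ.filter (fun j => gnorm βstar j ≠ 0)).card ≤ s)
    (α : ℝ) (hα : 1 < α)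
    (hMCdiag : ∀ j t, psiMT Xt j j t t = 1 / T)
    (hMCoff : ∀ j, ∀ t t' : Fin T, t ≠ t' →
      |psiMT Xt j j t t'| ≤ (1 / T) / (14 * α * s * T))
    (hMCdiag' : ∀ j j', j ≠ j' → ∀ t : Fin T,
      |psiMT Xt j j' t t| ≤ (1 / T) / (14 * α * s))
    (hMCoff' : ∀ j j', j ≠ j' → ∀ t t' : Fin T, t ≠ t' →
      |psiMT Xt j j' t t'| ≤ (1 / T) / (14 * α * s * Real.sqrt (T * T))) :
    ∃ Ev : Set Ω, MeasurableSet Ev ∧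
      1 - 2 * (M : ℝ) ^ ((1 : ℝ) - 2 * A / 5) ≤ (μ Ev).toReal ∧
      ∀ ω ∈ Ev, ∀ b : Fin T → Fin M → ℝ,
        IsMTSol Xt (fun t i => (Xt t).mulVec (βstar t) i + W ω t i) lam b →
        (∀ p : ℝ≥0∞, 1 ≤ p →
          (1 / Real.sqrt T) * norm2p p (b - βstar) ≤
            2 * Real.sqrt 2 * mcConstP α p * σ * rpowInv s p / Real.sqrt n *
              Real.sqrt (1 + A * Real.log M / T)) ∧
        ((∀ j, gnorm βstar j ≠ 0 →
            4 * Real.sqrt 2 * mcConst α * σ / Real.sqrt n *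
                Real.sqrt (1 + A * Real.log M / T) <
              (1 / Real.sqrt T) * gnorm βstar j) →
          Finset.univ.filter (fun j =>
              2 * Real.sqrt 2 * mcConst α * σ / Real.sqrt n *
                  Real.sqrt (1 + A * Real.log M / T) <
                (1 / Real.sqrt T) * gnorm b j) =
            Finset.univ.filter (fun j => gnorm βstar j ≠ 0)) := by
  have hn' : (0 : ℝ) < n := by positivity
  have hT' : (0 : ℝ) < T := by positivity
  have hα1 : 0 < α - 1 := by linarith
  have hlog : 0 ≤ Real.log M := Real.log_nonneg (by exact_mod_cast (by omega : 1 ≤ M))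
  have hA0 : 0 ≤ A := by linarith
  set R := Real.sqrt (1 + A * Real.log M / T) with hR
  have hRpos : 0 < R := Real.sqrt_pos.mpr (by positivity)
  have hRsq : R ^ 2 = 1 + A * Real.log M / T := Real.sq_sqrt (by positivity)
  have hlam0 : 0 < lam := by rw [hlam]; positivity
  have hc0 : 0 ≤ mcConst α := by unfold mcConst; positivity
  have hsT : Real.sqrt T ^ 2 = T := Real.sq_sqrt hT'.le
  have hsT0 : 0 < Real.sqrt T := Real.sqrt_pos.mpr hT'
  have hsn0 : 0 < Real.sqrt n := Real.sqrt_pos.mpr hn'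
  have hS : 1 / Real.sqrt T * (lam * T) = 2 * Real.sqrt 2 * σ / Real.sqrt n * R := by
    rw [hlam, Real.sqrt_mul hn'.le]
    nth_rw 3 [← hsT]
    field_simp
  have hd : ∀ t j, gram Xt t j j = n := by
    intro t j
    have := hdiag t j
    rw [div_eq_one_iff_eq hn'.ne'] at this
    rw [gram, ← this]
    exact Finset.sum_congr rfl fun i _ => by ring
  have ho : ∀ t j k, j ≠ k → |gram Xt t j k| ≤ n / (14 * α * s) := by
    intro t j k hjk
    have h := hMCdiag' j k hjk t
    have h2 : psiMT Xt j k t t = gram Xt t j k / (n * T) := by simp [psiMT, gram]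
    rw [h2, abs_div, abs_of_pos (by positivity : (0 : ℝ) < n * T), div_le_iff₀ (by positivity)] at h
    refine h.trans (le_of_eq ?_)
    field_simp
  obtain ⟨Ev, hEvm, hEvp, hEv⟩ := exists_event (by omega) hn Xt hdiag μ W σ hσ hW A hA0
  refine ⟨Ev, hEvm, hEvp, fun ω hω b hb => ?_⟩
  have hnoise : ∀ j, gnorm (corr Xt (W ω)) j ≤ lam * (n * T) / 2 := by
    intro j
    refine Real.sqrt_le_iff.mpr ⟨by positivity, (hEv ω hω j).le.trans (le_of_eq ?_)⟩
    have h2 : Real.sqrt 2 ^ 2 = 2 := Real.sq_sqrt (by norm_num)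
    have hN : Real.sqrt (n * T) ^ 2 = n * T := Real.sq_sqrt (by positivity)
    rw [hlam, div_pow, mul_pow, mul_pow, div_pow, mul_pow, mul_pow, h2, hRsq, hN]
    field_simp
  obtain ⟨hl1, hsup⟩ := deterministic hn hT Xt βstar (W ω) lam hlam0 b s hs hβs α hα hd ho
    hnoise hb
  have hsup' : ∀ j, 1 / Real.sqrt T * gnorm (b - βstar) j ≤
      2 * Real.sqrt 2 * mcConst α * σ / Real.sqrt n * R := by
    intro j
    have h1 := mul_le_mul_of_nonneg_left (hsup j) (show 0 ≤ 1 / Real.sqrt T by positivity)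
    refine h1.trans (le_of_eq ?_)
    rw [mul_left_comm, hS]
    ring
  constructor
  · intro p hp
    have h1 := norm2p_le (by omega) (b - βstar) (mcConst α) (16 * α / (α - 1)) s (lam * T) hc0
      (by positivity) (by positivity) (by positivity) hl1 hsup p hp
    have h2 := mul_le_mul_of_nonneg_left h1 (show 0 ≤ 1 / Real.sqrt T by positivity)
    refine h2.trans (le_of_eq ?_)
    rw [mul_left_comm, hS, mcConstP]
    ring
  · intro hmin
    ext j
    simp only [Finset.mem_filter, Finset.mem_univ, true_and]
    have hsTi : 0 ≤ 1 / Real.sqrt T := by positivity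
    constructor
    · intro hj h0
      have h1 := gnorm_add_le (b - βstar) βstar j
      rw [sub_add_cancel, h0, add_zero] at h1
      have h2 := mul_le_mul_of_nonneg_left h1 hsTi
      linarith [hsup' j]
    · intro hj
      have h1 := gnorm_add_le b (-(b - βstar)) j
      rw [gnorm_neg, show b + -(b - βstar) = βstar by abel] at h1
      have h2 := mul_le_mul_of_nonneg_left h1 hsTi
      have h3 := hmin j hj
      have h4 : 4 * Real.sqrt 2 * mcConst α * σ / Real.sqrt n * R =
        2 * (2 * Real.sqrt 2 * mcConst α * σ / Real.sqrt n * R) := by ring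
      linarith [hsup' j]

end MultiTask
end
end

section
/- Let s ≤ M/2 and let part (b) of Assumption SPD hold: ‖XΔ‖² ≤ κ₂²·n·‖Δ‖² for every Δ ∈ ℝ^{MT}∖{0} with M(Δ) ≤ 2s. Fix 1 ≤ p ≤ ∞ and let ψ_{n,p} = (σ/κ₂)·(s^{1/p}/√n)·(1 + log(eM/s)/T)^{1/2} (with s^{1/∞} = 1). Then there exist positive constants b̄ and c̄, depending only on the loss ℓ and on p, such that inf over all estimators τ (measurable functions of the observation y, with values in ℝ^{MT}) of sup over β* ∈ GS(s,M,T) of E ℓ( b̄ · ψ_{n,p}^{-1} · (1/√T)·‖τ − β*‖_{2,p} ) is at least c̄. -/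
/-! The bound comes from two families of `s`-sparse vectors, both indexed by words `w : I → Q`.

If `T` dominates `log (eM/s)`, the support is fixed and each of the `sT` entries on it is `0` or
`a`, with `a` of order `σ / (κ₂ √n)` (`failsAt_dense`). Otherwise `s` disjoint blocks of `⌊M/s⌋`
variables each contain a single nonzero entry, at an unknown place, of size of order
`σ √(log ⌊M/s⌋) / (κ₂ √n)` (`failsAt_sparse`). Changing one letter of the word changes `β` by a
`2`-sparse vector, so the restricted eigenvalue bound keeps the second moment of the Gaussian
likelihood ratio at most `√|Q|` (`chiSqLe_obsLaw`).

`exists_many_errors` turns this into a lower bound. The events that letter `i` is decoded as `l` are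
disjoint in `l`, so by the change of measure `ChiSqLe.real_le` a letter is decoded correctly with
probability at most `|Q|^{-1/4} ≤ 7/8`, on average over its values. Averaging over words and
applying a reverse Markov inequality, some word has a fixed proportion of its letters decoded
wrongly with probability at least `1/16`. Wrong letters are spread over a fixed proportion of the
`s` groups, and on that event the mixed norm is of order `s^{1/p}` times the error of one group, for
every `p ≥ 1` at once (`norm2p_ge`). Hence no packing set is needed, and the loss only enters
through one point `x₀` with `ℓ x₀ > 0`. -/


open MeasureTheory ProbabilityTheory Finset
open scoped ENNReal

noncomputable section

namespace MultiTask

/-! ### Second moments of likelihood ratios -/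

/-- `ν` is absolutely continuous with respect to `μ`, with a density whose second moment under
`μ` is at most `C`; equivalently the `χ²`-divergence of `ν` from `μ` is at most `C - 1`. -/
def ChiSqLe {Ω : Type*} [MeasurableSpace Ω] (μ ν : Measure Ω) (C : ℝ≥0∞) : Prop :=
  ∃ L : Ω → ℝ≥0∞, Measurable L ∧ ν = μ.withDensity L ∧ ∫⁻ x, L x ^ 2 ∂μ ≤ C

lemma lintegral_pi_prod {ι : Type*} [Fintype ι] {α : ι → Type*} [∀ i, MeasurableSpace (α i)]
    (μ : ∀ i, Measure (α i)) [∀ i, IsProbabilityMeasure (μ i)]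
    (f : ∀ i, α i → ℝ≥0∞) (hf : ∀ i, Measurable (f i)) :
    ∫⁻ x, ∏ i, f i (x i) ∂(Measure.pi μ) = ∏ i, ∫⁻ x, f i x ∂(μ i) := by
  have h := lintegral_prod_eq_prod_lintegral_of_indepFun (μ := Measure.pi μ) Finset.univ
    (fun i x => f i (x i)) (iIndepFun_pi (X := f) fun i => (hf i).aemeasurable)
    (fun i => (hf i).comp (measurable_pi_apply i))
  rw [h]
  refine Finset.prod_congr rfl fun i _ => ?_
  exact (measurePreserving_eval μ i).lintegral_comp (hf i)

/-- The second-moment bound tensorizes: the density of a product measure is the product of the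
densities, so the bounds multiply. -/
lemma ChiSqLe.pi {ι : Type*} [Fintype ι] {α : ι → Type*} [∀ i, MeasurableSpace (α i)]
    {μ ν : ∀ i, Measure (α i)} [∀ i, IsProbabilityMeasure (μ i)]
    [∀ i, IsProbabilityMeasure (ν i)]
    {C : ι → ℝ≥0∞} (h : ∀ i, ChiSqLe (μ i) (ν i) (C i)) :
    ChiSqLe (Measure.pi μ) (Measure.pi ν) (∏ i, C i) := by
  choose L hL hν hC using h
  have hmeas : Measurable fun x : ∀ i, α i => ∏ i, L i (x i) :=
    Finset.measurable_fun_prod _ fun i _ => (hL i).comp (measurable_pi_apply i)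
  refine ⟨fun x => ∏ i, L i (x i), hmeas, ?_, ?_⟩
  · refine Measure.pi_eq fun s hs => ?_
    rw [withDensity_apply _ (MeasurableSet.univ_pi hs),
      ← lintegral_indicator (MeasurableSet.univ_pi hs)]
    have h1 : ∀ x : ∀ i, α i, (Set.univ.pi s).indicator (fun x => ∏ i, L i (x i)) x
        = ∏ i, (s i).indicator (L i) (x i) := by
      intro x
      by_cases hx : x ∈ Set.univ.pi s
      · rw [Set.indicator_of_mem hx]
        refine Finset.prod_congr rfl fun i _ => ?_
        rw [Set.indicator_of_mem (hx i (Set.mem_univ i))]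
      · rw [Set.indicator_of_notMem hx]
        simp only [Set.mem_pi, Set.mem_univ, forall_const, not_forall] at hx
        obtain ⟨i, hi⟩ := hx
        exact (Finset.prod_eq_zero (Finset.mem_univ i) (Set.indicator_of_notMem hi _)).symm
    simp_rw [h1]
    rw [lintegral_pi_prod μ _ fun i => (hL i).indicator (hs i)]
    refine Finset.prod_congr rfl fun i _ => ?_
    rw [lintegral_indicator (hs i), hν i, withDensity_apply _ (hs i)]
  · simp_rw [← Finset.prod_pow]
    rw [lintegral_pi_prod μ (fun i x => L i x ^ 2) fun i => (hL i).pow_const 2]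
    exact Finset.prod_le_prod' fun i _ => hC i

/-- Two Gaussian laws with the same variance: the density ratio is the exponential tilt, and its
second moment is `exp ((m' - m)² / v)`. -/
lemma chiSqLe_gaussian (m m' : ℝ) (v : NNReal) (hv : v ≠ 0) :
    ChiSqLe (gaussianReal m v) (gaussianReal m' v)
      (ENNReal.ofReal (Real.exp ((m' - m) ^ 2 / v))) := by
  have hv' : (v : ℝ) ≠ 0 := by exact_mod_cast hv
  set L : ℝ → ℝ := fun x => Real.exp (((m' - m) * (x - m) - (m' - m) ^ 2 / 2) / v) with hLdef
  have hLm : Measurable fun x => ENNReal.ofReal (L x) := by fun_prop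
  have key1 : ∀ x, gaussianPDFReal m v x * L x = gaussianPDFReal m' v x := by
    intro x
    simp only [gaussianPDFReal, hLdef, mul_assoc, ← Real.exp_add]
    congr 3
    field_simp
    ring
  -- squaring the tilt shifts the mean twice as far, up to the normalizing factor
  have key2 : ∀ x, gaussianPDFReal m v x * L x ^ 2
      = Real.exp ((m' - m) ^ 2 / v) * gaussianPDFReal (m + 2 * (m' - m)) v x := by
    intro x
    simp only [gaussianPDFReal, hLdef, ← Real.exp_nat_mul]
    rw [mul_assoc, ← Real.exp_add, mul_left_comm, ← Real.exp_add]
    congr 2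
    push_cast
    field_simp
    ring
  refine ⟨fun x => ENNReal.ofReal (L x), hLm, ?_, ?_⟩
  · rw [gaussianReal_of_var_ne_zero m hv, gaussianReal_of_var_ne_zero m' hv,
      ← withDensity_mul _ (measurable_gaussianPDF m v) hLm]
    congr 1
    ext x
    rw [Pi.mul_apply, gaussianPDF, gaussianPDF,
      ← ENNReal.ofReal_mul (gaussianPDFReal_nonneg _ _ _), key1]
  · rw [gaussianReal_of_var_ne_zero m hv,
      lintegral_withDensity_eq_lintegral_mul _ (measurable_gaussianPDF m v) (hLm.pow_const 2)]
    have : ∀ x, (gaussianPDF m v * fun x => ENNReal.ofReal (L x) ^ 2) x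
        = ENNReal.ofReal (Real.exp ((m' - m) ^ 2 / v))
          * gaussianPDF (m + 2 * (m' - m)) v x := by
      intro x
      rw [Pi.mul_apply, gaussianPDF, gaussianPDF, ← ENNReal.ofReal_pow (Real.exp_pos _).le,
        ← ENNReal.ofReal_mul (gaussianPDFReal_nonneg _ _ _), key2,
        ENNReal.ofReal_mul (Real.exp_pos _).le]
    simp_rw [this]
    rw [lintegral_const_mul _ (measurable_gaussianPDF _ _), lintegral_gaussianPDF_eq_one _ hv,
      mul_one]

/-- Change of measure for events: `ν A = ∫_A L dμ`, and `L ≤ (t + L² / t) / 2` pointwise. -/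
lemma ChiSqLe.real_le {Ω : Type*} [MeasurableSpace Ω] {μ ν : Measure Ω}
    [IsProbabilityMeasure μ] [IsProbabilityMeasure ν] {C : ℝ} (hC : 0 ≤ C)
    (h : ChiSqLe μ ν (ENNReal.ofReal C)) {t : ℝ} (ht : 0 < t) {A : Set Ω}
    (hA : MeasurableSet A) :
    ν.real A ≤ (t * μ.real A + C / t) / 2 := by
  obtain ⟨L, hL, hν, hLC⟩ := h
  have hpt : ∀ a : ℝ≥0∞, 2 * a ≤ ENNReal.ofReal t + ENNReal.ofReal (1 / t) * a ^ 2 := by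
    intro a
    by_cases ha : a = ⊤
    · subst ha
      have : ENNReal.ofReal (1 / t) ≠ 0 := by
        rw [Ne, ENNReal.ofReal_eq_zero, not_le]; positivity
      simp only [ne_eq, OfNat.ofNat_ne_zero, not_false_eq_true, ENNReal.top_pow,
        ENNReal.mul_top this, add_top, le_top]
    · lift a to NNReal using ha
      rw [← ENNReal.ofReal_coe_nnreal, show (2 : ℝ≥0∞) = ENNReal.ofReal 2 by simp,
        ← ENNReal.ofReal_mul (by norm_num), ← ENNReal.ofReal_pow a.coe_nonneg,
        ← ENNReal.ofReal_mul (by positivity), ← ENNReal.ofReal_add ht.le (by positivity)]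
      apply ENNReal.ofReal_le_ofReal
      have : t + 1 / t * (a : ℝ) ^ 2 - 2 * a = (t - a) ^ 2 / t := by field_simp; ring
      have : 0 ≤ (t - a : ℝ) ^ 2 / t := by positivity
      linarith
  have h1 : 2 * ν A ≤ ENNReal.ofReal t * μ A + ENNReal.ofReal (1 / t) * ENNReal.ofReal C := by
    calc 2 * ν A = ∫⁻ x in A, 2 * L x ∂μ := by
          rw [lintegral_const_mul _ hL, hν, withDensity_apply _ hA]
      _ ≤ ∫⁻ x in A, (ENNReal.ofReal t + ENNReal.ofReal (1 / t) * L x ^ 2) ∂μ :=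
          lintegral_mono fun x => hpt _
      _ = ENNReal.ofReal t * μ A + ENNReal.ofReal (1 / t) * ∫⁻ x in A, L x ^ 2 ∂μ := by
          rw [lintegral_add_left measurable_const, lintegral_const_mul _ (hL.pow_const 2)]
          simp
      _ ≤ _ := by
          gcongr
          exact (setLIntegral_le_lintegral _ _).trans hLC
  have h2 := ENNReal.toReal_mono (by finiteness) h1
  rw [ENNReal.toReal_add (by finiteness) (by finiteness), ENNReal.toReal_mul, ENNReal.toReal_mul,
    ENNReal.toReal_mul, ENNReal.toReal_ofReal ht.le, ENNReal.toReal_ofReal hC,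
    ENNReal.toReal_ofReal (by positivity)] at h2
  simp only [ENNReal.toReal_ofNat] at h2
  rw [Measure.real, Measure.real, le_div_iff₀ two_pos]
  calc _ = 2 * (ν A).toReal := by ring
    _ ≤ _ := h2
    _ = _ := by ring

/-! ### From one letter to many errors -/

lemma ChiSqLe.mono {Ω : Type*} [MeasurableSpace Ω] {μ ν : Measure Ω} {C D : ℝ≥0∞}
    (h : ChiSqLe μ ν C) (hCD : C ≤ D) : ChiSqLe μ ν D := by
  obtain ⟨L, h1, h2, h3⟩ := h
  exact ⟨L, h1, h2, h3.trans hCD⟩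

/-- Resampling one letter of a word permutes the pairs (word, letter), so it preserves averages
over words. -/
lemma sum_update {I Q : Type*} [Fintype I] [DecidableEq I] [Fintype Q] (i : I)
    (F : (I → Q) → ℝ) :
    ∑ w : I → Q, ∑ l : Q, F (Function.update w i l) = Fintype.card Q * ∑ w, F w := by
  classical
  have hinv : Function.Involutive
      (fun x : (I → Q) × Q => (Function.update x.1 i x.2, x.1 i)) := by
    rintro ⟨w, l⟩
    simp
  have h := Equiv.sum_comp hinv.toPerm (fun x : (I → Q) × Q => F x.1)
  simp only [Function.Involutive.coe_toPerm, Fintype.sum_prod_type] at h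
  rw [h, Finset.mul_sum]
  simp

/-- Letter-by-letter lower bound. The laws `P w` are indexed by words `w : I → Q`, and changing one
letter changes the law only by a bounded `χ²`-amount. If `A i l` is the event that position `i` is
decoded as `l`, then under some word at least `1/16` of the positions are decoded wrongly with
probability at least `1/16`. -/
lemma exists_many_errors {I Q Ω : Type*} [Fintype I] [DecidableEq I] [Nonempty I] [Fintype Q]
    [MeasurableSpace Ω] (hQ : 2 ≤ Fintype.card Q) (P : (I → Q) → Measure Ω)
    [∀ w, IsProbabilityMeasure (P w)] (A : I → Q → Set Ω)
    (hA : ∀ i l, MeasurableSet (A i l)) (hdisj : ∀ i l l', l ≠ l' → Disjoint (A i l) (A i l'))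
    (hP : ∀ w i l, ChiSqLe (P w) (P (Function.update w i l))
      (ENNReal.ofReal (Real.sqrt (Fintype.card Q)))) :
    ∃ w, ∃ S : Set Ω, MeasurableSet S ∧ 1 / 16 ≤ (P w).real S ∧
      ∀ ω ∈ S, ∃ B : Finset I, (∀ i ∈ B, ω ∉ A i (w i)) ∧
        (Fintype.card I : ℝ) / 16 ≤ B.card := by
  classical
  set q : ℝ := ((Fintype.card Q : ℕ) : ℝ) with hq
  have hq2 : (2 : ℝ) ≤ q := by rw [hq]; exact_mod_cast hQ
  have hN : (0 : ℝ) < Fintype.card I := by exact_mod_cast Fintype.card_pos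
  set u : ℝ := Real.sqrt (Real.sqrt q) with hu
  have hu2 : u ^ 2 = Real.sqrt q := Real.sq_sqrt (Real.sqrt_nonneg _)
  have hu4 : u ^ 4 = q := by
    rw [show u ^ 4 = (u ^ 2) ^ 2 by ring, hu2, Real.sq_sqrt (by linarith)]
  have hu_pos : 0 < u := Real.sqrt_pos.mpr (Real.sqrt_pos.mpr (by linarith))
  have hu87 : 8 / 7 ≤ u := by
    by_contra! hlt
    have : u ^ 4 < (8 / 7 : ℝ) ^ 4 := by gcongr
    norm_num at this
    linarith
  -- for one position, the success probability averaged over its letter is at most `7/8`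
  have step1 : ∀ w i, ∑ l, (P (Function.update w i l)).real (A i l) ≤ 7 / 8 * q := by
    intro w i
    have hsum : ∑ l, (P w).real (A i l) ≤ 1 := by
      rw [← measureReal_biUnion_finset (fun l _ l' _ h => hdisj i l l' h)
        (fun l _ => hA i l)]
      exact measureReal_le_one
    calc ∑ l, (P (Function.update w i l)).real (A i l)
        ≤ ∑ l, (u ^ 3 * (P w).real (A i l) + Real.sqrt q / u ^ 3) / 2 :=
          Finset.sum_le_sum fun l _ =>
            (hP w i l).real_le (Real.sqrt_nonneg _) (by positivity) (hA i l)
      _ = (u ^ 3 * ∑ l, (P w).real (A i l) + q * (Real.sqrt q / u ^ 3)) / 2 := by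
          rw [← Finset.sum_div, Finset.sum_add_distrib, ← Finset.mul_sum]
          simp [hq]
      _ ≤ (u ^ 3 * 1 + q * (Real.sqrt q / u ^ 3)) / 2 := by gcongr
      _ = u ^ 3 := by rw [← hu2, ← hu4]; field_simp; ring
      _ ≤ 7 / 8 * q := by
          rw [← hu4]
          nlinarith [pow_pos hu_pos 3]
  have step2 : ∀ i, ∑ w, (P w).real (A i (w i)) ≤ 7 / 8 * Fintype.card (I → Q) := by
    intro i
    have h := sum_update i (fun w => (P w).real (A i (w i)))
    simp only [Function.update_self] at h
    have h2 : ∑ w : I → Q, ∑ l, (P (Function.update w i l)).real (A i l)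
        ≤ ∑ _w : I → Q, 7 / 8 * q := Finset.sum_le_sum fun w _ => step1 w i
    rw [h, Finset.sum_const, Finset.card_univ, nsmul_eq_mul] at h2
    refine le_of_mul_le_mul_left ?_ (show 0 < q by linarith)
    linarith
  have hne : Nonempty Q := Fintype.card_pos_iff.mp (by omega)
  have step3 : ∃ w, ∑ i, (P w).real (A i (w i)) ≤ 7 / 8 * Fintype.card I := by
    have : ∑ w, ∑ i, (P w).real (A i (w i)) ≤ ∑ _w : I → Q, 7 / 8 * (Fintype.card I : ℝ) := by
      rw [Finset.sum_comm]
      refine (Finset.sum_le_sum fun i _ => step2 i).trans (le_of_eq ?_)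
      simp only [Finset.sum_const, Finset.card_univ, nsmul_eq_mul]
      ring
    obtain ⟨w, -, hw⟩ := Finset.exists_le_of_sum_le Finset.univ_nonempty this
    exact ⟨w, hw⟩
  obtain ⟨w, hw⟩ := step3
  set E : Ω → ℝ := fun ω => ∑ i, (A i (w i))ᶜ.indicator (fun _ => (1 : ℝ)) ω with hE
  have hEm : Measurable E :=
    Finset.measurable_fun_sum _ fun i _ => measurable_const.indicator (hA i _).compl
  have hEcard : ∀ ω, E ω = (Finset.univ.filter fun i => ω ∉ A i (w i)).card := by
    intro ω
    simp [hE, Set.indicator_apply, Finset.sum_ite]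
  set S : Set Ω := {ω | (Fintype.card I : ℝ) / 16 ≤ E ω} with hS
  have hSm : MeasurableSet S := measurableSet_le measurable_const hEm
  refine ⟨w, S, hSm, ?_, fun ω hω => ⟨Finset.univ.filter fun i => ω ∉ A i (w i), by simp, ?_⟩⟩
  · have hint : ∀ i, Integrable ((A i (w i))ᶜ.indicator (fun _ => (1 : ℝ))) (P w) := fun i =>
      (integrable_const _).indicator (hA i _).compl
    have hEint : ∫ ω, E ω ∂(P w) = ∑ i, (1 - (P w).real (A i (w i))) := by
      rw [hE, integral_finsetSum _ fun i _ => hint i]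
      refine Finset.sum_congr rfl fun i _ => ?_
      rw [integral_indicator_const _ (hA i _).compl, probReal_compl_eq_one_sub (hA i _)]
      simp
    have hlow : (Fintype.card I : ℝ) / 8 ≤ ∫ ω, E ω ∂(P w) := by
      rw [hEint, Finset.sum_sub_distrib]
      simp only [Finset.sum_const, Finset.card_univ, nsmul_eq_mul]
      linarith
    -- reverse Markov inequality for a count bounded by the number of positions
    have hup : ∫ ω, E ω ∂(P w)
        ≤ ∫ ω, (S.indicator (fun _ => (Fintype.card I : ℝ)) ω + (Fintype.card I : ℝ) / 16)
          ∂(P w) := by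
      refine integral_mono (integrable_finsetSum _ fun i _ => hint i)
        (((integrable_const _).indicator hSm).add (integrable_const _)) fun ω => ?_
      by_cases h : ω ∈ S
      · simp only [Set.indicator_of_mem h]
        have : E ω ≤ Fintype.card I := by
          rw [hEcard]
          exact_mod_cast Finset.card_le_univ _
        linarith
      · simp only [Set.indicator_of_notMem h]
        simp only [hS, Set.mem_ofPred_eq, not_le] at h
        linarith
    rw [integral_add ((integrable_const _).indicator hSm) (integrable_const _),
      integral_indicator_const _ hSm, integral_const] at hup
    simp only [smul_eq_mul, probReal_univ, one_mul] at hup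
    have : (Fintype.card I : ℝ) * (1 / 16) ≤ Fintype.card I * (P w).real S := by linarith
    exact le_of_mul_le_mul_left this hN
  · rw [← hEcard]
    exact hω

/-! ### The regression model and the mixed norm -/

/-- Law of the observation `y = Xβ + W` when the noise has variance `v`. -/
def obsLaw {n M T : ℕ} (Xt : Fin T → Matrix (Fin n) (Fin M) ℝ) (v : NNReal)
    (β : Fin T → Fin M → ℝ) : Measure (Fin T → Fin n → ℝ) :=
  Measure.pi fun t => Measure.pi fun i => gaussianReal ((Xt t).mulVec (β t) i) v

instance {n M T : ℕ} (Xt : Fin T → Matrix (Fin n) (Fin M) ℝ) (v : NNReal)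
    (β : Fin T → Fin M → ℝ) : IsProbabilityMeasure (obsLaw Xt v β) := by
  unfold obsLaw; infer_instance

lemma map_noise {n M T : ℕ} (Xt : Fin T → Matrix (Fin n) (Fin M) ℝ) (v : NNReal)
    (β : Fin T → Fin M → ℝ) :
    (Measure.pi fun _ : Fin T => Measure.pi fun _ : Fin n => gaussianReal 0 v).map
      (fun w t => (Xt t).mulVec (β t) + w t) = obsLaw Xt v β := by
  have hrow : ∀ t, (Measure.pi fun _ : Fin n => gaussianReal 0 v).map
      (fun u => (Xt t).mulVec (β t) + u)
      = Measure.pi fun i => gaussianReal ((Xt t).mulVec (β t) i) v := by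
    intro t
    have h := Measure.pi_map_pi (μ := fun _ : Fin n => gaussianReal 0 v)
      (f := fun i x => (Xt t).mulVec (β t) i + x)
      (hμ := fun i => by rw [gaussianReal_map_const_add]; infer_instance)
      (fun i => (measurable_const_add _).aemeasurable)
    simp only [gaussianReal_map_const_add, zero_add] at h
    exact h
  have h := Measure.pi_map_pi
    (μ := fun _ : Fin T => Measure.pi fun _ : Fin n => gaussianReal 0 v)
    (f := fun t u => (Xt t).mulVec (β t) + u)
    (hμ := fun t => by rw [hrow]; infer_instance)
    (fun t => (measurable_const_add _).aemeasurable)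
  simp only [hrow] at h
  exact h

lemma chiSqLe_obsLaw {n M T : ℕ} (Xt : Fin T → Matrix (Fin n) (Fin M) ℝ) {v : NNReal}
    (hv : v ≠ 0) (β β' : Fin T → Fin M → ℝ) :
    ChiSqLe (obsLaw Xt v β) (obsLaw Xt v β')
      (ENNReal.ofReal (Real.exp (XnormSq Xt (β' - β) / v))) := by
  have h := ChiSqLe.pi fun t => ChiSqLe.pi fun i =>
    chiSqLe_gaussian ((Xt t).mulVec (β t) i) ((Xt t).mulVec (β' t) i) v hv
  refine h.mono (le_of_eq ?_)
  simp_rw [← ENNReal.ofReal_prod_of_nonneg fun _ _ => (Real.exp_pos _).le, ← Real.exp_sum]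
  rw [← ENNReal.ofReal_prod_of_nonneg fun _ _ => (Real.exp_pos _).le, ← Real.exp_sum]
  congr 2
  simp only [XnormSq, Finset.sum_div, Pi.sub_apply, Matrix.mulVec_sub]

lemma abs_le_gnorm {M T : ℕ} (β : Fin T → Fin M → ℝ) (t : Fin T) (j : Fin M) :
    |β t j| ≤ gnorm β j := by
  apply Real.le_sqrt_of_sq_le
  rw [sq_abs]
  exact Finset.single_le_sum (f := fun t => β t j ^ 2) (fun _ _ => sq_nonneg _)
    (Finset.mem_univ t)

lemma card_support_le {M T : ℕ} (β : Fin T → Fin M → ℝ) (B : Finset (Fin M))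
    (h : ∀ t, ∀ j ∉ B, β t j = 0) :
    (Finset.univ.filter (fun j => gnorm β j ≠ 0)).card ≤ B.card := by
  refine Finset.card_le_card fun j hj => ?_
  by_contra hjB
  refine (Finset.mem_filter.mp hj).2 ?_
  simp [gnorm, h _ j hjB]

/-- If at least `s / 32` groups have norm at least `g`, then the mixed norm is at least
`s^{1/p} g / 32`, uniformly in `p ≥ 1`. -/
lemma norm2p_ge {M T : ℕ} {p : ℝ≥0∞} (hp : 1 ≤ p) (β : Fin T → Fin M → ℝ) {s : ℕ} (hs : 1 ≤ s)
    (B : Finset (Fin M)) (hB : (s : ℝ) / 32 ≤ B.card) {g : ℝ} (hg : 0 ≤ g)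
    (h : ∀ j ∈ B, g ≤ gnorm β j) : rpowInv s p / 32 * g ≤ norm2p p β := by
  have hs' : (1 : ℝ) ≤ s := by exact_mod_cast hs
  have hBpos : 0 < B.card := by
    by_contra! h0
    have : B.card = 0 := by omega
    rw [this] at hB
    norm_num at hB
    linarith
  unfold rpowInv norm2p
  split_ifs with hpt
  · obtain ⟨j, hj⟩ := Finset.card_pos.mp hBpos
    have h1 : gnorm β j ≤ ⨆ j, gnorm β j := le_ciSup (Set.finite_range _).bddAbove j
    linarith [h j hj]
  · have hp1 : 1 ≤ p.toReal := by
      rw [← ENNReal.toReal_one]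
      exact ENNReal.toReal_mono hpt hp
    have hp0 : 0 < p.toReal := by linarith
    have h32 : ((1 : ℝ) / 32) ≤ (1 / 32) ^ (1 / p.toReal) := by
      conv_lhs => rw [← Real.rpow_one (1 / 32)]
      exact Real.rpow_le_rpow_of_exponent_ge (by norm_num) (by norm_num)
        ((div_le_one hp0).mpr hp1)
    calc (s : ℝ) ^ (1 / p.toReal) / 32 * g
        = (s : ℝ) ^ (1 / p.toReal) * (1 / 32) * g := by ring
      _ ≤ (s : ℝ) ^ (1 / p.toReal) * (1 / 32) ^ (1 / p.toReal) * g := by gcongr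
      _ = ((s : ℝ) / 32) ^ (1 / p.toReal) * (g ^ p.toReal) ^ (1 / p.toReal) := by
          rw [← Real.mul_rpow (by positivity) (by positivity), ← Real.rpow_mul hg,
            mul_one_div_cancel hp0.ne', Real.rpow_one]
          congr 2
          ring
      _ = ((s : ℝ) / 32 * g ^ p.toReal) ^ (1 / p.toReal) := by
          rw [Real.mul_rpow (by positivity) (by positivity)]
      _ ≤ (∑ j, gnorm β j ^ p.toReal) ^ (1 / p.toReal) := by
          refine Real.rpow_le_rpow (by positivity) ?_ (by positivity)
          calc (s : ℝ) / 32 * g ^ p.toReal ≤ B.card * g ^ p.toReal := by gcongr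
            _ = ∑ j ∈ B, g ^ p.toReal := by simp
            _ ≤ ∑ j ∈ B, gnorm β j ^ p.toReal :=
                Finset.sum_le_sum fun j hj => Real.rpow_le_rpow hg (h j hj) hp0.le
            _ ≤ _ := Finset.sum_le_sum_of_subset_of_nonneg (Finset.subset_univ _)
                fun j _ _ => Real.rpow_nonneg (gnorm_nonneg _ _) _

/-- Upper restricted eigenvalue condition on `2s`-sparse vectors. -/
def UpperRE {n M T : ℕ} (Xt : Fin T → Matrix (Fin n) (Fin M) ℝ) (s : ℕ) (κ2 : ℝ) : Prop :=
  ∀ Δ : Fin T → Fin M → ℝ, Δ ≠ 0 →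
    (Finset.univ.filter (fun j => gnorm Δ j ≠ 0)).card ≤ 2 * s →
    XnormSq Xt Δ ≤ κ2 ^ 2 * n * ∑ t, ∑ j, (Δ t j) ^ 2

lemma UpperRE.le {n M T : ℕ} {Xt : Fin T → Matrix (Fin n) (Fin M) ℝ} {s : ℕ} {κ2 : ℝ}
    (h : UpperRE Xt s κ2) (Δ : Fin T → Fin M → ℝ) (B : Finset (Fin M)) (hB : B.card ≤ 2 * s)
    (h0 : ∀ t, ∀ j ∉ B, Δ t j = 0) :
    XnormSq Xt Δ ≤ κ2 ^ 2 * n * ∑ t, ∑ j, (Δ t j) ^ 2 := by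
  by_cases hΔ : Δ = 0
  · subst hΔ
    simp [XnormSq]
  · exact h Δ hΔ ((card_support_le Δ B h0).trans hB)

/-- The estimator `τ` fails at scale `g`: for some `s`-sparse `β`, with probability at least
`1/16`, at least `s / 32` groups of `β` are estimated with error at least `g`. -/
def FailsAt {n M T : ℕ} (Xt : Fin T → Matrix (Fin n) (Fin M) ℝ) (v : NNReal) (s : ℕ)
    (τ : (Fin T → Fin n → ℝ) → (Fin T → Fin M → ℝ)) (g : ℝ) : Prop :=
  ∃ β : Fin T → Fin M → ℝ, (Finset.univ.filter (fun j => gnorm β j ≠ 0)).card ≤ s ∧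
    ∃ S : Set (Fin T → Fin n → ℝ), MeasurableSet S ∧ 1 / 16 ≤ (obsLaw Xt v β).real S ∧
      ∀ y ∈ S, ∃ B : Finset (Fin M), (s : ℝ) / 32 ≤ B.card ∧ ∀ j ∈ B, g ≤ gnorm (τ y - β) j

/-! ### The two families of hypotheses -/

/-- A common support and unknown entries in `{0, a}`: each of the `sT` entries is hard to decode,
which costs `√T` per group. -/
lemma failsAt_dense {n M T s : ℕ} (hT : 1 ≤ T) (hn : 1 ≤ n) (hs : 1 ≤ s) (hsM : 2 * s ≤ M)
    {σ κ2 : ℝ} (hσ : 0 < σ) (hκ : 0 < κ2) {Xt : Fin T → Matrix (Fin n) (Fin M) ℝ}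
    (hX : UpperRE Xt s κ2) {τ : (Fin T → Fin n → ℝ) → (Fin T → Fin M → ℝ)} (hτ : Measurable τ) :
    FailsAt Xt (σ ^ 2).toNNReal s τ (σ / (κ2 * Real.sqrt n) / 4 * Real.sqrt (T / 32)) := by
  classical
  have hn' : (0 : ℝ) < n := by exact_mod_cast hn
  have hT' : (0 : ℝ) < T := by exact_mod_cast hT
  have hs' : (0 : ℝ) < s := by exact_mod_cast hs
  have hv : (σ ^ 2).toNNReal ≠ 0 := by
    rw [Ne, Real.toNNReal_eq_zero, not_le]; positivity
  have hvc : (((σ ^ 2).toNNReal : NNReal) : ℝ) = σ ^ 2 := Real.coe_toNNReal _ (by positivity)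
  set a : ℝ := σ / (κ2 * Real.sqrt n) / 2 with ha
  have ha0 : 0 < a := by positivity
  have ha2 : κ2 ^ 2 * n * a ^ 2 = σ ^ 2 / 4 := by
    rw [ha, div_pow, div_pow, mul_pow, Real.sq_sqrt hn'.le]
    field_simp
    norm_num
  have hle : s ≤ M := by omega
  let c : Fin s → Fin M := Fin.castLE hle
  have hc : Function.Injective c := Fin.castLE_injective hle
  let β : (Fin s × Fin T → Bool) → Fin T → Fin M → ℝ := fun w t j =>
    if h : j.val < s then (if w (⟨j, h⟩, t) then a else 0) else 0
  have hβc : ∀ w t j, β w t (c j) = if w (j, t) then a else 0 := by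
    intro w t j
    simp [β, c]
  have : Nonempty (Fin s × Fin T) := ⟨(⟨0, hs⟩, ⟨0, hT⟩)⟩
  have hP : ∀ w i l, ChiSqLe (obsLaw Xt (σ ^ 2).toNNReal (β w))
      (obsLaw Xt (σ ^ 2).toNNReal (β (Function.update w i l)))
      (ENNReal.ofReal (Real.sqrt (Fintype.card Bool))) := by
    rintro w ⟨j0, t0⟩ l
    refine (chiSqLe_obsLaw Xt hv _ _).mono (ENNReal.ofReal_le_ofReal ?_)
    set Δ := β (Function.update w (j0, t0) l) - β w with hΔ
    have hzero : ∀ t j, ¬(t = t0 ∧ j = c j0) → Δ t j = 0 := by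
      intro t j htj
      simp only [hΔ, Pi.sub_apply, β]
      by_cases h : j.val < s
      · have : ((⟨j, h⟩, t) : Fin s × Fin T) ≠ (j0, t0) := by
          intro he
          rw [Prod.mk.injEq] at he
          refine htj ⟨he.2, ?_⟩
          rw [← he.1]
          rfl
        simp [h, Function.update_of_ne this]
      · simp [h]
    have habs : (Δ t0 (c j0)) ^ 2 ≤ a ^ 2 := by
      simp only [hΔ, Pi.sub_apply, hβc]
      split_ifs <;> nlinarith
    have hsum : ∑ t, ∑ j, (Δ t j) ^ 2 ≤ a ^ 2 := by
      rw [Finset.sum_eq_single t0, Finset.sum_eq_single (c j0)]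
      · exact habs
      · intro j _ hj
        rw [hzero _ _ fun h => hj h.2]
        simp
      · simp
      · intro t _ ht
        exact Finset.sum_eq_zero fun j _ => by rw [hzero _ _ fun h => ht h.1]; simp
      · simp
    have hXΔ := hX.le Δ {c j0} (by simp; omega) fun t j hj =>
      hzero t j fun h => hj (by simp [h.2])
    have hbd : XnormSq Xt Δ / (σ ^ 2).toNNReal ≤ 1 / 4 := by
      rw [hvc, div_le_iff₀ (by positivity)]
      calc _ ≤ κ2 ^ 2 * n * ∑ t, ∑ j, (Δ t j) ^ 2 := hXΔ
        _ ≤ κ2 ^ 2 * n * a ^ 2 := by gcongr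
        _ = _ := by rw [ha2]; ring
    apply Real.le_sqrt_of_sq_le
    rw [← Real.exp_nat_mul]
    have hl2 := Real.log_two_gt_d9
    calc Real.exp ((2 : ℕ) * (XnormSq Xt Δ / (σ ^ 2).toNNReal)) ≤ Real.exp (Real.log 2) := by
          apply Real.exp_le_exp.mpr
          push_cast
          linarith
      _ = _ := by rw [Real.exp_log two_pos]; simp
  obtain ⟨w, S, hS, hPS, hSB⟩ := exists_many_errors (by simp)
    (fun w => obsLaw Xt (σ ^ 2).toNNReal (β w))
    (fun i l => {y | |τ y i.2 (c i.1) - if l then a else 0| < a / 2})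
    (fun i l => by
      have : Measurable fun y => τ y i.2 (c i.1) :=
        (measurable_pi_apply (c i.1)).comp ((measurable_pi_apply i.2).comp hτ)
      exact measurableSet_lt (this.sub_const _).abs measurable_const)
    (fun i l l' hl => by
      rw [Set.disjoint_left]
      intro y hy hy'
      simp only [Set.mem_ofPred_eq, abs_lt] at hy hy'
      cases l <;> cases l' <;> simp at hl hy hy' <;> linarith [hy.1, hy.2, hy'.1, hy'.2])
    hP
  refine ⟨β w, ?_, S, hS, hPS, fun y hy => ?_⟩
  · refine (card_support_le (β w) (Finset.univ.map ⟨c, hc⟩) fun t j hj => ?_).trans (by simp)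
    have : ¬ j.val < s := by
      intro h
      exact hj (Finset.mem_map.mpr ⟨⟨j, h⟩, Finset.mem_univ _, rfl⟩)
    simp [β, this]
  · obtain ⟨B, hB, hBcard⟩ := hSB y hy
    simp only [Fintype.card_prod, Fintype.card_fin, Nat.cast_mul] at hBcard
    let e : Fin s → Finset (Fin T) := fun j => Finset.univ.filter fun t => (j, t) ∈ B
    let G : Finset (Fin s) := Finset.univ.filter fun j => (T : ℝ) / 32 ≤ (e j).card
    have hBe : (B.card : ℝ) = ∑ j, ((e j).card : ℝ) := by
      have : B.card = ∑ j, (e j).card := by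
        rw [Finset.card_eq_sum_card_fiberwise (f := Prod.fst) (t := Finset.univ)
          (fun x _ => Finset.mem_coe.mpr (Finset.mem_univ _))]
        refine Finset.sum_congr rfl fun j _ => ?_
        rw [← Finset.card_map (⟨fun t => (j, t), fun _ _ h => (Prod.mk.inj h).2⟩ :
          Fin T ↪ Fin s × Fin T)]
        refine congrArg Finset.card ?_
        ext ⟨j', t⟩
        simp only [Finset.mem_filter, Finset.mem_map, e, Finset.mem_univ, true_and]
        constructor
        · rintro ⟨h, rfl⟩
          exact ⟨t, h, rfl⟩
        · rintro ⟨t', h, h2⟩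
          obtain ⟨rfl, rfl⟩ := Prod.mk.inj h2
          exact ⟨h, rfl⟩
      rw [this]
      push_cast
      rfl
    -- a group contributes at most `T` errors, and fewer than `T / 32` if it is outside `G`
    have hle : ∑ j, ((e j).card : ℝ) ≤ ∑ j, ((if j ∈ G then (T : ℝ) else 0) + T / 32) := by
      refine Finset.sum_le_sum fun j _ => ?_
      split_ifs with hj
      · have : ((e j).card : ℝ) ≤ T := by
          exact_mod_cast (Finset.card_le_univ (e j)).trans (by simp)
        linarith
      · simp only [G, Finset.mem_filter, Finset.mem_univ, true_and, not_le] at hj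
        linarith
    have hGcard : (s : ℝ) / 32 ≤ G.card := by
      rw [Finset.sum_add_distrib, Finset.sum_ite_mem] at hle
      simp only [Finset.univ_inter, Finset.sum_const, nsmul_eq_mul, Finset.card_univ,
        Fintype.card_fin] at hle
      refine le_of_mul_le_mul_right ?_ hT'
      linarith
    refine ⟨G.map ⟨c, hc⟩, by simpa using hGcard, fun j hj => ?_⟩
    obtain ⟨i, hi, rfl⟩ := Finset.mem_map.mp hj
    have hi' : (T : ℝ) / 32 ≤ (e i).card := (Finset.mem_filter.mp hi).2
    apply Real.le_sqrt_of_sq_le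
    rw [mul_pow, Real.sq_sqrt (by positivity)]
    calc (σ / (κ2 * Real.sqrt n) / 4) ^ 2 * (T / 32) = (a / 2) ^ 2 * (T / 32) := by
          rw [ha]; ring
      _ ≤ (a / 2) ^ 2 * (e i).card := by gcongr
      _ = ∑ t ∈ e i, (a / 2) ^ 2 := by rw [Finset.sum_const, nsmul_eq_mul, mul_comm]
      _ ≤ ∑ t ∈ e i, ((τ y - β w) t (c i)) ^ 2 := by
          refine Finset.sum_le_sum fun t ht => ?_
          have := hB (i, t) (Finset.mem_filter.mp ht).2
          simp only [Set.mem_ofPred_eq, not_lt] at this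
          rw [Pi.sub_apply, Pi.sub_apply, hβc, ← sq_abs (τ y t (c i) - _)]
          gcongr
      _ ≤ _ := Finset.sum_le_sum_of_subset_of_nonneg (Finset.subset_univ _)
          fun _ _ _ => sq_nonneg _

/-- One nonzero group in each of `s` disjoint blocks of `m` variables: locating it within its block
is a test between `m` hypotheses, which costs `√(log m)` per group. -/
lemma failsAt_sparse {n M T s m : ℕ} (hT : 1 ≤ T) (hn : 1 ≤ n) (hs : 1 ≤ s) (hm : 2 ≤ m)
    (hsM : s * m ≤ M)
    {σ κ2 : ℝ} (hσ : 0 < σ) (hκ : 0 < κ2) {Xt : Fin T → Matrix (Fin n) (Fin M) ℝ}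
    (hX : UpperRE Xt s κ2) {τ : (Fin T → Fin n → ℝ) → (Fin T → Fin M → ℝ)} (hτ : Measurable τ) :
    FailsAt Xt (σ ^ 2).toNNReal s τ (σ / (κ2 * Real.sqrt n) / 4 * Real.sqrt (Real.log m)) := by
  classical
  have hn' : (0 : ℝ) < n := by exact_mod_cast hn
  have hs' : (0 : ℝ) < s := by exact_mod_cast hs
  have hm' : (2 : ℝ) ≤ m := by exact_mod_cast hm
  have hlog : 0 < Real.log m := Real.log_pos (by linarith)
  have hv : (σ ^ 2).toNNReal ≠ 0 := by
    rw [Ne, Real.toNNReal_eq_zero, not_le]; positivity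
  have hvc : (((σ ^ 2).toNNReal : NNReal) : ℝ) = σ ^ 2 := Real.coe_toNNReal _ (by positivity)
  set a : ℝ := σ / (κ2 * Real.sqrt n) / 2 * Real.sqrt (Real.log m) with ha
  have ha0 : 0 < a := by positivity
  have ha2 : κ2 ^ 2 * n * a ^ 2 = σ ^ 2 / 4 * Real.log m := by
    rw [ha, mul_pow, Real.sq_sqrt hlog.le, div_pow, div_pow, mul_pow, Real.sq_sqrt hn'.le]
    field_simp
    norm_num
  let c : Fin s × Fin m → Fin M := fun x => Fin.castLE hsM (finProdFinEquiv x)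
  have hc : Function.Injective c :=
    (Fin.castLE_injective hsM).comp finProdFinEquiv.injective
  let t0 : Fin T := ⟨0, hT⟩
  let β : (Fin s → Fin m) → Fin T → Fin M → ℝ := fun w t j =>
    if t = t0 ∧ ∃ b, j = c (b, w b) then a else 0
  have hβc : ∀ w b l, β w t0 (c (b, l)) = if l = w b then a else 0 := by
    intro w b l
    have : (∃ b', c (b, l) = c (b', w b')) ↔ l = w b := by
      constructor
      · rintro ⟨b', h⟩
        have := hc h
        rw [Prod.mk.injEq] at this
        rw [this.2, this.1]
      · rintro rfl
        exact ⟨b, rfl⟩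
    simp [β, this]
  have : Nonempty (Fin s) := ⟨⟨0, hs⟩⟩
  have hP : ∀ w i l, ChiSqLe (obsLaw Xt (σ ^ 2).toNNReal (β w))
      (obsLaw Xt (σ ^ 2).toNNReal (β (Function.update w i l)))
      (ENNReal.ofReal (Real.sqrt (Fintype.card (Fin m)))) := by
    intro w b l
    refine (chiSqLe_obsLaw Xt hv _ _).mono (ENNReal.ofReal_le_ofReal ?_)
    set Δ := β (Function.update w b l) - β w with hΔ
    let B : Finset (Fin M) := {c (b, l), c (b, w b)}
    have hBcard : B.card ≤ 2 := Finset.card_le_two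
    have hzero : ∀ t j, ¬(t = t0 ∧ j ∈ B) → Δ t j = 0 := by
      intro t j htj
      have : (t = t0 ∧ ∃ b', j = c (b', Function.update w b l b')) ↔
          (t = t0 ∧ ∃ b', j = c (b', w b')) := by
        refine and_congr_right fun ht => ?_
        have hj : j ∉ B := fun h => htj ⟨ht, h⟩
        simp only [B, Finset.mem_insert, Finset.mem_singleton, not_or] at hj
        constructor <;> rintro ⟨b', hb'⟩ <;> refine ⟨b', ?_⟩ <;> by_cases h : b' = b
        · subst h; simp at hb'; exact absurd hb' hj.1
        · rwa [Function.update_of_ne h] at hb'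
        · subst h; exact absurd hb' hj.2
        · rwa [Function.update_of_ne h]
      simp only [hΔ, Pi.sub_apply, β, this, sub_self]
    have habs : ∀ t j, (Δ t j) ^ 2 ≤ a ^ 2 := by
      intro t j
      simp only [hΔ, Pi.sub_apply, β]
      split_ifs <;> nlinarith
    have hsum : ∑ t, ∑ j, (Δ t j) ^ 2 ≤ 2 * a ^ 2 := by
      rw [Finset.sum_eq_single t0]
      · rw [← Finset.sum_subset (Finset.subset_univ B)
          fun j _ hj => by rw [hzero _ _ fun h => hj h.2]; simp]
        calc _ ≤ ∑ j ∈ B, a ^ 2 := Finset.sum_le_sum fun j _ => habs _ _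
          _ = B.card * a ^ 2 := by simp
          _ ≤ 2 * a ^ 2 := by
            gcongr
            exact_mod_cast hBcard
      · intro t _ ht
        exact Finset.sum_eq_zero fun j _ => by rw [hzero _ _ fun h => ht h.1]; simp
      · simp
    have hXΔ := hX.le Δ B (by omega) fun t j hj => hzero t j fun h => hj h.2
    have hbd : XnormSq Xt Δ / (σ ^ 2).toNNReal ≤ Real.log m / 2 := by
      rw [hvc, div_le_iff₀ (by positivity)]
      calc _ ≤ κ2 ^ 2 * n * ∑ t, ∑ j, (Δ t j) ^ 2 := hXΔ
        _ ≤ κ2 ^ 2 * n * (2 * a ^ 2) := by gcongr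
        _ = 2 * (κ2 ^ 2 * n * a ^ 2) := by ring
        _ = _ := by rw [ha2]; ring
    calc _ ≤ Real.exp (Real.log m / 2) := Real.exp_le_exp.mpr hbd
      _ = _ := by rw [Real.exp_half, Real.exp_log (by linarith), Fintype.card_fin]
  obtain ⟨w, S, hS, hPS, hSB⟩ := exists_many_errors (by simpa using hm)
    (fun w => obsLaw Xt (σ ^ 2).toNNReal (β w))
    (fun b l => {y | ∀ l', |τ y t0 (c (b, l')) - if l' = l then a else 0| < a / 2})
    (fun b l => by
      have : ∀ l', Measurable fun y => τ y t0 (c (b, l')) := fun l' =>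
        (measurable_pi_apply (c (b, l'))).comp ((measurable_pi_apply t0).comp hτ)
      rw [Set.ofPred_forall]
      exact MeasurableSet.iInter fun l' =>
        measurableSet_lt ((this l').sub_const _).abs measurable_const)
    (fun b l l' hl => by
      rw [Set.disjoint_left]
      intro y hy hy'
      have h1 := abs_lt.mp (hy l)
      have h2 := abs_lt.mp (hy' l)
      rw [if_pos rfl] at h1
      rw [if_neg hl] at h2
      linarith [h1.1, h2.2])
    hP
  refine ⟨β w, ?_, S, hS, hPS, fun y hy => ?_⟩
  · refine (card_support_le (β w) (Finset.univ.image fun b => c (b, w b)) fun t j hj => ?_).trans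
      (Finset.card_image_le.trans (by simp))
    have : ¬ ∃ b, j = c (b, w b) := by
      rintro ⟨b, rfl⟩
      exact hj (Finset.mem_image_of_mem _ (Finset.mem_univ b))
    simp [β, this]
  · obtain ⟨B, hB, hBcard⟩ := hSB y hy
    rw [Fintype.card_fin] at hBcard
    have hex : ∀ b, ∃ l', b ∈ B → a / 2 ≤ |τ y t0 (c (b, l')) - if l' = w b then a else 0| := by
      intro b
      by_cases hb : b ∈ B
      · have := hB b hb
        simp only [Set.mem_ofPred_eq, not_forall, not_lt] at this
        obtain ⟨l', h⟩ := this
        exact ⟨l', fun _ => h⟩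
      · exact ⟨w b, fun h => absurd h hb⟩
    choose f hf using hex
    have hinj : Function.Injective fun b => c (b, f b) := fun b b' h => (Prod.mk.inj (hc h)).1
    refine ⟨B.map ⟨_, hinj⟩, ?_, fun j hj => ?_⟩
    · rw [Finset.card_map]
      linarith
    · obtain ⟨b, hb, rfl⟩ := Finset.mem_map.mp hj
      refine le_trans ?_ (abs_le_gnorm _ t0 _)
      have := hf b hb
      rw [Function.Embedding.coeFn_mk, Pi.sub_apply, Pi.sub_apply, hβc]
      refine le_trans (le_of_eq ?_) this
      rw [ha]
      ring

/-! ### The rate -/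

lemma FailsAt.mono {n M T : ℕ} {Xt : Fin T → Matrix (Fin n) (Fin M) ℝ} {v : NNReal} {s : ℕ}
    {τ : (Fin T → Fin n → ℝ) → (Fin T → Fin M → ℝ)} {g g' : ℝ} (h : FailsAt Xt v s τ g)
    (hg : g' ≤ g) : FailsAt Xt v s τ g' := by
  obtain ⟨β, hβ, S, hS, hPS, hSB⟩ := h
  refine ⟨β, hβ, S, hS, hPS, fun y hy => ?_⟩
  obtain ⟨B, hB, hBg⟩ := hSB y hy
  exact ⟨B, hB, fun j hj => hg.trans (hBg j hj)⟩

/-- The two constructions combined: whichever of `T` and `log (eM/s)` dominates gives the rate. -/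
lemma failsAt_rate {n M T s : ℕ} (hT : 1 ≤ T) (hn : 1 ≤ n) (hs : 1 ≤ s) (hsM : 2 * s ≤ M)
    {σ κ2 : ℝ} (hσ : 0 < σ) (hκ : 0 < κ2) {Xt : Fin T → Matrix (Fin n) (Fin M) ℝ}
    (hX : UpperRE Xt s κ2) {τ : (Fin T → Fin n → ℝ) → (Fin T → Fin M → ℝ)} (hτ : Measurable τ) :
    FailsAt Xt (σ ^ 2).toNNReal s τ
      (σ / (κ2 * Real.sqrt n) * Real.sqrt (T + Real.log (Real.exp 1 * M / s)) / 32) := by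
  have hn' : (0 : ℝ) < n := by exact_mod_cast hn
  have hs' : (0 : ℝ) < s := by exact_mod_cast hs
  have hM' : (0 : ℝ) < M := by exact_mod_cast (by omega : 0 < M)
  have hρ : 0 < σ / (κ2 * Real.sqrt n) := by positivity
  have h64 : Real.sqrt 64 = 8 := by
    rw [show (64 : ℝ) = 8 ^ 2 by norm_num, Real.sqrt_sq (by norm_num)]
  rcases le_or_gt (Real.log (Real.exp 1 * M / s)) T with hL | hL
  · refine (failsAt_dense hT hn hs hsM hσ hκ hX hτ).mono ?_
    have h1 : Real.sqrt (T + Real.log (Real.exp 1 * M / s)) ≤ Real.sqrt (64 * (T / 32)) :=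
      Real.sqrt_le_sqrt (by linarith)
    rw [Real.sqrt_mul (by norm_num), h64] at h1
    calc _ ≤ σ / (κ2 * Real.sqrt n) * (8 * Real.sqrt (T / 32)) / 32 := by gcongr
      _ = _ := by ring
  · set m := M / s with hm
    have hm2 : 2 ≤ m := (Nat.le_div_iff_mul_le (by omega)).mpr hsM
    have hsm : s * m ≤ M := Nat.mul_div_le M s
    refine (failsAt_sparse hT hn hs hm2 hsm hσ hκ hX hτ).mono ?_
    have hm' : (2 : ℝ) ≤ m := by exact_mod_cast hm2
    have hMs : (M : ℝ) / s ≤ (m : ℝ) ^ 2 := by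
      rw [div_le_iff₀ hs']
      have : M < s * (m + 1) := by
        rw [mul_comm]
        exact Nat.lt_mul_of_div_lt (Nat.lt_succ_self _) (by omega)
      have h2 : (M : ℝ) < s * (m + 1) := by exact_mod_cast this
      have h3 : (m : ℝ) + 1 ≤ m ^ 2 := by nlinarith
      nlinarith
    have hlogm : Real.log 2 ≤ Real.log m := Real.log_le_log two_pos hm'
    have hl2 := Real.log_two_gt_d9
    have hLm : Real.log (Real.exp 1 * M / s) ≤ 4 * Real.log m := by
      rw [mul_div_assoc, Real.log_mul (Real.exp_pos _).ne' (by positivity), Real.log_exp]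
      have := Real.log_le_log (by positivity) hMs
      rw [Real.log_pow] at this
      push_cast at this
      linarith
    have h1 : Real.sqrt (T + Real.log (Real.exp 1 * M / s)) ≤ Real.sqrt (64 * Real.log m) :=
      Real.sqrt_le_sqrt (by linarith)
    rw [Real.sqrt_mul (by norm_num), h64] at h1
    calc _ ≤ σ / (κ2 * Real.sqrt n) * (8 * Real.sqrt (Real.log m)) / 32 := by gcongr
      _ = _ := by ring

/-- minimax lower bound over the class `GS(s,M,T)` of group-sparse vectors, for
the mixed `(2,p)`-norm loss, `1 ≤ p ≤ ∞`. The constants `b̄, c̄` depend only on the loss `ℓ`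
and on `p`. -/
theorem minimax_lower_bound_mixed_norm
    (ℓ : ℝ → ℝ) (hℓ_nonneg : ∀ x, 0 ≤ x → 0 ≤ ℓ x) (hℓ_mono : MonotoneOn ℓ (Set.Ici 0))
    (hℓ0 : ℓ 0 = 0) (hℓ_ne : ∃ x, 0 ≤ x ∧ ℓ x ≠ 0)
    (p : ℝ≥0∞) (hp : 1 ≤ p) :
    ∃ bbar : ℝ, 0 < bbar ∧ ∃ cbar : ℝ, 0 < cbar ∧
      ∀ (n M T s : ℕ), 2 ≤ M → 1 ≤ T → 1 ≤ n → 1 ≤ s → 2 * s ≤ M →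
      ∀ σ : ℝ, 0 < σ → ∀ κ2 : ℝ, 0 < κ2 →
      ∀ Xt : Fin T → Matrix (Fin n) (Fin M) ℝ,
      (∀ Δ : Fin T → Fin M → ℝ, Δ ≠ 0 →
        (Finset.univ.filter (fun j => gnorm Δ j ≠ 0)).card ≤ 2 * s →
        XnormSq Xt Δ ≤ κ2 ^ 2 * n * ∑ t, ∑ j, (Δ t j) ^ 2) →
      ∀ τ : (Fin T → Fin n → ℝ) → (Fin T → Fin M → ℝ), Measurable τ →
      ∃ βstar : Fin T → Fin M → ℝ,
        (Finset.univ.filter (fun j => gnorm βstar j ≠ 0)).card ≤ s ∧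
        ENNReal.ofReal cbar ≤
          ∫⁻ w, ENNReal.ofReal (ℓ (bbar *
              (σ / κ2 * rpowInv s p / Real.sqrt n *
                Real.sqrt (1 + Real.log (Real.exp 1 * M / s) / T))⁻¹ *
              ((1 / Real.sqrt T) *
                norm2p p (τ (fun t => (Xt t).mulVec (βstar t) + w t) - βstar))))
            ∂(Measure.pi fun _ : Fin T =>
                Measure.pi fun _ : Fin n => gaussianReal 0 (σ ^ 2).toNNReal) := by
  obtain ⟨x0, hx0, hℓx0⟩ := hℓ_ne
  have hx0' : 0 < x0 := lt_of_le_of_ne hx0 fun h => hℓx0 (h ▸ hℓ0)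
  have hℓpos : 0 < ℓ x0 := lt_of_le_of_ne (hℓ_nonneg x0 hx0) (Ne.symm hℓx0)
  refine ⟨1024 * x0, by positivity, ℓ x0 / 16, by positivity, ?_⟩
  intro n M T s hM hT hn hs hsM σ hσ κ2 hκ Xt hX τ hτ
  have hn' : (0 : ℝ) < n := by exact_mod_cast hn
  have hT' : (0 : ℝ) < T := by exact_mod_cast hT
  have hs' : (0 : ℝ) < s := by exact_mod_cast hs
  have hsM' : (s : ℝ) ≤ M := by exact_mod_cast (by omega : s ≤ M)
  have hX' : UpperRE Xt s κ2 := hX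
  obtain ⟨β, hβ, S, hS, hPS, hSB⟩ := failsAt_rate hT hn hs hsM hσ hκ hX' hτ
  refine ⟨β, hβ, ?_⟩
  set L : ℝ := Real.log (Real.exp 1 * M / s) with hLdef
  have hL0 : 0 ≤ L := by
    apply Real.log_nonneg
    rw [le_div_iff₀ hs', one_mul]
    have := Real.add_one_le_exp 1
    nlinarith
  have hr : 0 < rpowInv s p := by
    unfold rpowInv
    split_ifs
    · exact one_pos
    · positivity
  set ψ : ℝ := σ / κ2 * rpowInv s p / Real.sqrt n * Real.sqrt (1 + L / T) with hψ
  have hψ0 : 0 < ψ := by positivity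
  have hψT : σ / (κ2 * Real.sqrt n) * Real.sqrt (T + L) * rpowInv s p = ψ * Real.sqrt T := by
    have : Real.sqrt (T + L) = Real.sqrt (1 + L / T) * Real.sqrt T := by
      rw [← Real.sqrt_mul (by positivity)]
      congr 1
      field_simp
    rw [this, hψ]
    field_simp
  have hloss : ∀ y ∈ S,
      ℓ x0 ≤ ℓ (1024 * x0 * ψ⁻¹ * ((1 / Real.sqrt T) * norm2p p (τ y - β))) := by
    intro y hy
    obtain ⟨B, hB, hBg⟩ := hSB y hy
    have hN := norm2p_ge hp (τ y - β) hs B hB (by positivity) hBg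
    have hN' : ψ * Real.sqrt T / 1024 ≤ norm2p p (τ y - β) := by
      rw [← hψT]
      refine le_trans (le_of_eq ?_) hN
      ring
    have hle : x0 ≤ 1024 * x0 * ψ⁻¹ * ((1 / Real.sqrt T) * norm2p p (τ y - β)) := by
      calc x0 = 1024 * x0 * ψ⁻¹ * ((1 / Real.sqrt T) * (ψ * Real.sqrt T / 1024)) := by
            have : Real.sqrt T ≠ 0 := (Real.sqrt_pos.mpr hT').ne'
            field_simp
        _ ≤ _ := by gcongr
    exact hℓ_mono hx0 (hx0.trans hle) hle
  have hshift : Measurable fun (w : Fin T → Fin n → ℝ) t => (Xt t).mulVec (β t) + w t :=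
    measurable_pi_lambda _ fun t => (measurable_pi_apply t).const_add _
  set ν := Measure.pi fun _ : Fin T =>
    Measure.pi fun _ : Fin n => gaussianReal 0 (σ ^ 2).toNNReal with hν
  set S' := (fun (w : Fin T → Fin n → ℝ) t => (Xt t).mulVec (β t) + w t) ⁻¹' S with hS'
  have hS'm : MeasurableSet S' := hshift hS
  have hνS : ν S' = obsLaw Xt (σ ^ 2).toNNReal β S := by
    rw [← map_noise, Measure.map_apply hshift hS]
  calc ENNReal.ofReal (ℓ x0 / 16)
      = ENNReal.ofReal (ℓ x0) * ENNReal.ofReal (1 / 16) := by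
        rw [← ENNReal.ofReal_mul hℓpos.le]
        congr 1
        ring
    _ ≤ ENNReal.ofReal (ℓ x0) * ν S' := by
        gcongr
        rw [hνS]
        exact ENNReal.ofReal_le_of_le_toReal hPS
    _ = ∫⁻ w, S'.indicator (fun _ => ENNReal.ofReal (ℓ x0)) w ∂ν := by
        rw [lintegral_indicator_const hS'm]
    _ ≤ _ := by
        refine lintegral_mono fun w => ?_
        by_cases hw : w ∈ S'
        · rw [Set.indicator_of_mem hw]
          exact ENNReal.ofReal_le_ofReal (hloss _ hw)
        · rw [Set.indicator_of_notMem hw]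
          exact zero_le


end MultiTask
end
end

section
/- Let s ≤ M/2 and let both parts of Assumption SPD hold: κ₁²·n·‖Δ‖² ≤ ‖XΔ‖² ≤ κ₂²·n·‖Δ‖² for every Δ ∈ ℝ^{MT}∖{0} with M(Δ) ≤ 2s. Let ψ_{n,2} = (σ/κ₂)·(√s/√n)·(1 + log(eM/s)/T)^{1/2}. Then there exist positive constants b̄ and c̄, depending only on the loss ℓ, such that inf over all estimators τ (measurable functions of the observation y, with values in ℝ^{MT}) of sup over β* ∈ GS(s,M,T) of E ℓ( b̄ · ψ_{n,2}^{-1} · (κ₁·√(nT))^{-1}·‖X(τ − β*)‖ ) is at least c̄. -/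
/-!
The lower bound is a Bayesian testing argument over packings of `GS(s,M,T)` that are product sets
`ι → κ`, on which squared coefficient distance is `A` times Hamming distance.

* `noise_shift`: for Gaussian location models with means `a` and `b`, Cauchy–Schwarz applied to
  the likelihood ratio gives `P_a(E)² ≤ exp(‖a - b‖² / σ²) P_b(E)`. It is proved in dimension one
  and tensorized through the functional form `ShiftBound`.
* `testing`: let `m` be the size of `κ`. If resetting one coordinate to a reference letter costs a
  factor at most `√m` in that inequality, then under the uniform prior each coordinate is decoded
  correctly with probability `p` satisfying `p² ≤ √m / m ≤ 1/√2`, because the `m` decoding events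
  of that coordinate are disjoint under the reference law. Averaging over the coordinates gives a
  Hamming error of at least `|ι|/16` with probability at least `1/16` at some point. The alphabet
  may be large, so this covers both Assouad-type and Fano-type lower bounds without a
  Varshamov–Gilbert argument.
* `packing_bound`: decoding any estimator by the nearest packing point in prediction norm turns
  Hamming errors into prediction errors; both restricted eigenvalue bounds enter, through
  differences of two `s`-sparse vectors.

Up to constants the squared rate is `(κ₁σ/κ₂)² s (T + log (eM/s))`. If `T` dominates, the binary
packing on the entries of `s` groups has `sT` coordinates and suffices; otherwise the choice of one
active group in each of `s` blocks of size `⌊M/s⌋` does, since its entropy `s log ⌊M/s⌋` is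
comparable with `s log (eM/s)`. A bound in probability yields the bound for `ℓ` by monotonicity,
with `b̄ = 32 x₀` and `c̄ = ℓ(x₀)/16` for any `x₀` with `ℓ(x₀) ≠ 0`.
-/

open MeasureTheory ProbabilityTheory Finset
open scoped ENNReal

noncomputable section

namespace MultiTask

/-! ### Gaussian change of measure -/

/-- `μ` tolerates the shift by `v` at cost `C`: the translate of `μ` by `v` satisfies the
Cauchy–Schwarz change-of-measure bound whose constant `C` dominates `1 + χ²`. -/
def ShiftBound {E : Type*} [MeasurableSpace E] [Add E] (μ : Measure E) (v : E) (C : ℝ≥0∞) :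
    Prop :=
  ∀ f : E → ℝ≥0∞, Measurable f → (∫⁻ w, f (v + w) ∂μ) ^ 2 ≤ C * ∫⁻ w, f w ^ 2 ∂μ

lemma lintegral_mul_sq_le {E : Type*} [MeasurableSpace E] (μ : Measure E) {f g : E → ℝ≥0∞}
    (hf : Measurable f) (hg : Measurable g) :
    (∫⁻ x, f x * g x ∂μ) ^ 2 ≤ (∫⁻ x, f x ^ 2 ∂μ) * ∫⁻ x, g x ^ 2 ∂μ := by
  have h := ENNReal.lintegral_mul_le_Lp_mul_Lq μ Real.HolderConjugate.two_two
    hf.aemeasurable hg.aemeasurable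
  simp only [Pi.mul_apply, ENNReal.rpow_two] at h
  calc _ ≤ _ := pow_le_pow_left' h 2
    _ = _ := by
      rw [mul_pow, ← ENNReal.rpow_two, ← ENNReal.rpow_two, ← ENNReal.rpow_mul, ← ENNReal.rpow_mul]
      norm_num

lemma shiftBound_gaussian {σ : ℝ} (hσ : 0 < σ) (v : ℝ) :
    ShiftBound (gaussianReal 0 (σ ^ 2).toNNReal) v
      (ENNReal.ofReal (Real.exp (v ^ 2 / σ ^ 2))) := by
  intro f hf
  have hs : (σ ^ 2).toNNReal ≠ 0 := by
    rw [Ne, Real.toNNReal_eq_zero]; have := pow_pos hσ 2; linarith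
  have hsv : (((σ ^ 2).toNNReal : NNReal) : ℝ) = σ ^ 2 := Real.coe_toNNReal _ (sq_nonneg σ)
  set L : ℝ → ℝ≥0∞ := fun x => ENNReal.ofReal (Real.exp ((2 * x * v - v ^ 2) / (2 * σ ^ 2)))
    with hL
  have hLm : Measurable L := by fun_prop
  have h1 : ∀ x, gaussianPDF v (σ ^ 2).toNNReal x = gaussianPDF 0 (σ ^ 2).toNNReal x * L x := by
    intro x
    rw [gaussianPDF, gaussianPDF, hL, ← ENNReal.ofReal_mul (gaussianPDFReal_nonneg _ _ _)]
    simp only [gaussianPDFReal, hsv]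
    rw [mul_assoc _ (Real.exp _) (Real.exp _), ← Real.exp_add]
    congr 3
    field_simp
    ring
  have h2 : ∀ x, gaussianPDF 0 (σ ^ 2).toNNReal x * L x ^ 2 =
      ENNReal.ofReal (Real.exp (v ^ 2 / σ ^ 2)) * gaussianPDF (2 * v) (σ ^ 2).toNNReal x := by
    intro x
    rw [gaussianPDF, gaussianPDF, hL, ← ENNReal.ofReal_pow (Real.exp_pos _).le,
      ← ENNReal.ofReal_mul (gaussianPDFReal_nonneg _ _ _), ← ENNReal.ofReal_mul (Real.exp_pos _).le]
    simp only [gaussianPDFReal, hsv]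
    rw [mul_left_comm, mul_assoc, ← Real.exp_nat_mul, ← Real.exp_add, ← Real.exp_add]
    congr 3
    push_cast
    field_simp
    ring
  have h3 : ∫⁻ w, f (v + w) ∂(gaussianReal 0 (σ ^ 2).toNNReal) =
      ∫⁻ x, f x * L x ∂(gaussianReal 0 (σ ^ 2).toNNReal) := by
    have : ∫⁻ w, f (v + w) ∂(gaussianReal 0 (σ ^ 2).toNNReal) =
        ∫⁻ x, f x ∂(gaussianReal v (σ ^ 2).toNNReal) := by
      have := gaussianReal_map_const_add (μ := 0) (v := (σ ^ 2).toNNReal) v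
      rw [zero_add] at this
      rw [← this, lintegral_map hf (by fun_prop)]
    rw [this, gaussianReal_of_var_ne_zero _ hs, gaussianReal_of_var_ne_zero _ hs,
      lintegral_withDensity_eq_lintegral_mul _ (measurable_gaussianPDF _ _) hf,
      lintegral_withDensity_eq_lintegral_mul _ (measurable_gaussianPDF _ _)
        (g := fun x => f x * L x) (hf.mul hLm)]
    refine lintegral_congr fun x => ?_
    simp only [Pi.mul_apply, h1]
    ring
  have h4 : ∫⁻ x, L x ^ 2 ∂(gaussianReal 0 (σ ^ 2).toNNReal) =
      ENNReal.ofReal (Real.exp (v ^ 2 / σ ^ 2)) := by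
    rw [gaussianReal_of_var_ne_zero _ hs,
      lintegral_withDensity_eq_lintegral_mul _ (measurable_gaussianPDF _ _)
        (g := fun x => L x ^ 2) (hLm.pow_const 2)]
    simp only [Pi.mul_apply, h2]
    rw [lintegral_const_mul _ (measurable_gaussianPDF _ _), lintegral_gaussianPDF_eq_one _ hs,
      mul_one]
  rw [h3, mul_comm, ← h4]
  exact lintegral_mul_sq_le _ hf hLm

/-- Shift bounds tensorize. The hypothesis on `μ` is applied to the inner integral `g` as a function
of the outer variable; it leaves `∫ g ²`, and the hypothesis on `ν` bounds `g ²` pointwise, so no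
Minkowski-type inequality is needed. -/
lemma shiftBound_prod {E F : Type*} [MeasurableSpace E] [MeasurableSpace F] [Add E] [Add F]
    [MeasurableAdd E] [MeasurableAdd F]
    {μ : Measure E} {ν : Measure F} [SFinite μ] [SFinite ν] {v : E} {u : F}
    {C D : ℝ≥0∞} (hμ : ShiftBound μ v C) (hν : ShiftBound ν u D) :
    ShiftBound (μ.prod ν) (v, u) (C * D) := by
  intro f hf
  have hm : Measurable fun p : E × F => f (p.1, u + p.2) :=
    hf.comp (measurable_fst.prodMk ((measurable_const_add u).comp measurable_snd))
  have hm' : Measurable fun p : E × F => f ((v, u) + p) :=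
    hf.comp (((measurable_const_add v).comp measurable_fst).prodMk
      ((measurable_const_add u).comp measurable_snd))
  have hg : Measurable fun x => ∫⁻ y, f (x, u + y) ∂ν := hm.lintegral_prod_right'
  rw [lintegral_prod _ hm'.aemeasurable, lintegral_prod _ (hf.pow_const 2).aemeasurable]
  calc (∫⁻ x, ∫⁻ y, f ((v, u) + (x, y)) ∂ν ∂μ) ^ 2
      ≤ C * ∫⁻ x, (∫⁻ y, f (x, u + y) ∂ν) ^ 2 ∂μ := hμ _ hg
    _ ≤ C * ∫⁻ x, D * ∫⁻ y, f (x, y) ^ 2 ∂ν ∂μ := by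
        gcongr with x
        exact hν (fun y => f (x, y)) (hf.comp measurable_prodMk_left)
    _ = C * D * ∫⁻ x, ∫⁻ y, f (x, y) ^ 2 ∂ν ∂μ := by
        rw [lintegral_const_mul _ (hf.pow_const 2).lintegral_prod_right', mul_assoc]

lemma shiftBound_pi {E : Type*} [MeasurableSpace E] [Add E] [MeasurableAdd E]
    (μ : Measure E) [IsProbabilityMeasure μ] {C : E → ℝ≥0∞} (h : ∀ v, ShiftBound μ v (C v)) :
    ∀ (k : ℕ) (v : Fin k → E),
      ShiftBound (Measure.pi fun _ : Fin k => μ) v (∏ i, C (v i)) := by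
  intro k
  induction k with
  | zero =>
    intro v f hf
    rw [Measure.pi_of_empty]
    simp only [lintegral_dirac, Finset.univ_eq_empty, Finset.prod_empty, one_mul]
    rw [Subsingleton.elim (v + isEmptyElim) isEmptyElim]
  | succ k ih =>
    intro v f hf
    have hmp := (measurePreserving_piFinSuccAbove (fun _ : Fin (k + 1) => μ) 0).symm
    have key := shiftBound_prod (h (v 0)) (ih (fun i => v i.succ))
      (fun p => f ((MeasurableEquiv.piFinSuccAbove (fun _ : Fin (k + 1) => E) 0).symm p))
      (hf.comp (MeasurableEquiv.measurable _))
    rw [Fin.prod_univ_succ]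
    rw [← hmp.lintegral_comp_emb (MeasurableEquiv.measurableEmbedding _),
      ← hmp.lintegral_comp_emb (MeasurableEquiv.measurableEmbedding _)]
    convert key using 4 with p
    congr 1
    funext i
    refine Fin.cases ?_ (fun j => ?_) i
    · simp [MeasurableEquiv.piFinSuccAbove, Fin.insertNthEquiv]
    · simp [MeasurableEquiv.piFinSuccAbove, Fin.insertNthEquiv]

/-- The noise law on `ℝ^{nT}`. -/
abbrev noise (n T : ℕ) (σ : ℝ) : Measure (Fin T → Fin n → ℝ) :=
  Measure.pi fun _ : Fin T => Measure.pi fun _ : Fin n => gaussianReal 0 (σ ^ 2).toNNReal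

/-- Change of measure between two Gaussian location models, with the exact `χ²` constant. -/
lemma noise_shift {n T : ℕ} {σ : ℝ} (hσ : 0 < σ) (a b : Fin T → Fin n → ℝ)
    {A : Set (Fin T → Fin n → ℝ)} (hA : MeasurableSet A) :
    (noise n T σ).real {w | a + w ∈ A} ^ 2 ≤
      Real.exp ((∑ t, ∑ i, (a t i - b t i) ^ 2) / σ ^ 2) *
        (noise n T σ).real {w | b + w ∈ A} := by
  have h := shiftBound_pi _ (shiftBound_pi _ (shiftBound_gaussian hσ) n) T (a - b)
    (fun w => A.indicator 1 (b + w))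
    ((measurable_one.indicator hA).comp (measurable_const_add b))
  have e1 : (fun w => A.indicator (1 : (Fin T → Fin n → ℝ) → ℝ≥0∞) (b + (a - b + w))) =
      {w | a + w ∈ A}.indicator 1 := by
    funext w
    have : b + (a - b + w) = a + w := by abel
    rw [this]
    simp [Set.indicator]
  have e2 : (fun w => A.indicator (1 : (Fin T → Fin n → ℝ) → ℝ≥0∞) (b + w) ^ 2) =
      {w | b + w ∈ A}.indicator 1 := by
    funext w
    by_cases hw : b + w ∈ A <;> simp [hw]
  have m1 : MeasurableSet {w | a + w ∈ A} := measurable_const_add a hA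
  have m2 : MeasurableSet {w | b + w ∈ A} := measurable_const_add b hA
  rw [e1, e2, lintegral_indicator_one m1, lintegral_indicator_one m2] at h
  have e3 : (∏ t, ∏ i, ENNReal.ofReal (Real.exp ((a - b) t i ^ 2 / σ ^ 2))) =
      ENNReal.ofReal (Real.exp ((∑ t, ∑ i, (a t i - b t i) ^ 2) / σ ^ 2)) := by
    simp_rw [Finset.sum_div, Real.exp_sum]
    rw [ENNReal.ofReal_prod_of_nonneg (fun t _ => Finset.prod_nonneg fun i _ => (Real.exp_pos _).le)]
    refine Finset.prod_congr rfl fun t _ => ?_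
    rw [ENNReal.ofReal_prod_of_nonneg (fun i _ => (Real.exp_pos _).le)]
    rfl
  rw [e3] at h
  have h' := ENNReal.toReal_mono (by finiteness) h
  rw [ENNReal.toReal_pow, ENNReal.toReal_mul, ENNReal.toReal_ofReal (Real.exp_pos _).le] at h'
  exact h'

/-! ### Decoding a product set -/

/-- A minimizer over a finite index set can be selected measurably. -/
lemma exists_measurable_argmin {Y Ω : Type*} [MeasurableSpace Y] [Fintype Ω] [Nonempty Ω]
    [MeasurableSpace Ω] [DiscreteMeasurableSpace Ω] (D : Ω → Y → ℝ) (hD : ∀ ω, Measurable (D ω)) :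
    ∃ g : Y → Ω, Measurable g ∧ ∀ y ω, D (g y) y ≤ D ω y := by
  classical
  obtain ⟨ω0⟩ := ‹Nonempty Ω›
  suffices h : ∀ S : Finset Ω, ∃ g : Y → Ω, Measurable g ∧ ∀ y, ∀ ω ∈ S, D (g y) y ≤ D ω y by
    obtain ⟨g, hg, h⟩ := h Finset.univ
    exact ⟨g, hg, fun y ω => h y ω (Finset.mem_univ _)⟩
  intro S
  induction S using Finset.induction_on with
  | empty => exact ⟨fun _ => ω0, measurable_const, by simp⟩
  | insert a S _ ih =>
    obtain ⟨g, hg, h⟩ := ih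
    have hDg : Measurable fun y => D (g y) y :=
      (measurable_from_prod_countable_right (f := fun p : Ω × Y => D p.1 p.2) hD).comp
        (hg.prodMk measurable_id)
    refine ⟨fun y => if D a y ≤ D (g y) y then a else g y,
      Measurable.ite (measurableSet_le (hD a) hDg) measurable_const hg, fun y ω hω => ?_⟩
    rcases Finset.mem_insert.1 hω with rfl | hω
    · by_cases hc : D ω y ≤ D (g y) y
      · simp [hc]
      · simp only [hc, if_false]; exact (not_le.1 hc).le
    · by_cases hc : D a y ≤ D (g y) y
      · simp only [hc, if_true]; exact hc.trans (h y ω hω)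
      · simp only [hc, if_false]; exact h y ω hω

/-- Averaging `g` after resampling the coordinate `b` uniformly leaves the total unchanged:
`(ω, k) ↦ (ω with ω b := k, ω b)` is an involution. -/
lemma sum_sum_update {ι κ : Type*} [Fintype ι] [DecidableEq ι] [Fintype κ]
    (b : ι) (g : (ι → κ) → ℝ) [DecidableEq κ] :
    ∑ ω : ι → κ, ∑ k, g (Function.update ω b k) = Fintype.card κ * ∑ ω, g ω := by
  have h1 : ∑ ω : ι → κ, ∑ k, g (Function.update ω b k) =
      ∑ p : (ι → κ) × κ, g (Function.update p.1 b p.2) :=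
    (Fintype.sum_prod_type (fun p : (ι → κ) × κ => g (Function.update p.1 b p.2))).symm
  have hinv : Function.Involutive
      (fun p : (ι → κ) × κ => (Function.update p.1 b p.2, p.1 b)) := by
    rintro ⟨ω, k⟩
    simp
  rw [h1, Fintype.sum_equiv hinv.toPerm (fun p => g (Function.update p.1 b p.2))
    (fun p => g p.1) (fun p => rfl), Fintype.sum_prod_type]
  simp [Finset.mul_sum]

/-- Multi-coordinate testing bound. If resetting one coordinate of `ω` changes the law `P ω` at
cost `C ≤ √m`, where `m` is the alphabet size, then any decoder `g` gets, for some `ω`, at least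
one sixteenth of the coordinates wrong with probability at least `1/16`. -/
lemma testing {Y ι κ : Type*} [MeasurableSpace Y] [Fintype ι] [DecidableEq ι] [Nonempty ι]
    [Fintype κ] [DecidableEq κ] [MeasurableSpace (ι → κ)] [DiscreteMeasurableSpace (ι → κ)]
    (hκ : 2 ≤ Fintype.card κ) (k0 : κ) (P : (ι → κ) → Measure Y) [∀ ω, IsProbabilityMeasure (P ω)]
    (C : ℝ) (hC0 : 0 ≤ C) (hC : C ^ 2 ≤ Fintype.card κ)
    (hP : ∀ ω b A, MeasurableSet A →
      (P ω).real A ^ 2 ≤ C * (P (Function.update ω b k0)).real A)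
    (g : Y → ι → κ) (hg : Measurable g) :
    ∃ ω, 1 / 16 ≤ (P ω).real {y | Fintype.card ι ≤ 16 * hammingDist (g y) ω} := by
  have hms : ∀ S : Set (ι → κ), MeasurableSet {y | g y ∈ S} := fun S => hg (.of_discrete)
  set m : ℝ := ((Fintype.card κ : ℕ) : ℝ) with hm
  set K : ℝ := ((Fintype.card (ι → κ) : ℕ) : ℝ) with hK
  set N : ℝ := ((Fintype.card ι : ℕ) : ℝ) with hN
  have hm2 : (2 : ℝ) ≤ m := by rw [hm]; exact_mod_cast hκ
  have : Nonempty κ := ⟨k0⟩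
  have hKpos : 0 < K := by rw [hK]; exact_mod_cast Fintype.card_pos
  have hNpos : 0 < N := by rw [hN]; exact_mod_cast Fintype.card_pos
  -- The average success probability at each coordinate is at most `7/8`.
  have hcoord : ∀ b, ∑ ω, (P ω).real {y | g y b = ω b} ≤ 7 / 8 * K := by
    intro b
    set G : (ι → κ) → ℝ := fun ω => (P (Function.update ω b k0)).real {y | g y b = ω b} with hG
    have h1 : m * ∑ ω, G ω ≤ K := by
      rw [hm, ← sum_sum_update b G]
      calc _ ≤ ∑ _ω : ι → κ, (1 : ℝ) := by
            refine Finset.sum_le_sum fun ω _ => ?_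
            simp only [hG, Function.update_idem, Function.update_self]
            have hd : ∑ k, (P (Function.update ω b k0)).real {y | g y b = k} =
                (P (Function.update ω b k0)).real (⋃ k, {y | g y b = k}) := by
              rw [measureReal_iUnion_fintype]
              · intro k l hkl
                refine Set.disjoint_left.2 fun y hy hy' => hkl ?_
                exact hy.symm.trans hy'
              · intro k
                exact hms {ω' | ω' b = k}
            rw [hd]
            exact measureReal_le_one
        _ = K := by simp [hK]
    have h2 : (∑ ω, (P ω).real {y | g y b = ω b}) ^ 2 ≤ K * (C * ∑ ω, G ω) := by
      calc _ ≤ K * ∑ ω, (P ω).real {y | g y b = ω b} ^ 2 := by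
            have := sq_sum_le_card_mul_sum_sq (s := (Finset.univ : Finset (ι → κ)))
              (f := fun ω => (P ω).real {y | g y b = ω b})
            rwa [Finset.card_univ] at this
        _ ≤ _ := by
            refine mul_le_mul_of_nonneg_left ?_ hKpos.le
            rw [Finset.mul_sum]
            refine Finset.sum_le_sum fun ω _ => ?_
            exact hP ω b _ (hms {ω' | ω' b = ω b})
    set S := ∑ ω, (P ω).real {y | g y b = ω b} with hS
    set U := ∑ ω, G ω with hU
    have hU0 : 0 ≤ U := Finset.sum_nonneg fun ω _ => measureReal_nonneg
    have hCm : C ≤ 49 / 64 * m := by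
      by_contra hcon
      push Not at hcon
      nlinarith
    have h3 : S ^ 2 ≤ (7 / 8 * K) ^ 2 := by
      have : C * U ≤ 49 / 64 * K := by nlinarith
      nlinarith
    exact abs_le_of_sq_le_sq' h3 (by positivity) |>.2
  by_contra hcon
  push Not at hcon
  have hlow : ∀ ω, 7 / 8 * N < ∑ b, (P ω).real {y | g y b = ω b} := by
    intro ω
    set E : Set Y := {y | Fintype.card ι ≤ 16 * hammingDist (g y) ω} with hE
    have hEm : MeasurableSet E := hms {ω' | Fintype.card ι ≤ 16 * hammingDist ω' ω}
    have hbm : ∀ b, MeasurableSet {y | g y b = ω b} := fun b => hms {ω' | ω' b = ω b}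
    have hpt : ∀ y, 15 / 16 * N ≤
        ∑ b, {y | g y b = ω b}.indicator (fun _ => (1 : ℝ)) y + E.indicator (fun _ => N) y := by
      intro y
      have hcount : ∑ b, {y | g y b = ω b}.indicator (fun _ => (1 : ℝ)) y =
          N - hammingDist (g y) ω := by
        have e : ∀ b, {y | g y b = ω b}.indicator (fun _ => (1 : ℝ)) y =
            1 - if g y b ≠ ω b then 1 else 0 := by
          intro b
          by_cases hb : g y b = ω b <;> simp [hb]
        simp only [e, Finset.sum_sub_distrib, Finset.sum_boole, hammingDist, hN]
        simp
      rw [hcount]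
      by_cases hy : y ∈ E
      · have : (hammingDist (g y) ω : ℝ) ≤ N := by
          rw [hN]; exact_mod_cast hammingDist_le_card_fintype
        simp only [hy, Set.indicator_of_mem]; linarith
      · have : (16 : ℝ) * hammingDist (g y) ω < N := by
          rw [hN]; exact_mod_cast not_le.1 hy
        simp only [hy, not_false_eq_true, Set.indicator_of_notMem]; linarith
    have hib : ∀ b, Integrable ({y | g y b = ω b}.indicator (fun _ => (1 : ℝ))) (P ω) :=
      fun b => (integrable_const 1).indicator (hbm b)
    have hiE : Integrable (E.indicator (fun _ => N)) (P ω) := (integrable_const N).indicator hEm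
    have hint := integral_mono (μ := P ω) (integrable_const (15 / 16 * N))
      ((integrable_finsetSum _ fun b _ => hib b).add hiE) hpt
    simp only [Pi.add_apply] at hint
    rw [integral_add (integrable_finsetSum _ fun b _ => hib b) hiE,
      integral_finsetSum _ (fun b _ => hib b), integral_indicator_const _ hEm] at hint
    simp only [integral_indicator_const _ (hbm _), integral_const, probReal_univ, smul_eq_mul,
      one_mul, mul_one] at hint
    have := hcon ω
    nlinarith
  have h1 : ∑ ω, ∑ b, (P ω).real {y | g y b = ω b} ≤ N * (7 / 8 * K) := by
    rw [Finset.sum_comm]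
    calc _ ≤ ∑ _b : ι, 7 / 8 * K := Finset.sum_le_sum fun b _ => hcoord b
      _ = _ := by simp [hN]
  have h2 : K * (7 / 8 * N) < ∑ ω, ∑ b, (P ω).real {y | g y b = ω b} := by
    calc K * (7 / 8 * N) = ∑ _ω : ι → κ, 7 / 8 * N := by simp [hK]
      _ < _ := Finset.sum_lt_sum_of_nonempty Finset.univ_nonempty fun ω _ => hlow ω
  nlinarith

/-! ### Packings of the group-sparse class -/

lemma gnorm_ne_zero_iff {M T : ℕ} (β : Fin T → Fin M → ℝ) (j : Fin M) :
    gnorm β j ≠ 0 ↔ ∃ t, β t j ≠ 0 := by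
  have h0 : 0 ≤ ∑ t, β t j ^ 2 := Finset.sum_nonneg fun t _ => sq_nonneg _
  rw [gnorm, Ne, Real.sqrt_eq_zero h0,
    Finset.sum_eq_zero_iff_of_nonneg (fun t _ => sq_nonneg (β t j))]
  simp

lemma card_support_sub_le {M T : ℕ} (β γ : Fin T → Fin M → ℝ) :
    (Finset.univ.filter (fun j => gnorm (β - γ) j ≠ 0)).card ≤
      (Finset.univ.filter (fun j => gnorm β j ≠ 0)).card +
      (Finset.univ.filter (fun j => gnorm γ j ≠ 0)).card := by
  refine (Finset.card_le_card ?_).trans (Finset.card_union_le _ _)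
  intro j
  simp only [Finset.mem_union, Finset.mem_filter, Finset.mem_univ, true_and, gnorm_ne_zero_iff]
  rintro ⟨t, ht⟩
  by_cases hb : β t j = 0
  · exact Or.inr ⟨t, fun hc => ht (by simp [hb, hc])⟩
  · exact Or.inl ⟨t, hb⟩

lemma measurable_XnormSq {n M T : ℕ} (Xt : Fin T → Matrix (Fin n) (Fin M) ℝ) :
    Measurable (XnormSq Xt) := by
  unfold XnormSq
  simp only [Matrix.mulVec, dotProduct]
  fun_prop

/-- The squared form of the triangle inequality for `‖X·‖`. -/
lemma XnormSq_sub_le {n M T : ℕ} (Xt : Fin T → Matrix (Fin n) (Fin M) ℝ)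
    (u a b : Fin T → Fin M → ℝ) :
    XnormSq Xt (a - b) ≤ 2 * XnormSq Xt (u - a) + 2 * XnormSq Xt (u - b) := by
  simp only [XnormSq, Pi.sub_apply, Matrix.mulVec_sub, Finset.mul_sum, ← Finset.sum_add_distrib]
  refine Finset.sum_le_sum fun t _ => Finset.sum_le_sum fun i _ => ?_
  set p := (Xt t).mulVec (u t) i
  set q := (Xt t).mulVec (a t) i
  set r := (Xt t).mulVec (b t) i
  nlinarith [sq_nonneg ((p - q) + (p - r))]

/-- A Hamming-isometric (up to the factor `A`) packing of `GS(s,M,T)` by `ι → κ` forces the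
prediction error of every estimator to exceed `κ₁² n A |ι| / 64` with probability `1/16`
at some point of the packing, as soon as changing one coordinate is statistically cheap. -/
lemma packing_bound {n M T s : ℕ} {σ κ1 κ2 : ℝ} (hσ : 0 < σ)
    (Xt : Fin T → Matrix (Fin n) (Fin M) ℝ)
    (hX : ∀ Δ : Fin T → Fin M → ℝ, Δ ≠ 0 →
        (Finset.univ.filter (fun j => gnorm Δ j ≠ 0)).card ≤ 2 * s →
        κ1 ^ 2 * n * (∑ t, ∑ j, (Δ t j) ^ 2) ≤ XnormSq Xt Δ ∧
          XnormSq Xt Δ ≤ κ2 ^ 2 * n * ∑ t, ∑ j, (Δ t j) ^ 2)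
    {ι κ : Type} [Fintype ι] [DecidableEq ι] [Nonempty ι] [Fintype κ] [DecidableEq κ]
    (hκ : 2 ≤ Fintype.card κ) {A : ℝ} (hA0 : 0 ≤ A)
    (hA : κ2 ^ 2 * n * A ≤ σ ^ 2 * (Real.log (Fintype.card κ) / 2))
    (B : (ι → κ) → Fin T → Fin M → ℝ)
    (hBs : ∀ ω, (Finset.univ.filter (fun j => gnorm (B ω) j ≠ 0)).card ≤ s)
    (hB : ∀ ω ω', ∑ t, ∑ j, (B ω t j - B ω' t j) ^ 2 = A * hammingDist ω ω')
    (τ : (Fin T → Fin n → ℝ) → (Fin T → Fin M → ℝ)) (hτ : Measurable τ) :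
    ∃ ω, 1 / 16 ≤ (noise n T σ).real {w | κ1 ^ 2 * n * (A * Fintype.card ι) / 64 ≤
      XnormSq Xt (τ (fun t => (Xt t).mulVec (B ω t) + w t) - B ω)} := by
  let _ : MeasurableSpace (ι → κ) := ⊤
  have : DiscreteMeasurableSpace (ι → κ) := ⟨fun _ => trivial⟩
  have hcard : 0 < Fintype.card κ := by omega
  obtain ⟨k0⟩ : Nonempty κ := Fintype.card_pos_iff.1 hcard
  have : Nonempty κ := ⟨k0⟩
  have hX' : ∀ ω ω', κ1 ^ 2 * n * (A * hammingDist ω ω') ≤ XnormSq Xt (B ω - B ω') ∧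
      XnormSq Xt (B ω - B ω') ≤ κ2 ^ 2 * n * (A * hammingDist ω ω') := by
    intro ω ω'
    rw [← hB]
    by_cases h0 : B ω - B ω' = 0
    · have h1 : ∀ t j, B ω t j - B ω' t j = 0 := fun t j => congrFun (congrFun h0 t) j
      have h2 : XnormSq Xt (B ω - B ω') = 0 := by rw [h0]; simp [XnormSq]
      rw [h2]
      simp [h1]
    · refine hX _ h0 ((card_support_sub_le _ _).trans ?_)
      have := hBs ω
      have := hBs ω'
      omega
  set a : (ι → κ) → Fin T → Fin n → ℝ := fun ω t => (Xt t).mulVec (B ω t) with ha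
  have hadd : ∀ ω, Measurable fun w => a ω + w := fun ω => measurable_const_add (a ω)
  set P : (ι → κ) → Measure (Fin T → Fin n → ℝ) := fun ω => (noise n T σ).map fun w => a ω + w
    with hPdef
  have hPprob : ∀ ω, IsProbabilityMeasure (P ω) := fun ω =>
    Measure.isProbabilityMeasure_map (hadd ω).aemeasurable
  have hPreal : ∀ ω E, MeasurableSet E → (P ω).real E = (noise n T σ).real {w | a ω + w ∈ E} :=
    fun ω E hE => map_measureReal_apply (hadd ω) hE
  have hlog : Real.exp (Real.log (Fintype.card κ) / 2) ^ 2 = Fintype.card κ := by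
    rw [← Real.exp_nat_mul, Nat.cast_ofNat, mul_div_cancel₀ _ two_ne_zero,
      Real.exp_log (by exact_mod_cast hcard)]
  have hP : ∀ ω b E, MeasurableSet E → (P ω).real E ^ 2 ≤
      Real.exp (Real.log (Fintype.card κ) / 2) * (P (Function.update ω b k0)).real E := by
    intro ω b E hE
    rw [hPreal _ _ hE, hPreal _ _ hE]
    refine (noise_shift hσ (a ω) (a (Function.update ω b k0)) hE).trans ?_
    refine mul_le_mul_of_nonneg_right (Real.exp_le_exp.2 ?_) measureReal_nonneg
    rw [div_le_iff₀ (pow_pos hσ 2), mul_comm]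
    have h1 : ∑ t, ∑ i, (a ω t i - a (Function.update ω b k0) t i) ^ 2 =
        XnormSq Xt (B ω - B (Function.update ω b k0)) := by
      simp [XnormSq, ha, Matrix.mulVec_sub]
    have h2 : hammingDist ω (Function.update ω b k0) ≤ 1 := by
      rw [hammingDist]
      refine (Finset.card_le_card (t := {b}) fun i hi => ?_).trans (by simp)
      by_contra hib
      simp only [Finset.mem_singleton] at hib
      simp [Function.update_of_ne hib] at hi
    have h3 : (hammingDist ω (Function.update ω b k0) : ℝ) ≤ 1 := by exact_mod_cast h2
    rw [h1, mul_comm] at *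
    calc _ ≤ _ := (hX' _ _).2
      _ ≤ κ2 ^ 2 * n * (A * 1) := by gcongr
      _ ≤ _ := by rw [mul_one]; linarith
  -- Decode by the nearest point of the packing in the prediction norm.
  obtain ⟨g, hg, hmin⟩ := exists_measurable_argmin
    (fun (ω : ι → κ) y => XnormSq Xt (τ y - B ω))
    (fun ω => (measurable_XnormSq Xt).comp (hτ.sub_const (B ω)))
  obtain ⟨ω, hω⟩ := testing hκ k0 P _ (Real.exp_pos _).le hlog.le hP g hg
  refine ⟨ω, hω.trans ?_⟩
  have hEm : MeasurableSet {y | Fintype.card ι ≤ 16 * hammingDist (g y) ω} :=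
    hg (t := {ω' | Fintype.card ι ≤ 16 * hammingDist ω' ω}) .of_discrete
  rw [hPreal _ _ hEm]
  refine measureReal_mono fun w hw => ?_
  simp only [Set.mem_ofPred_eq] at hw ⊢
  have hw' : (Fintype.card ι : ℝ) ≤ 16 * hammingDist (g (a ω + w)) ω := by exact_mod_cast hw
  have h1 := XnormSq_sub_le Xt (τ (a ω + w)) (B (g (a ω + w))) (B ω)
  have h2 := hmin (a ω + w) ω
  have h3 := (hX' (g (a ω + w)) ω).1
  have h4 : κ1 ^ 2 * n * (A * Fintype.card ι) ≤
      κ1 ^ 2 * n * (A * (16 * hammingDist (g (a ω + w)) ω)) := by gcongr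
  change _ ≤ XnormSq Xt (τ (a ω + w) - B ω)
  linarith

lemma sum_extend_sub_sq {M : ℕ} {P : Type} [Fintype P] {e : P → Fin M}
    (he : Function.Injective e) (f g : P → ℝ) :
    ∑ j, (Function.extend e f 0 j - Function.extend e g 0 j) ^ 2 = ∑ p, (f p - g p) ^ 2 := by
  classical
  rw [← Finset.sum_subset (Finset.subset_univ (Finset.univ.image e)),
    Finset.sum_image fun x _ y _ h => he h]
  · simp [he.extend_apply]
  · intro j _ hj
    have : ¬ ∃ p, e p = j := by simpa using hj
    simp [Function.extend_apply' _ _ _ this]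

/-- Packing by free on/off patterns on the entries of the first `s` groups. -/
lemma exists_packing_dense {M T s : ℕ} (hs : s ≤ M) {A : ℝ} (hA : 0 ≤ A) :
    ∃ B : (Fin s × Fin T → Bool) → Fin T → Fin M → ℝ,
      (∀ ω, (Finset.univ.filter (fun j => gnorm (B ω) j ≠ 0)).card ≤ s) ∧
      ∀ ω ω', ∑ t, ∑ j, (B ω t j - B ω' t j) ^ 2 = A * hammingDist ω ω' := by
  have he := Fin.castLE_injective hs
  refine ⟨fun ω t => Function.extend (Fin.castLE hs)
    (fun i => if ω (i, t) then Real.sqrt A else 0) 0, fun ω => ?_, fun ω ω' => ?_⟩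
  · refine (Finset.card_le_card (t := Finset.univ.image (Fin.castLE hs)) fun j hj => ?_).trans
      (Finset.card_image_le.trans (by simp))
    simp only [Finset.mem_filter, Finset.mem_univ, true_and, gnorm_ne_zero_iff] at hj
    obtain ⟨t, ht⟩ := hj
    by_contra hc
    exact ht (by rw [Function.extend_apply' _ _ _ (by simpa using hc)]; rfl)
  · simp only [sum_extend_sub_sq he]
    rw [Finset.sum_comm, ← Fintype.sum_prod_type (fun p : Fin s × Fin T =>
      ((if ω p then Real.sqrt A else 0) - (if ω' p then Real.sqrt A else 0)) ^ 2)]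
    have : ∀ p, ((if ω p then Real.sqrt A else 0) - (if ω' p then Real.sqrt A else 0)) ^ 2 =
        A * if ω p ≠ ω' p then 1 else 0 := by
      intro p
      cases ω p <;> cases ω' p <;> simp [Real.sq_sqrt hA]
    simp only [this, ← Finset.mul_sum, Finset.sum_boole, hammingDist]

/-- Packing by supports: the groups are split into `s` blocks of size `m`, each block contains one
active group, and active groups are constant across the tasks. -/
lemma exists_packing_sparse {M T s m : ℕ} (hT : 1 ≤ T) (hs : s * m ≤ M) {A : ℝ} (hA : 0 ≤ A) :
    ∃ B : (Fin s → Fin m) → Fin T → Fin M → ℝ,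
      (∀ ω, (Finset.univ.filter (fun j => gnorm (B ω) j ≠ 0)).card ≤ s) ∧
      ∀ ω ω', ∑ t, ∑ j, (B ω t j - B ω' t j) ^ 2 = A * hammingDist ω ω' := by
  set e : Fin s × Fin m → Fin M := fun p => Fin.castLE hs (finProdFinEquiv p) with he_def
  have he : Function.Injective e := (Fin.castLE_injective hs).comp finProdFinEquiv.injective
  have hT0 : (T : ℝ) ≠ 0 := by positivity
  set a := Real.sqrt (A / (2 * T)) with ha
  have ha2 : a ^ 2 = A / (2 * T) := Real.sq_sqrt (by positivity)
  refine ⟨fun ω _ => Function.extend e (fun p => if ω p.1 = p.2 then a else 0) 0,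
    fun ω => ?_, fun ω ω' => ?_⟩
  · refine (Finset.card_le_card (t := Finset.univ.image fun b => e (b, ω b)) fun j hj => ?_).trans
      (Finset.card_image_le.trans (by simp))
    simp only [Finset.mem_filter, Finset.mem_univ, true_and, gnorm_ne_zero_iff] at hj
    obtain ⟨t, ht⟩ := hj
    by_cases hc : ∃ p, e p = j
    · obtain ⟨p, rfl⟩ := hc
      rw [he.extend_apply] at ht
      have hp : ω p.1 = p.2 := by by_contra hp; simp [hp] at ht
      exact Finset.mem_image.2 ⟨p.1, Finset.mem_univ _, by rw [hp]⟩
    · exact absurd (by rw [Function.extend_apply' _ _ _ hc]; rfl) ht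
  · simp only [sum_extend_sub_sq he, Fintype.sum_prod_type]
    have : ∀ b, ∑ k, ((if ω b = k then a else 0) - (if ω' b = k then a else 0)) ^ 2 =
        2 * a ^ 2 * if ω b ≠ ω' b then 1 else 0 := by
      intro b
      by_cases hb : ω b = ω' b
      · simp [hb]
      · have h1 : ∀ k, ((if ω b = k then a else 0) - (if ω' b = k then a else 0)) ^ 2 =
            (if ω b = k then a ^ 2 else 0) + (if ω' b = k then a ^ 2 else 0) := by
          intro k
          by_cases h1 : ω b = k
          · have h2 : ω' b ≠ k := fun h => hb (h1.trans h.symm)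
            simp [h1, h2]
          · simp [h1]
        simp only [h1, Finset.sum_add_distrib, Finset.sum_ite_eq, Finset.mem_univ, if_true]
        simp [hb]; ring
    simp only [this, ← Finset.mul_sum, Finset.sum_boole, hammingDist, Finset.sum_const,
      Finset.card_univ, Fintype.card_fin, nsmul_eq_mul, ha2]
    field_simp

/-- For `m = ⌊M/s⌋ ≥ 2` the block entropy `log m` is comparable with `log (eM/s)`. -/
lemma log_le_four_log_div {M s : ℕ} (hs : 1 ≤ s) (hM : 2 * s ≤ M) :
    Real.log (Real.exp 1 * M / s) ≤ 4 * Real.log ((M / s : ℕ) : ℝ) := by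
  set m := M / s with hm
  have hm2 : 2 ≤ m := (Nat.le_div_iff_mul_le (by omega)).2 hM
  have hs0 : (0 : ℝ) < s := by exact_mod_cast hs
  have hM0 : (0 : ℝ) < M := by exact_mod_cast (by omega : 0 < M)
  have hm2' : (2 : ℝ) ≤ m := by exact_mod_cast hm2
  have h1 : (M : ℝ) / s ≤ m + 1 := by
    rw [div_le_iff₀ hs0]
    rw [mul_comm]
    exact_mod_cast (Nat.lt_mul_div_succ M (show 0 < s by omega)).le
  have he : Real.exp 1 ≤ 2.75 := Real.exp_one_lt_d9.le.trans (by norm_num)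
  have : Real.exp 1 * M / s ≤ (m : ℝ) ^ 4 := by
    rw [mul_div_assoc]
    have h8 : (8 : ℝ) ≤ (m : ℝ) ^ 3 := by
      calc (8 : ℝ) = 2 ^ 3 := by norm_num
        _ ≤ _ := by gcongr
    calc Real.exp 1 * (M / s) ≤ 2.75 * (m + 1) := by gcongr
      _ ≤ 8 * m := by linarith
      _ ≤ (m : ℝ) ^ 3 * m := by gcongr
      _ = _ := by ring
  calc _ ≤ Real.log ((m : ℝ) ^ 4) := Real.log_le_log (by positivity) this
    _ = _ := by rw [Real.log_pow]; norm_num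

/-! ### The minimax rate -/

lemma log_exp_mul_div_nonneg {M s : ℕ} (hs : 1 ≤ s) (hM : 2 * s ≤ M) :
    0 ≤ Real.log (Real.exp 1 * M / s) := by
  have hs0 : (0 : ℝ) < s := by exact_mod_cast hs
  have h1 : (s : ℝ) ≤ M := by exact_mod_cast (by omega : s ≤ M)
  refine Real.log_nonneg ?_
  rw [le_div_iff₀ hs0, one_mul]
  nlinarith [Real.one_le_exp (zero_le_one (α := ℝ))]

/-- The minimax rate in probability: the dense packing is used when `T` dominates `log (eM/s)`,
the sparse one otherwise. -/
lemma exists_large_error {n M T s : ℕ} (hT : 1 ≤ T) (hn : 1 ≤ n) (hs : 1 ≤ s)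
    (hsM : 2 * s ≤ M) {σ κ1 κ2 : ℝ} (hσ : 0 < σ) (hκ2 : 0 < κ2)
    (Xt : Fin T → Matrix (Fin n) (Fin M) ℝ)
    (hX : ∀ Δ : Fin T → Fin M → ℝ, Δ ≠ 0 →
        (Finset.univ.filter (fun j => gnorm Δ j ≠ 0)).card ≤ 2 * s →
        κ1 ^ 2 * n * (∑ t, ∑ j, (Δ t j) ^ 2) ≤ XnormSq Xt Δ ∧
          XnormSq Xt Δ ≤ κ2 ^ 2 * n * ∑ t, ∑ j, (Δ t j) ^ 2)
    (τ : (Fin T → Fin n → ℝ) → (Fin T → Fin M → ℝ)) (hτ : Measurable τ) :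
    ∃ β : Fin T → Fin M → ℝ, (Finset.univ.filter (fun j => gnorm β j ≠ 0)).card ≤ s ∧
      1 / 16 ≤ (noise n T σ).real
        {w | κ1 ^ 2 * (σ ^ 2 / κ2 ^ 2 * (s * (T + Real.log (Real.exp 1 * M / s)))) / 1024 ≤
          XnormSq Xt (τ (fun t => (Xt t).mulVec (β t) + w t) - β)} := by
  set L := Real.log (Real.exp 1 * M / s) with hL
  have hs0 : (0 : ℝ) < s := by exact_mod_cast hs
  have hn0 : (0 : ℝ) < n := by exact_mod_cast hn
  have hne : Nonempty (Fin s) := ⟨⟨0, hs⟩⟩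
  have hneT : Nonempty (Fin T) := ⟨⟨0, hT⟩⟩
  have finish : ∀ {ι κ : Type} [Fintype ι] [DecidableEq ι] [Nonempty ι] [Fintype κ]
      [DecidableEq κ], 2 ≤ Fintype.card κ →
      s * (T + L) ≤ 8 * (Fintype.card ι * Real.log (Fintype.card κ)) →
      (∀ A : ℝ, 0 ≤ A → ∃ B : (ι → κ) → Fin T → Fin M → ℝ,
        (∀ ω, (Finset.univ.filter (fun j => gnorm (B ω) j ≠ 0)).card ≤ s) ∧
        ∀ ω ω', ∑ t, ∑ j, (B ω t j - B ω' t j) ^ 2 = A * hammingDist ω ω') →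
      ∃ β : Fin T → Fin M → ℝ, (Finset.univ.filter (fun j => gnorm β j ≠ 0)).card ≤ s ∧
        1 / 16 ≤ (noise n T σ).real
          {w | κ1 ^ 2 * (σ ^ 2 / κ2 ^ 2 * (s * (T + L))) / 1024 ≤
            XnormSq Xt (τ (fun t => (Xt t).mulVec (β t) + w t) - β)} := by
    intro ι κ _ _ _ _ _ hκ hrate hpack
    have hlog : 0 ≤ Real.log (Fintype.card κ) := Real.log_natCast_nonneg _
    -- `A` is the largest packing scale for which changing one coordinate stays cheap.
    set A := σ ^ 2 * Real.log (Fintype.card κ) / (2 * κ2 ^ 2 * n) with hA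
    have hA0 : 0 ≤ A := by positivity
    obtain ⟨B, hBs, hB⟩ := hpack A hA0
    obtain ⟨ω, hω⟩ := packing_bound hσ Xt hX hκ hA0 (by rw [hA]; field_simp; rfl) B hBs hB τ hτ
    refine ⟨B ω, hBs ω, hω.trans (measureReal_mono fun w hw => ?_)⟩
    refine le_trans ?_ (Set.mem_ofPred_eq ▸ hw)
    calc κ1 ^ 2 * (σ ^ 2 / κ2 ^ 2 * (s * (T + L))) / 1024
        ≤ κ1 ^ 2 * (σ ^ 2 / κ2 ^ 2 * (8 * (Fintype.card ι * Real.log (Fintype.card κ)))) / 1024 := by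
          gcongr
      _ = _ := by rw [hA]; field_simp; ring
  rcases le_total L T with hLT | hLT
  · refine finish (ι := Fin s × Fin T) (κ := Bool) (by simp) ?_
      fun A hA => exists_packing_dense (by omega) hA
    have h2 := Real.log_two_gt_d9
    have hsT : (0 : ℝ) ≤ s * T := by positivity
    simp only [Fintype.card_prod, Fintype.card_fin, Fintype.card_bool, Nat.cast_mul,
      Nat.cast_ofNat]
    nlinarith
  · have h4 : L ≤ 4 * Real.log ((M / s : ℕ) : ℝ) := log_le_four_log_div hs hsM
    refine finish (ι := Fin s) (κ := Fin (M / s)) ?_ ?_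
      fun A hA => exists_packing_sparse hT (Nat.mul_div_le M s) hA
    · rw [Fintype.card_fin]
      exact (Nat.le_div_iff_mul_le (by omega)).2 hsM
    · simp only [Fintype.card_fin]
      nlinarith

/-- minimax lower bound over the class `GS(s,M,T)` of group-sparse vectors, for
the prediction loss. The constants `b̄, c̄` depend only on the loss `ℓ`. -/
theorem minimax_lower_bound_prediction
    (ℓ : ℝ → ℝ) (hℓ_nonneg : ∀ x, 0 ≤ x → 0 ≤ ℓ x) (hℓ_mono : MonotoneOn ℓ (Set.Ici 0))
    (hℓ0 : ℓ 0 = 0) (hℓ_ne : ∃ x, 0 ≤ x ∧ ℓ x ≠ 0) :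
    ∃ bbar : ℝ, 0 < bbar ∧ ∃ cbar : ℝ, 0 < cbar ∧
      ∀ (n M T s : ℕ), 2 ≤ M → 1 ≤ T → 1 ≤ n → 1 ≤ s → 2 * s ≤ M →
      ∀ σ : ℝ, 0 < σ → ∀ κ1 κ2 : ℝ, 0 < κ1 → 0 < κ2 →
      ∀ Xt : Fin T → Matrix (Fin n) (Fin M) ℝ,
      (∀ Δ : Fin T → Fin M → ℝ, Δ ≠ 0 →
        (Finset.univ.filter (fun j => gnorm Δ j ≠ 0)).card ≤ 2 * s →
        κ1 ^ 2 * n * (∑ t, ∑ j, (Δ t j) ^ 2) ≤ XnormSq Xt Δ ∧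
          XnormSq Xt Δ ≤ κ2 ^ 2 * n * ∑ t, ∑ j, (Δ t j) ^ 2) →
      ∀ τ : (Fin T → Fin n → ℝ) → (Fin T → Fin M → ℝ), Measurable τ →
      ∃ βstar : Fin T → Fin M → ℝ,
        (Finset.univ.filter (fun j => gnorm βstar j ≠ 0)).card ≤ s ∧
        ENNReal.ofReal cbar ≤
          ∫⁻ w, ENNReal.ofReal (ℓ (bbar *
              (σ / κ2 * Real.sqrt s / Real.sqrt n *
                Real.sqrt (1 + Real.log (Real.exp 1 * M / s) / T))⁻¹ *
              ((κ1 * Real.sqrt (n * T))⁻¹ *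
                Real.sqrt (XnormSq Xt (τ (fun t => (Xt t).mulVec (βstar t) + w t) - βstar)))))
            ∂(Measure.pi fun _ : Fin T =>
                Measure.pi fun _ : Fin n => gaussianReal 0 (σ ^ 2).toNNReal) := by
  obtain ⟨x0, hx0, hx0'⟩ := hℓ_ne
  have hx0pos : 0 < x0 := lt_of_le_of_ne hx0 fun h => hx0' (h ▸ hℓ0)
  have hℓpos : 0 < ℓ x0 := lt_of_le_of_ne (hℓ_nonneg _ hx0) (Ne.symm hx0')
  refine ⟨32 * x0, by positivity, ℓ x0 / 16, by positivity, ?_⟩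
  intro n M T s hM hT hn hs hsM σ hσ κ1 κ2 hκ1 hκ2 Xt hX τ hτ
  obtain ⟨β, hβ, hprob⟩ := exists_large_error hT hn hs hsM hσ hκ2 Xt hX τ hτ
  refine ⟨β, hβ, ?_⟩
  set L := Real.log (Real.exp 1 * M / s) with hL
  set V := κ1 ^ 2 * (σ ^ 2 / κ2 ^ 2 * (s * (T + L))) / 1024 with hV
  set Z : (Fin T → Fin n → ℝ) → ℝ := fun w =>
    XnormSq Xt (τ (fun t => (Xt t).mulVec (β t) + w t) - β) with hZ
  have hZm : Measurable Z :=
    (measurable_XnormSq Xt).comp ((hτ.comp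
      (measurable_const_add (fun t => (Xt t).mulVec (β t)))).sub_const β)
  set E : Set (Fin T → Fin n → ℝ) := {w | V ≤ Z w} with hE
  have hEm : MeasurableSet E := measurableSet_le measurable_const hZm
  have hL0 : 0 ≤ L := log_exp_mul_div_nonneg hs hsM
  have hs0 : (0 : ℝ) < s := by exact_mod_cast hs
  have hT0 : (0 : ℝ) < T := by exact_mod_cast hT
  have hn0 : (0 : ℝ) < n := by exact_mod_cast hn
  set ψ := σ / κ2 * Real.sqrt s / Real.sqrt n * Real.sqrt (1 + L / T) with hψ
  have hψ0 : 0 < ψ := by positivity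
  set q := κ1 * Real.sqrt (n * T) with hq
  have hq0 : 0 < q := by positivity
  have hqψ : (ψ * q) ^ 2 = 1024 * V := by
    rw [hψ, hq, hV, mul_pow, mul_pow, mul_pow, div_pow, mul_pow, div_pow, Real.sq_sqrt hs0.le,
      Real.sq_sqrt hn0.le, Real.sq_sqrt (by positivity), Real.sq_sqrt (by positivity)]
    field_simp
  have hpt : ∀ w ∈ E, x0 ≤ 32 * x0 * ψ⁻¹ * (q⁻¹ * Real.sqrt (Z w)) := by
    intro w hw
    have h1 : ψ * q / 32 ≤ Real.sqrt (Z w) := by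
      refine Real.le_sqrt_of_sq_le ?_
      rw [div_pow, hqψ]
      have : V ≤ Z w := hw
      linarith
    calc x0 = 32 * x0 * ψ⁻¹ * (q⁻¹ * (ψ * q / 32)) := by field_simp
      _ ≤ _ := by gcongr
  calc ENNReal.ofReal (ℓ x0 / 16)
      ≤ ENNReal.ofReal (ℓ x0) * (noise n T σ) E := by
        rw [div_eq_mul_one_div, ENNReal.ofReal_mul hℓpos.le]
        gcongr
        exact (ENNReal.ofReal_le_iff_le_toReal (measure_ne_top _ _)).2 hprob
    _ = ∫⁻ _w in E, ENNReal.ofReal (ℓ x0) ∂(noise n T σ) := (setLIntegral_const _ _).symm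
    _ ≤ ∫⁻ w in E, ENNReal.ofReal (ℓ (32 * x0 * ψ⁻¹ * (q⁻¹ * Real.sqrt (Z w)))) ∂(noise n T σ) := by
        refine setLIntegral_mono' hEm fun w hw => ENNReal.ofReal_le_ofReal ?_
        exact hℓ_mono hx0 (Set.mem_Ici.2 (hx0.trans (hpt w hw))) (hpt w hw)
    _ ≤ _ := setLIntegral_le_lintegral _ _

end MultiTask
end
end

section
/- With probability at least 1 − K^{1−A²/8}, every Lasso solution β̂^L satisfies both lower bounds: (1/N)‖X(β̂^L − β*)‖² ≥ M'(β̂^L)·A²σ²·φ·log K/(4·φ_max·N) and ‖β̂^L − β*‖ ≥ (Aσ/(2φ_max))·√( M'(β̂^L)·φ·log K/N ), where φ_max is the maximal eigenvalue of Ψ = XᵀX/N. -/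
/-! At a coordinate `j` with `b j ≠ 0` the Lasso objective is differentiable along `e_j`,
so optimality of `b` reads `|(Xᵀ(y - Xb))_j| / N = r`. On the event `max_j |(XᵀW)_j| / N ≤ r/2` the
noise accounts for at most half of this, hence `|(Ψ(b - β*))_j| ≥ r/2` at every active coordinate.
Summing squares, `M'(b) r²/4 ≤ ‖Ψ(b - β*)‖² ≤ φ_max ‖X(b - β*)‖² / N` (`sparsity_le`), which is the
prediction bound; bounding the right side once more by `φ_max² ‖b - β*‖²` gives the `ℓ₂` bound.

The complement of the event has probability at most `K · K^{-A²/8}` by a union bound over the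
coordinates: each `(XᵀW)_j / N` is a centred Gaussian of variance `σ²Ψ_jj / N`
(`map_sum_gaussian`), and `P(|Z| > t) ≤ exp (-t²/(2v))` for `Z ~ N(0, v)` with no factor `2`
(`gaussian_tail`). The restricted eigenvalue condition serves only to make the columns of `X`
nonzero, so that `φ` and `φ_max` are positive. -/

open MeasureTheory ProbabilityTheory Finset

noncomputable section

namespace Lasso

/-- The Lasso objective `(1/N)‖Xβ − y‖² + 2r‖β‖₁`. -/
def lassoObj {N K : ℕ} (X : Matrix (Fin N) (Fin K) ℝ) (y : Fin N → ℝ) (r : ℝ)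
    (β : Fin K → ℝ) : ℝ :=
  (∑ i, (X.mulVec β i - y i) ^ 2) / N + 2 * r * ∑ j, |β j|

/-- `b` is a Lasso solution. -/
def IsLassoSol {N K : ℕ} (X : Matrix (Fin N) (Fin K) ℝ) (y : Fin N → ℝ) (r : ℝ)
    (b : Fin K → ℝ) : Prop :=
  ∀ β : Fin K → ℝ, lassoObj X y r b ≤ lassoObj X y r β

/-- The `(j,k)`-entry of `Ψ = XᵀX/N`. -/
def PsiEnt {N K : ℕ} (X : Matrix (Fin N) (Fin K) ℝ) (j k : Fin K) : ℝ :=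
  (∑ i, X i j * X i k) / N

/-- The maximal diagonal element `φ` of `Ψ = XᵀX/N`. -/
def phiDiag {N K : ℕ} (X : Matrix (Fin N) (Fin K) ℝ) : ℝ :=
  sSup {x | ∃ j, x = PsiEnt X j j}

/-- The maximal eigenvalue `φ_max` of `Ψ = XᵀX/N`, expressed as the supremum of the quadratic
form over unit vectors. -/
def phiMax {N K : ℕ} (X : Matrix (Fin N) (Fin K) ℝ) : ℝ :=
  sSup {x | ∃ v : Fin K → ℝ, (∑ k, (v k) ^ 2 = 1) ∧ x = (∑ i, (X.mulVec v i) ^ 2) / N}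

/-! ### Gaussian laws and tails -/

lemma map_sum_gaussian {N : ℕ} (c : Fin N → ℝ) (v : NNReal) :
    Measure.map (fun x : Fin N → ℝ => ∑ i, c i * x i)
      (Measure.pi fun _ : Fin N => gaussianReal 0 v) =
      gaussianReal 0 ((∑ i, (c i) ^ 2).toNNReal * v) := by
  have hm : Measurable (fun x : Fin N → ℝ => ∑ i, c i * x i) := by fun_prop
  have : IsProbabilityMeasure (Measure.map (fun x : Fin N → ℝ => ∑ i, c i * x i)
      (Measure.pi fun _ : Fin N => gaussianReal 0 v)) :=
    Measure.isProbabilityMeasure_map hm.aemeasurable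
  refine Measure.ext_of_charFun (funext fun t => ?_)
  rw [charFun_apply_real, integral_map hm.aemeasurable (by fun_prop), charFun_gaussianReal]
  have h1 : ∀ x : Fin N → ℝ, Complex.exp (t * ((∑ i, c i * x i : ℝ) : ℂ) * Complex.I) =
      ∏ i, Complex.exp (((t * c i : ℝ) : ℂ) * (x i : ℂ) * Complex.I) := by
    intro x
    rw [← Complex.exp_sum]
    congr 1
    push_cast
    rw [Finset.mul_sum, Finset.sum_mul]
    exact Finset.sum_congr rfl fun i _ => by ring
  simp_rw [h1]
  rw [integral_fintype_prod_eq_prod (𝕜 := ℂ)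
    (fun i (x : ℝ) => Complex.exp (((t * c i : ℝ) : ℂ) * (x : ℂ) * Complex.I))]
  simp_rw [← charFun_apply_real, charFun_gaussianReal]
  rw [← Complex.exp_sum]
  congr 1
  have hc : (0 : ℝ) ≤ ∑ i, (c i) ^ 2 := Finset.sum_nonneg fun i _ => sq_nonneg _
  rw [NNReal.coe_mul, Real.coe_toNNReal _ hc]
  push_cast
  rw [Finset.sum_mul, Finset.sum_mul, Finset.sum_div, mul_zero, zero_mul, zero_sub,
    ← Finset.sum_neg_distrib]
  exact Finset.sum_congr rfl fun i _ => by ring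

lemma gaussian_Iio_neg (v : NNReal) (t : ℝ) :
    gaussianReal 0 v (Set.Iio (-t)) = gaussianReal 0 v (Set.Ioi t) := by
  conv_lhs => rw [← neg_zero, ← gaussianReal_map_neg]
  rw [Measure.map_apply (by fun_prop) measurableSet_Iio]
  congr 1
  ext x
  simp

/-- Translating the density by `t` multiplies it by `exp (-t²/(2v) - xt/v)`, which is at most
`exp (-t²/(2v))` on the half-line `x > 0`. -/
lemma gaussian_Ioi_le {v : NNReal} (hv : v ≠ 0) {t : ℝ} (ht : 0 ≤ t) :
    gaussianReal 0 v (Set.Ioi t) ≤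
      ENNReal.ofReal (Real.exp (-t ^ 2 / (2 * v))) * gaussianReal 0 v (Set.Ioi 0) := by
  have h1 : gaussianReal 0 v (Set.Ioi t) = gaussianReal (0 - t) v (Set.Ioi 0) := by
    rw [← gaussianReal_map_sub_const, Measure.map_apply (by fun_prop) measurableSet_Ioi]
    congr 1
    ext x
    simp
  have hv' : (0 : ℝ) < v := by
    have := pos_iff_ne_zero.mpr hv
    exact_mod_cast this
  rw [h1, gaussianReal_apply _ hv, gaussianReal_apply _ hv,
    ← lintegral_const_mul _ (measurable_gaussianPDF 0 v)]
  refine setLIntegral_mono' measurableSet_Ioi fun x hx => ?_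
  rw [gaussianPDF, gaussianPDF, ← ENNReal.ofReal_mul (Real.exp_nonneg _)]
  refine ENNReal.ofReal_le_ofReal ?_
  rw [gaussianPDFReal, gaussianPDFReal, mul_left_comm, ← Real.exp_add]
  refine mul_le_mul_of_nonneg_left (Real.exp_le_exp.mpr ?_) (by positivity)
  rw [← add_div]
  refine div_le_div_of_nonneg_right ?_ (by positivity)
  have : 0 < x := hx
  nlinarith [mul_nonneg this.le ht]

/-- The two-sided Gaussian tail bound with leading constant `1`. The factor `2` of the two tails
is absorbed by the mass `1/2` of a half-line. -/
lemma gaussian_tail {v : NNReal} (hv : v ≠ 0) {t : ℝ} (ht : 0 ≤ t) :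
    gaussianReal 0 v {x | t < |x|} ≤ ENNReal.ofReal (Real.exp (-t ^ 2 / (2 * v))) := by
  have h0 : {x : ℝ | t < |x|} = Set.Ioi t ∪ Set.Iio (-t) := by
    ext x
    simp [lt_abs, lt_neg]
  have h2 : gaussianReal 0 v (Set.Ioi 0) + gaussianReal 0 v (Set.Ioi 0) ≤ 1 := by
    have := gaussian_Iio_neg v 0
    rw [neg_zero] at this
    nth_rewrite 1 [← this]
    rw [← measure_union _ measurableSet_Ioi]
    · exact prob_le_one
    · exact Set.disjoint_left.mpr fun x hx hx' => lt_asymm (Set.mem_Iio.mp hx) (Set.mem_Ioi.mp hx')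
  rw [h0]
  calc _ ≤ gaussianReal 0 v (Set.Ioi t) + gaussianReal 0 v (Set.Iio (-t)) := measure_union_le _ _
    _ = gaussianReal 0 v (Set.Ioi t) + gaussianReal 0 v (Set.Ioi t) := by rw [gaussian_Iio_neg]
    _ ≤ _ := add_le_add (gaussian_Ioi_le hv ht) (gaussian_Ioi_le hv ht)
    _ = ENNReal.ofReal (Real.exp (-t ^ 2 / (2 * v))) *
        (gaussianReal 0 v (Set.Ioi 0) + gaussianReal 0 v (Set.Ioi 0)) := by rw [mul_add]
    _ ≤ _ := mul_le_of_le_one_right' h2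

/-! ### The Gram matrix -/

variable {N K : ℕ}

lemma phiMax_bddAbove (X : Matrix (Fin N) (Fin K) ℝ) :
    BddAbove {x | ∃ v : Fin K → ℝ, (∑ k, (v k) ^ 2 = 1) ∧
      x = (∑ i, (X.mulVec v i) ^ 2) / N} := by
  refine ⟨(∑ i, ∑ k, X i k ^ 2) / N, ?_⟩
  rintro x ⟨v, hv, rfl⟩
  refine div_le_div_of_nonneg_right (Finset.sum_le_sum fun i _ => ?_) (Nat.cast_nonneg N)
  have := Finset.sum_mul_sq_le_sq_mul_sq Finset.univ (fun k => X i k) v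
  rw [hv, mul_one] at this
  exact this

lemma sum_sq_mulVec_le (X : Matrix (Fin N) (Fin K) ℝ) (v : Fin K → ℝ) :
    (∑ i, (X.mulVec v i) ^ 2) / N ≤ phiMax X * ∑ k, (v k) ^ 2 := by
  have hs0 : 0 ≤ ∑ k, (v k) ^ 2 := Finset.sum_nonneg fun k _ => sq_nonneg _
  rcases hs0.eq_or_lt with hs | hs
  · have hv : v = 0 := by
      funext k
      have := (Finset.sum_eq_zero_iff_of_nonneg (fun k _ => sq_nonneg (v k))).mp hs.symm k
        (Finset.mem_univ k)
      exact pow_eq_zero_iff (two_ne_zero) |>.mp this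
    simp [hv]
  · set S := ∑ k, (v k) ^ 2 with hS
    have hsq : (Real.sqrt S)⁻¹ ^ 2 = S⁻¹ := by rw [inv_pow, Real.sq_sqrt hs.le]
    have h1 : (∑ i, (X.mulVec ((Real.sqrt S)⁻¹ • v) i) ^ 2) / N ≤ phiMax X := by
      refine le_csSup (phiMax_bddAbove X) ⟨_, ?_, rfl⟩
      simp only [Pi.smul_apply, smul_eq_mul, mul_pow, ← Finset.mul_sum]
      rw [hsq, ← hS, inv_mul_cancel₀ hs.ne']
    rw [Matrix.mulVec_smul] at h1
    simp only [Pi.smul_apply, smul_eq_mul, mul_pow, ← Finset.mul_sum] at h1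
    rw [hsq, mul_div_assoc] at h1
    rwa [inv_mul_le_iff₀ hs, mul_comm] at h1

/-- `‖Xᵀu‖² ≤ N φ_max ‖u‖²`: with `w = Xᵀu`, Cauchy–Schwarz gives
`‖w‖⁴ = ⟨u, Xw⟩² ≤ ‖u‖² ‖Xw‖² ≤ ‖u‖² N φ_max ‖w‖²`. -/
lemma sum_sq_transpose_le (hN : 1 ≤ N) (X : Matrix (Fin N) (Fin K) ℝ) (u : Fin N → ℝ)
    (hφ : 0 ≤ phiMax X) :
    ∑ j, (∑ i, u i * X i j) ^ 2 ≤ N * phiMax X * ∑ i, (u i) ^ 2 := by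
  have hN' : (0 : ℝ) < N := by exact_mod_cast hN
  set w : Fin K → ℝ := fun j => ∑ i, u i * X i j with hw
  have h1 : ∑ j, (w j) ^ 2 = ∑ i, u i * X.mulVec w i := by
    simp only [Matrix.mulVec, dotProduct, Finset.mul_sum]
    rw [Finset.sum_comm]
    refine Finset.sum_congr rfl fun j _ => ?_
    rw [sq]
    nth_rewrite 1 [hw]
    rw [Finset.sum_mul]
    exact Finset.sum_congr rfl fun i _ => by ring
  have h2 := Finset.sum_mul_sq_le_sq_mul_sq Finset.univ u (fun i => X.mulVec w i)
  rw [← h1] at h2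
  have h3 := sum_sq_mulVec_le X w
  rw [div_le_iff₀ hN'] at h3
  have hu0 : 0 ≤ ∑ i, (u i) ^ 2 := Finset.sum_nonneg fun k _ => sq_nonneg _
  have hs0 : 0 ≤ ∑ k, (w k) ^ 2 := Finset.sum_nonneg fun k _ => sq_nonneg _
  change ∑ j, (w j) ^ 2 ≤ _
  rcases hs0.eq_or_lt with hs | hs
  · rw [← hs]; positivity
  · have h4 := h2.trans (mul_le_mul_of_nonneg_left h3 hu0)
    refine le_of_mul_le_mul_right ?_ hs
    nlinarith [h4]

lemma psi_le_phiDiag (X : Matrix (Fin N) (Fin K) ℝ) (j : Fin K) :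
    PsiEnt X j j ≤ phiDiag X := by
  refine le_csSup ?_ ⟨j, rfl⟩
  have : {x | ∃ j, x = PsiEnt X j j} = Set.range (fun j => PsiEnt X j j) := by
    ext x; simp [eq_comm]
  rw [this]
  exact (Set.finite_range _).bddAbove

lemma psi_le_phiMax (X : Matrix (Fin N) (Fin K) ℝ) (j : Fin K) :
    PsiEnt X j j ≤ phiMax X := by
  have := sum_sq_mulVec_le X (Pi.single j 1)
  have h2 : ∑ k, ((Pi.single j 1 : Fin K → ℝ) k) ^ 2 = 1 := by
    rw [Finset.sum_eq_single j] <;> simp +contextual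
  rw [h2, mul_one] at this
  simpa [PsiEnt, ← sq] using this

/-! ### The optimality condition -/

/-- A parabola `t ↦ t a + t² c` that is nonnegative near `0` has `a = 0`. -/
lemma slope_zero {a c δ : ℝ} (hδ : 0 < δ) (h : ∀ t : ℝ, |t| < δ → 0 ≤ t * a + t ^ 2 * c) :
    a = 0 := by
  have hm : IsLocalMin (fun t : ℝ => t * a + t ^ 2 * c) 0 := by
    filter_upwards [Metric.ball_mem_nhds (0 : ℝ) hδ] with t ht
    simpa using h t (by simpa using ht)
  have hd : HasDerivAt (fun t : ℝ => t * a + t ^ 2 * c) (1 * a + (2 * 0 ^ 1 * 1) * c) 0 := by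
    have := ((hasDerivAt_id (0 : ℝ)).mul_const a).add (((hasDerivAt_id (0 : ℝ)).pow 2).mul_const c)
    exact this
  simpa using hm.hasDerivAt_eq_zero hd

/-- First-order condition at an active coordinate, from perturbing only that coordinate. -/
lemma kkt {X : Matrix (Fin N) (Fin K) ℝ} {y : Fin N → ℝ} {r : ℝ} {b : Fin K → ℝ}
    (hb : IsLassoSol X y r b) {j : Fin K} (hj : b j ≠ 0) :
    |(∑ i, (X.mulVec b i - y i) * X i j) / N| = |r| := by
  set G := ∑ i, (X.mulVec b i - y i) * X i j with hG
  have key : ∀ t : ℝ, |t| < |b j| →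
      0 ≤ t * (2 * (G / N + r * SignType.sign (b j))) + t ^ 2 * ((∑ i, X i j ^ 2) / N) := by
    intro t ht
    obtain ⟨b', hb'⟩ : ∃ b' : Fin K → ℝ, b' = b + Pi.single j t := ⟨_, rfl⟩
    have h := hb b'
    unfold lassoObj at h
    have h1 : ∀ i, X.mulVec b' i = X.mulVec b i + X i j * t := by
      intro i
      rw [hb', Matrix.mulVec_add]
      simp [mul_comm]
    have h2 : ∑ i, (X.mulVec b' i - y i) ^ 2 =
        ∑ i, (X.mulVec b i - y i) ^ 2 + 2 * t * G + t ^ 2 * ∑ i, X i j ^ 2 := by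
      rw [hG, Finset.mul_sum, Finset.mul_sum, ← Finset.sum_add_distrib, ← Finset.sum_add_distrib]
      refine Finset.sum_congr rfl fun i _ => ?_
      rw [h1]; ring
    have h3 : ∑ k, |b' k| = ∑ k, |b k| + t * SignType.sign (b j) := by
      rw [← Finset.add_sum_erase _ (fun k => |b' k|) (Finset.mem_univ j),
        ← Finset.add_sum_erase _ (fun k => |b k|) (Finset.mem_univ j)]
      have h4 : ∑ k ∈ Finset.univ.erase j, |b' k| =
          ∑ k ∈ Finset.univ.erase j, |b k| := by
        refine Finset.sum_congr rfl fun k hk => ?_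
        simp [hb', Finset.ne_of_mem_erase hk]
      have h5 : |b' j| = |b j| + t * SignType.sign (b j) := by
        simp only [hb', Pi.add_apply, Pi.single_eq_same]
        have h6 := abs_lt.mp ht
        rcases lt_or_gt_of_ne hj with hn | hp
        · rw [abs_of_neg hn] at h6 ⊢
          rw [sign_neg hn, abs_of_neg (by linarith)]
          simp; ring
        · rw [abs_of_pos hp] at h6 ⊢
          rw [sign_pos hp, abs_of_pos (by linarith)]
          simp
      rw [h4, h5]; ring
    rw [h2, h3, add_div, add_div] at h
    have e1 : 2 * t * G / N = t * (2 * (G / N)) := by ring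
    have e2 : t ^ 2 * (∑ i, X i j ^ 2) / N = t ^ 2 * ((∑ i, X i j ^ 2) / N) := by ring
    rw [e1, e2] at h
    linarith
  have h0 := slope_zero (abs_pos.mpr hj) key
  have h1 : G / N = -(r * SignType.sign (b j)) := by linarith
  rw [h1, abs_neg, abs_mul]
  rcases lt_or_gt_of_ne hj with hn | hp
  · simp [sign_neg hn]
  · simp [sign_pos hp]

/-- On the event that the noise correlations `(XᵀW)_j / N` are at most `r/2`, the optimality
condition forces `|(XᵀX(b - β*))_j| / N ≥ r/2` at each active coordinate `j`; summing squares over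
these coordinates bounds the sparsity by the prediction error. -/
lemma sparsity_le (hN : 1 ≤ N) {X : Matrix (Fin N) (Fin K) ℝ} {βstar b : Fin K → ℝ}
    {w : Fin N → ℝ} {r : ℝ} (hr : 0 ≤ r) (hφ : 0 ≤ phiMax X)
    (hw : ∀ j, |∑ i, X i j / N * w i| ≤ r / 2)
    (hb : IsLassoSol X (fun i => X.mulVec βstar i + w i) r b) :
    ((Finset.univ.filter (fun j => b j ≠ 0)).card : ℝ) * (r ^ 2 / 4) ≤
      phiMax X * ((∑ i, (X.mulVec (b - βstar) i) ^ 2) / N) := by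
  have hN' : (0 : ℝ) < N := by exact_mod_cast hN
  set u := X.mulVec (b - βstar) with hu
  have h1 : ∀ j ∈ Finset.univ.filter (fun j => b j ≠ 0),
      r ^ 2 / 4 ≤ ((∑ i, u i * X i j) / N) ^ 2 := by
    intro j hj
    have hk := kkt hb (Finset.mem_filter.mp hj).2
    have e : (∑ i, (X.mulVec b i - (X.mulVec βstar i + w i)) * X i j) / N =
        (∑ i, u i * X i j) / N - ∑ i, X i j / N * w i := by
      rw [Finset.sum_div, Finset.sum_div, ← Finset.sum_sub_distrib]
      refine Finset.sum_congr rfl fun i _ => ?_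
      rw [hu, Matrix.mulVec_sub, Pi.sub_apply]; ring
    rw [e, abs_of_nonneg hr] at hk
    have h2 := abs_sub ((∑ i, u i * X i j) / N) (∑ i, X i j / N * w i)
    have h3 : r / 2 ≤ |(∑ i, u i * X i j) / N| := by linarith [hw j]
    rw [← sq_abs ((∑ i, u i * X i j) / N)]
    nlinarith
  calc _ = ∑ j ∈ Finset.univ.filter (fun j => b j ≠ 0), r ^ 2 / 4 := by
        rw [Finset.sum_const, nsmul_eq_mul]
    _ ≤ ∑ j ∈ Finset.univ.filter (fun j => b j ≠ 0), ((∑ i, u i * X i j) / N) ^ 2 :=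
        Finset.sum_le_sum h1
    _ ≤ ∑ j, ((∑ i, u i * X i j) / N) ^ 2 :=
        Finset.sum_le_sum_of_subset_of_nonneg (Finset.filter_subset _ _)
          fun _ _ _ => sq_nonneg _
    _ = (∑ j, (∑ i, u i * X i j) ^ 2) / N ^ 2 := by
        rw [Finset.sum_div]
        exact Finset.sum_congr rfl fun j _ => by rw [div_pow]
    _ ≤ (N * phiMax X * ∑ i, (u i) ^ 2) / N ^ 2 :=
        div_le_div_of_nonneg_right (sum_sq_transpose_le hN X u hφ) (by positivity)
    _ = _ := by field_simp

/-! ### The noise event and the bounds -/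

/-- The variance of `(XᵀW)_j / N` is `σ²Ψ_jj / N` and `r²` carries the larger factor `φ`, so the
tail beyond `r/2` is at most `K^{-A²/8}`. -/
lemma noise_tail (hN : 1 ≤ N) (hK : 1 ≤ K) (X : Matrix (Fin N) (Fin K) ℝ) {σ : ℝ} (hσ : 0 < σ)
    {A r : ℝ} (hA : 0 < A) (hr : r = A * σ * Real.sqrt (phiDiag X * Real.log K / N))
    (j : Fin K) (hj : 0 < PsiEnt X j j) :
    (Measure.pi fun _ : Fin N => gaussianReal 0 (σ ^ 2).toNNReal)
      {w | r / 2 < |∑ i, X i j / N * w i|} ≤ ENNReal.ofReal ((K : ℝ) ^ (-(A ^ 2 / 8))) := by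
  have hN' : (0 : ℝ) < N := by exact_mod_cast hN
  have hK' : (0 : ℝ) < K := by exact_mod_cast hK
  have hlog : 0 ≤ Real.log K := Real.log_nonneg (by exact_mod_cast hK)
  have hφ : PsiEnt X j j ≤ phiDiag X := psi_le_phiDiag X j
  have hS : ∑ i, (X i j / N) ^ 2 = PsiEnt X j j / N := by
    rw [PsiEnt, Finset.sum_div, Finset.sum_div]
    exact Finset.sum_congr rfl fun i _ => by field_simp
  have hr0 : 0 ≤ r := by rw [hr]; positivity
  have hr2 : r ^ 2 = A ^ 2 * σ ^ 2 * (phiDiag X * Real.log K / N) := by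
    rw [hr, mul_pow, mul_pow, Real.sq_sqrt]
    have := hj.le.trans hφ
    positivity
  have hlaw := map_sum_gaussian (fun i => X i j / N) (σ ^ 2).toNNReal
  rw [hS] at hlaw
  set v : NNReal := (PsiEnt X j j / N).toNNReal * (σ ^ 2).toNNReal with hv
  have hvc : (v : ℝ) = PsiEnt X j j / N * σ ^ 2 := by
    rw [hv, NNReal.coe_mul, Real.coe_toNNReal _ (by positivity),
      Real.coe_toNNReal _ (by positivity)]
  have hvpos : (0 : ℝ) < v := by rw [hvc]; positivity
  have hv0 : v ≠ 0 := by
    intro h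
    rw [h] at hvpos
    simp at hvpos
  have ht := gaussian_tail hv0 (t := r / 2) (by positivity)
  rw [← hlaw, Measure.map_apply (by fun_prop) (by measurability)] at ht
  refine ht.trans (ENNReal.ofReal_le_ofReal ?_)
  rw [Real.rpow_def_of_pos hK']
  refine Real.exp_le_exp.mpr ?_
  rw [div_le_iff₀ (by positivity), hvc, div_pow, hr2]
  have : A ^ 2 * σ ^ 2 * Real.log K / N * PsiEnt X j j ≤
      A ^ 2 * σ ^ 2 * Real.log K / N * phiDiag X :=
    mul_le_mul_of_nonneg_left hφ (by positivity)
  have e1 : -(A ^ 2 * σ ^ 2 * (phiDiag X * Real.log K / N) / 2 ^ 2) =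
    -(A ^ 2 * σ ^ 2 * Real.log K / N * phiDiag X) / 4 := by ring
  have e2 : Real.log K * -(A ^ 2 / 8) * (2 * (PsiEnt X j j / N * σ ^ 2)) =
    -(A ^ 2 * σ ^ 2 * Real.log K / N * PsiEnt X j j) / 4 := by ring
  rw [e1, e2]
  linarith

/-- with probability at least `1 − K^{1−A²/8}`, every Lasso solution `β̂^L`
satisfies the prediction and `ℓ₂` estimation lower bounds in terms of its own sparsity
`M'(β̂^L)`. -/
theorem lasso_lower_bounds
    {N K : ℕ} (hN : 1 ≤ N) (hK : 1 ≤ K)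
    (X : Matrix (Fin N) (Fin K) ℝ) (βstar : Fin K → ℝ)
    {Ω : Type*} [MeasurableSpace Ω] (μ : Measure Ω) [IsProbabilityMeasure μ]
    (W : Ω → Fin N → ℝ) (σ : ℝ) (hσ : 0 < σ)
    (hW : Measure.map W μ = Measure.pi fun _ : Fin N => gaussianReal 0 (σ ^ 2).toNNReal)
    (A : ℝ) (hA : 2 * Real.sqrt 2 < A) (r : ℝ)
    (hr : r = A * σ * Real.sqrt (phiDiag X * Real.log K / N))
    (s' : ℕ) (hs' : 1 ≤ s') (κ' : ℝ) (hκ' : 0 < κ')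
    (hRE : ∀ J : Finset (Fin K), J.card ≤ s' → ∀ Δ : Fin K → ℝ, Δ ≠ 0 →
      (∑ j ∈ Jᶜ, |Δ j|) ≤ 3 * ∑ j ∈ J, |Δ j| →
      κ' * Real.sqrt N * Real.sqrt (∑ j ∈ J, (Δ j) ^ 2) ≤
        Real.sqrt (∑ i, (X.mulVec Δ i) ^ 2))
    :
    ∃ Ev : Set Ω, MeasurableSet Ev ∧
      1 - (K : ℝ) ^ ((1 : ℝ) - A ^ 2 / 8) ≤ (μ Ev).toReal ∧
      ∀ ω ∈ Ev, ∀ b : Fin K → ℝ,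
        IsLassoSol X (fun i => X.mulVec βstar i + W ω i) r b →
        (((Finset.univ.filter (fun j => b j ≠ 0)).card : ℝ) *
            (A ^ 2 * σ ^ 2 * phiDiag X * Real.log K / (4 * phiMax X * N)) ≤
          (∑ i, (X.mulVec (b - βstar) i) ^ 2) / N) ∧
        (A * σ / (2 * phiMax X) *
            Real.sqrt (((Finset.univ.filter (fun j => b j ≠ 0)).card : ℝ) *
              phiDiag X * Real.log K / N) ≤
          Real.sqrt (∑ j, (b j - βstar j) ^ 2)) := by
  have hN' : (0 : ℝ) < N := by exact_mod_cast hN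
  have hK' : (0 : ℝ) < K := by exact_mod_cast hK
  have hA0 : 0 < A := lt_of_le_of_lt (by positivity) hA
  have hlog : 0 ≤ Real.log K := Real.log_nonneg (by exact_mod_cast hK)
  -- The restricted eigenvalue condition at a coordinate vector excludes zero columns of `X`.
  have hpsi : ∀ j, 0 < PsiEnt X j j := by
    intro j
    have h := hRE {j} (by simpa using hs') (Pi.single j 1) (by simp) (by
      rw [Finset.sum_eq_zero]
      · simp
      · intro k hk
        have : k ≠ j := by simpa using hk
        simp [this])
    have h1 : 0 < Real.sqrt (∑ i, (X.mulVec (Pi.single j 1) i) ^ 2) := by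
      refine lt_of_lt_of_le ?_ h
      simp only [Finset.sum_singleton, Pi.single_eq_same, one_pow, Real.sqrt_one, mul_one]
      positivity
    have h2 := Real.sqrt_pos.mp h1
    have h3 : PsiEnt X j j = (∑ i, (X.mulVec (Pi.single j 1) i) ^ 2) / N := by
      simp [PsiEnt, ← sq]
    rw [h3]
    positivity
  have hφ : 0 < phiDiag X := (hpsi ⟨0, hK⟩).trans_le (psi_le_phiDiag X _)
  have hφm : 0 < phiMax X := (hpsi ⟨0, hK⟩).trans_le (psi_le_phiMax X _)
  have hr0 : 0 ≤ r := by rw [hr]; positivity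
  have hr2 : r ^ 2 = A ^ 2 * σ ^ 2 * (phiDiag X * Real.log K / N) := by
    rw [hr, mul_pow, mul_pow, Real.sq_sqrt (by positivity)]
  -- A non-measurable map would push `μ` forward to the zero measure.
  have hWm : AEMeasurable W μ := by
    refine AEMeasurable.of_map_ne_zero ?_
    rw [hW]
    exact IsProbabilityMeasure.ne_zero _
  set B : Fin K → Set (Fin N → ℝ) := fun j => {w | r / 2 < |∑ i, X i j / N * w i|} with hB
  have hBm : ∀ j, MeasurableSet (B j) := fun j =>
    measurableSet_lt measurable_const (by fun_prop)
  set bad : Set Ω := ⋃ j, W ⁻¹' B j with hbad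
  have hbad_le : μ bad ≤ ENNReal.ofReal ((K : ℝ) ^ ((1 : ℝ) - A ^ 2 / 8)) := by
    calc μ bad ≤ ∑ j, μ (W ⁻¹' B j) := measure_iUnion_fintype_le _ _
      _ ≤ ∑ _j : Fin K, ENNReal.ofReal ((K : ℝ) ^ (-(A ^ 2 / 8))) := by
          refine Finset.sum_le_sum fun j _ => ?_
          rw [← Measure.map_apply_of_aemeasurable hWm (hBm j), hW]
          exact noise_tail hN hK X hσ hA0 hr j (hpsi j)
      _ = ENNReal.ofReal ((K : ℝ) ^ ((1 : ℝ) - A ^ 2 / 8)) := by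
          rw [Finset.sum_const, Finset.card_univ, Fintype.card_fin, nsmul_eq_mul,
            ← ENNReal.ofReal_natCast, ← ENNReal.ofReal_mul hK'.le, sub_eq_add_neg,
            Real.rpow_add hK', Real.rpow_one]
  -- `bad` is only null-measurable, hence the measurable hull.
  refine ⟨(toMeasurable μ bad)ᶜ, (measurableSet_toMeasurable _ _).compl, ?_, ?_⟩
  · change _ ≤ μ.real (toMeasurable μ bad)ᶜ
    rw [probReal_compl_eq_one_sub (measurableSet_toMeasurable _ _), Measure.real,
      measure_toMeasurable]
    have := ENNReal.toReal_le_of_le_ofReal (by positivity) hbad_le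
    linarith
  · intro ω hω b hb
    have hw : ∀ j, |∑ i, X i j / N * W ω i| ≤ r / 2 := by
      intro j
      by_contra hlt
      refine hω (subset_toMeasurable _ _ (Set.mem_iUnion.mpr ⟨j, ?_⟩))
      exact not_le.mp hlt
    have hmain := sparsity_le hN hr0 hφm.le hw hb
    set M : ℝ := ((Finset.univ.filter (fun j => b j ≠ 0)).card : ℝ) with hM
    have hM0 : 0 ≤ M := Nat.cast_nonneg _
    constructor
    · have e : M * (A ^ 2 * σ ^ 2 * phiDiag X * Real.log K / (4 * phiMax X * N)) =
          M * (r ^ 2 / 4) / phiMax X := by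
        rw [hr2]; field_simp
      rw [e, div_le_iff₀' hφm]
      exact hmain
    · have hup := sum_sq_mulVec_le X (b - βstar)
      simp only [Pi.sub_apply] at hup
      have h1 := hmain.trans (mul_le_mul_of_nonneg_left hup hφm.le)
      refine Real.le_sqrt_of_sq_le ?_
      have e : (A * σ / (2 * phiMax X) * Real.sqrt (M * phiDiag X * Real.log K / N)) ^ 2 =
          M * (r ^ 2 / 4) / phiMax X ^ 2 := by
        rw [hr2, mul_pow, Real.sq_sqrt (by positivity)]
        ring
      rw [e, div_le_iff₀ (by positivity)]
      linarith

end Lasso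
end
end
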